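/- arXiv:2106.01853 — 3 statements merged into one kernel-verified Lean document; each statement's English description precedes it below -/
import Mathlib

section
/- Let n ∈ ℕ and let G be a closed subgroup of GL_n(ℚ̄) that is defined over ℚ, i.e. G = V(I) for some set I of polynomials with rational coefficients. Let U := Zcl(⟨{g ∈ G : g is unipotent}⟩) be the Zariski closure of the subgroup of G generated by the unipotent elements of G. Then U is a normal subgroup of G and U is (n³+1)^{2^{3n²}}-bounded over ℚ. -/
noncomputable section

open scoped MatrixGroups
open MvPolynomial

/-- The field of algebraic numbers. -/
abbrev Qbar : Type := AlgebraicClosure ℚ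

/-- The zero set `V(I)` of a set `I` of multivariate polynomials over `ℚ̄`. -/
def zeroSet {σ : Type} (I : Set (MvPolynomial σ Qbar)) : Set (σ → Qbar) :=
  {a | ∀ f ∈ I, MvPolynomial.eval a f = 0}

/-- A subset of affine space over `ℚ̄` is an algebraic set if it is a zero set. -/
def IsAlgebraicSet {σ : Type} (X : Set (σ → Qbar)) : Prop :=
  ∃ I : Set (MvPolynomial σ Qbar), X = zeroSet I

/-- The Zariski closure: the smallest algebraic set containing `Y`. -/
def zariskiClosure {σ : Type} (Y : Set (σ → Qbar)) : Set (σ → Qbar) :=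
  zeroSet {f : MvPolynomial σ Qbar | ∀ a ∈ Y, MvPolynomial.eval a f = 0}

/-- `X` is `d`-bounded over `ℚ`: it is the zero set of a set of polynomials of total
degree at most `d` with rational coefficients. -/
def BoundedOverQ {σ : Type} (X : Set (σ → Qbar)) (d : ℕ) : Prop :=
  ∃ I : Set (MvPolynomial σ Qbar), X = zeroSet I ∧
    ∀ f ∈ I, f.totalDegree ≤ d ∧ ∀ m, f.coeff m ∈ Set.range (algebraMap ℚ Qbar)

/-- Coordinates for the affine space `ℚ̄^{n²+1}` in which `GL_n(ℚ̄)` is embedded. -/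
abbrev glIdx (n : ℕ) : Type := (Fin n × Fin n) ⊕ Unit

/-- The point `(M, det(M)⁻¹)` of `ℚ̄^{n²+1}` associated to `g ∈ GL_n(ℚ̄)`. -/
def glPoint {n : ℕ} (g : GL (Fin n) Qbar) : glIdx n → Qbar :=
  Sum.elim (fun p => (g : Matrix (Fin n) (Fin n) Qbar) p.1 p.2)
    (fun _ => ((g : Matrix (Fin n) (Fin n) Qbar).det)⁻¹)

/-- The matrix part of a point of `ℚ̄^{n²+1}`. -/
def pointMatrix {n : ℕ} (a : glIdx n → Qbar) : Matrix (Fin n) (Fin n) Qbar :=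
  Matrix.of fun i j => a (Sum.inl (i, j))

/-- The height of a rational number `a/b` in lowest terms is `max |a| b`. -/
def ratHeight (q : ℚ) : ℕ := max q.num.natAbs q.den

/-- `g` has rational entries, i.e. `g ∈ GL_n(ℚ)`. -/
def HasRatEntries {n : ℕ} (g : GL (Fin n) Qbar) : Prop :=
  ∀ i j, ∃ q : ℚ, (g : Matrix (Fin n) (Fin n) Qbar) i j = algebraMap ℚ Qbar q

/-- `g` has rational entries of height at most `h`. -/
def EntriesHeightLE {n : ℕ} (g : GL (Fin n) Qbar) (h : ℕ) : Prop :=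
  ∀ i j, ∃ q : ℚ, (g : Matrix (Fin n) (Fin n) Qbar) i j = algebraMap ℚ Qbar q ∧ ratHeight q ≤ h

/-- A matrix `g` is unipotent if `(g - 1)^n = 0`. -/
def IsUnipotent {n : ℕ} (g : GL (Fin n) Qbar) : Prop :=
  ((g : Matrix (Fin n) (Fin n) Qbar) - 1) ^ n = 0

/-- A matrix is semisimple if it is diagonalizable over `ℚ̄`. -/
def IsSemisimpleMat {n : ℕ} (M : Matrix (Fin n) (Fin n) Qbar) : Prop :=
  ∃ (P : GL (Fin n) Qbar) (dvec : Fin n → Qbar),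
    M = (P : Matrix (Fin n) (Fin n) Qbar) * Matrix.diagonal dvec *
      ((P⁻¹ : GL (Fin n) Qbar) : Matrix (Fin n) (Fin n) Qbar)

/-- Iterated base-2 exponentiation: `iexp 0 x = x`, `iexp (k+1) x = 2 ^ iexp k x`. -/
def iexp : ℕ → ℕ → ℕ
  | 0, x => x
  | k + 1, x => 2 ^ iexp k x


/-- `X` is defined over `ℚ`: it is the zero set of a set of polynomials with rational
coefficients. -/
def DefinedOverQ {σ : Type} (X : Set (σ → Qbar)) : Prop :=
  ∃ I : Set (MvPolynomial σ Qbar), X = zeroSet I ∧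
    ∀ f ∈ I, ∀ m, f.coeff m ∈ Set.range (algebraMap ℚ Qbar)

namespace S6

theorem lin_subst {k R ι : Type*} [Field k] [CommRing R] [Algebra k R]
    (a : ι → R) (c : ι → k) (d : ℕ) (f : MvPolynomial ι k) (hf : f.totalDegree ≤ d) :
    (MvPolynomial.aeval (fun i => (Polynomial.C (a i) + Polynomial.C (algebraMap k R (c i)) * Polynomial.X : Polynomial R)) f).natDegree ≤ d ∧
    (MvPolynomial.aeval (fun i => (Polynomial.C (a i) + Polynomial.C (algebraMap k R (c i)) * Polynomial.X : Polynomial R)) f).coeff d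
      = algebraMap k R (eval c (homogeneousComponent d f)) := by
  set L : ι → Polynomial R := fun i => (Polynomial.C (a i) + Polynomial.C (algebraMap k R (c i)) * Polynomial.X : Polynomial R) with hL
  have hLd : ∀ i, (L i).natDegree ≤ 1 := by
    intro i
    simp only [hL]
    compute_degree
  have hL1 : ∀ i, (L i).coeff 1 = algebraMap k R (c i) := by
    intro i; simp [hL]
  have hpd : ∀ (i : ι) (e : ℕ), (L i ^ e).natDegree ≤ e := fun i e => by
    simpa using Polynomial.natDegree_pow_le_of_le e (hLd i)
  have hpc : ∀ (i : ι) (e : ℕ), (L i ^ e).coeff e = algebraMap k R (c i) ^ e := fun i e => by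
    have := Polynomial.coeff_pow_of_natDegree_le (m := e) (hLd i)
    simpa [hL1] using this
  have hmd : ∀ m : ι →₀ ℕ, (m.prod fun i e => L i ^ e).natDegree ≤ m.degree := by
    intro m
    refine (Polynomial.natDegree_prod_le _ _).trans ?_
    exact Finset.sum_le_sum fun i _ => hpd i _
  have hmc : ∀ m : ι →₀ ℕ, (m.prod fun i e => L i ^ e).coeff m.degree
      = algebraMap k R (m.prod fun i e => c i ^ e) := by
    intro m
    classical
    have : ∀ s : Finset ι, (∏ i ∈ s, L i ^ m i).coeff (∑ i ∈ s, m i) = ∏ i ∈ s, algebraMap k R (c i) ^ m i := by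
      intro s
      induction s using Finset.induction_on with
      | empty => simp
      | insert i s his ih =>
        rw [Finset.prod_insert his, Finset.sum_insert his, Finset.prod_insert his,
          Polynomial.coeff_mul_add_eq_of_natDegree_le (hpd i _), hpc, ih]
        exact (Polynomial.natDegree_prod_le _ _).trans (Finset.sum_le_sum fun i _ => hpd i _)
    have h2 := this m.support
    simp only [Finsupp.prod, map_prod, map_pow]
    exact h2
  have hmon : ∀ m ∈ f.support, m.degree ≤ d := fun m hm => by
    refine le_trans ?_ hf
    have := le_totalDegree hm
    exact this
  have hae : aeval L f = ∑ m ∈ f.support, Polynomial.C (algebraMap k R (f.coeff m)) * (m.prod fun i e => L i ^ e) := by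
    rw [aeval_def, eval₂_eq]
    rfl
  rw [hae]
  constructor
  · refine Polynomial.natDegree_sum_le_of_forall_le _ _ fun m hm => ?_
    exact (Polynomial.natDegree_C_mul_le _ _).trans ((hmd m).trans (hmon m hm))
  · rw [Polynomial.finsetSum_coeff, homogeneousComponent_apply, map_sum, map_sum, Finset.sum_filter]
    refine Finset.sum_congr rfl fun m hm => ?_
    rw [Polynomial.coeff_C_mul]
    split_ifs with h
    · rw [← h, hmc, eval_monomial, map_mul]
    · rw [Polynomial.coeff_eq_zero_of_natDegree_lt, mul_zero]
      exact lt_of_le_of_lt (hmd m) (lt_of_le_of_ne (hmon m hm) h)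

theorem nn_step {k A : Type*} [Field k] [Infinite k] [CommRing A] [Nontrivial A] [Algebra k A]
    {r : ℕ} (y : Fin (r+1) → A) (hy : ¬ AlgebraicIndependent k y) :
    ∃ y' : Fin r → A, (∀ i, y' i ∈ Submodule.span k (Set.range y)) ∧
      ∀ i, IsIntegral (Algebra.adjoin k (Set.range y')) (y i) := by
  rw [algebraicIndependent_iff] at hy
  push Not at hy
  obtain ⟨f, hf0, hfne⟩ := hy
  set d := f.totalDegree with hd
  have hcomp : homogeneousComponent d f ≠ 0 := by
    intro h
    obtain ⟨m, hm, hmd⟩ := Finset.exists_mem_eq_sup f.support (support_nonempty.2 hfne) (fun s => s.sum fun _ e => e)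
    have h2 := congrArg (coeff m) h
    rw [coeff_homogeneousComponent, if_pos] at h2
    · exact (mem_support_iff.1 hm) (by simpa using h2)
    · rw [hd, totalDegree, hmd]; rfl
  obtain ⟨c, hc⟩ : ∃ c, eval c (homogeneousComponent d f) ≠ 0 := by
    by_contra h
    push Not at h
    exact hcomp (MvPolynomial.funext (by simpa using h))
  have hd0 : d ≠ 0 := by
    intro h
    rw [hd, totalDegree_eq_zero_iff_eq_C] at h
    rw [h, aeval_C] at hf0
    have : coeff 0 f = 0 := by simpa using hf0
    rw [this] at h
    exact hfne (by simpa using h)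
  obtain ⟨j, hj⟩ : ∃ j, c j ≠ 0 := by
    by_contra h
    push Not at h
    apply hc
    have hc0 : c = 0 := _root_.funext h
    rw [hc0, homogeneousComponent_apply, map_sum]
    refine Finset.sum_eq_zero fun m hm => ?_
    rw [eval_monomial]
    have hm0 : m ≠ 0 := by
      rintro rfl
      simp at hm
      exact hd0 hm.2.symm
    obtain ⟨i, hi⟩ := Finsupp.ne_iff.1 hm0
    rw [Finsupp.prod, Finset.prod_eq_zero (i := i), mul_zero]
    · simpa using hi
    · simpa using hi
  -- substitution
  let z : Fin (r+1) → A := fun i => y i - algebraMap k A (c i / c j) * y j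
  have hzj : z j = 0 := by simp [z, hj]
  refine ⟨fun i => z (j.succAbove i), fun i => ?_, ?_⟩
  · refine Submodule.sub_mem _ (Submodule.subset_span ⟨_, rfl⟩) ?_
    rw [← Algebra.smul_def]
    exact Submodule.smul_mem _ _ (Submodule.subset_span ⟨_, rfl⟩)
  set R := Algebra.adjoin k (Set.range fun i => z (j.succAbove i)) with hR
  have hzR : ∀ i, z i ∈ R := by
    intro i
    rcases Fin.eq_self_or_eq_succAbove j i with h | ⟨l, rfl⟩
    · rw [h, hzj]; exact R.zero_mem
    · exact Algebra.subset_adjoin ⟨l, rfl⟩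
  have hyj : IsIntegral R (y j) := by
    obtain ⟨h1, h2⟩ := lin_subst (R := R) (fun i => (⟨z i, hzR i⟩ : R)) (fun i => c i / c j) d f le_rfl
    set P := MvPolynomial.aeval (fun i => (Polynomial.C (⟨z i, hzR i⟩ : R) + Polynomial.C (algebraMap k R (c i / c j)) * Polynomial.X : Polynomial R)) f with hP
    have hlead : eval (fun i => c i / c j) (homogeneousComponent d f) ≠ 0 := by
      have : (fun i => c i / c j) = fun i => (c j)⁻¹ • c i := by
        ext i; simp [div_eq_inv_mul]
      rw [this]
      have h3 : eval (fun i => (c j)⁻¹ • c i) (homogeneousComponent d f) = (c j)⁻¹ ^ d * eval c (homogeneousComponent d f) := by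
        rw [homogeneousComponent_apply, map_sum, map_sum, Finset.mul_sum]
        refine Finset.sum_congr rfl fun m hm => ?_
        have hmd : m.degree = d := (Finset.mem_filter.1 hm).2
        rw [eval_monomial, eval_monomial]
        simp only [Finsupp.prod, smul_eq_mul, mul_pow, Finset.prod_mul_distrib, Finset.prod_pow_eq_pow_sum]
        rw [← hmd]
        change _ = (c j)⁻¹ ^ (∑ i ∈ m.support, m i) * _
        ring
      rw [h3]
      exact mul_ne_zero (pow_ne_zero _ (inv_ne_zero hj)) hc
    set b := eval (fun i => c i / c j) (homogeneousComponent d f)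
    refine ⟨Polynomial.C (algebraMap k R b⁻¹) * P, ?_, ?_⟩
    · refine Polynomial.monic_of_natDegree_le_of_coeff_eq_one d ((Polynomial.natDegree_C_mul_le _ _).trans h1) ?_
      rw [Polynomial.coeff_C_mul, h2, ← map_mul, inv_mul_cancel₀ hlead, map_one]
    · have hPy : Polynomial.aeval (y j) P = 0 := by
        have : (Polynomial.aeval (y j) P) = aeval y f := by
          have h4 : ((Polynomial.aeval (R := R) (y j)).restrictScalars k).comp (MvPolynomial.aeval (R := k) (fun i => (Polynomial.C (⟨z i, hzR i⟩ : R) + Polynomial.C (algebraMap k R (c i / c j)) * Polynomial.X : Polynomial R))) = MvPolynomial.aeval y := by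
            ext i
            simp [z]
          rw [← h4]; rfl
        rw [this, hf0]
      have := congrArg (fun t => algebraMap R A (algebraMap k R b⁻¹) * t) hPy
      rw [Polynomial.aeval_def] at this
      rw [Polynomial.eval₂_mul, Polynomial.eval₂_C]
      simpa using this
  intro i
  have : y i = algebraMap R A ⟨z i, hzR i⟩ + algebraMap R A (algebraMap k R (c i / c j)) * y j := by
    rw [← IsScalarTower.algebraMap_apply k R A]
    change _ = z i + _
    simp [z]
  rw [this]
  exact isIntegral_algebraMap.add (isIntegral_algebraMap.mul hyj)

theorem nn {k A : Type*} [Field k] [Infinite k] [CommRing A] [Nontrivial A] [Algebra k A]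
    {ι : Type*} [Fintype ι] (x : ι → A) (hx : Algebra.adjoin k (Set.range x) = ⊤) :
    ∃ (r : ℕ) (y : Fin r → A), r ≤ Fintype.card ι ∧ (∀ i, y i ∈ Submodule.span k (Set.range x)) ∧
      AlgebraicIndependent k y ∧ Algebra.IsIntegral (Algebra.adjoin k (Set.range y)) A := by
  classical
  let Q : ℕ → Prop := fun r => ∃ y : Fin r → A, (∀ i, y i ∈ Submodule.span k (Set.range x)) ∧
    ∀ i, IsIntegral (Algebra.adjoin k (Set.range y)) (x i)
  have hQ : Q (Fintype.card ι) := by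
    refine ⟨x ∘ (Fintype.equivFin ι).symm, fun i => Submodule.subset_span ⟨_, rfl⟩, fun i => ?_⟩
    have : x i ∈ Algebra.adjoin k (Set.range (x ∘ (Fintype.equivFin ι).symm)) :=
      Algebra.subset_adjoin ⟨Fintype.equivFin ι i, by simp⟩
    exact isIntegral_algebraMap (x := (⟨_, this⟩ : Algebra.adjoin k (Set.range (x ∘ (Fintype.equivFin ι).symm))))
  have hex : ∃ r, Q r := ⟨_, hQ⟩
  obtain ⟨y, hy1, hy2⟩ := Nat.find_spec hex
  refine ⟨Nat.find hex, y, Nat.find_min' hex hQ, hy1, ?_, ?_⟩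
  · by_contra hni
    generalize hr : Nat.find hex = r at y hy1 hy2 hni
    cases r with
    | zero =>
      apply hni
      exact algebraicIndependent_empty_type_iff.2 (algebraMap k A).injective
    | succ r =>
      obtain ⟨y', h1, h2⟩ := nn_step y hni
      have : Q r := by
        refine ⟨y', fun i => ?_, fun i => ?_⟩
        · exact Submodule.span_le.2 (by rintro _ ⟨j, rfl⟩; exact hy1 j) (h1 i)
        · set R' := Algebra.adjoin k (Set.range y')
          let R'' := (integralClosure R' A)
          have hle : Algebra.adjoin k (Set.range y) ≤ R''.restrictScalars k := by
            refine Algebra.adjoin_le ?_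
            rintro _ ⟨j, rfl⟩
            exact h2 j
          have h3 : IsIntegral R'' (x i) := by
            obtain ⟨p, hp, hp0⟩ := hy2 i
            let g : Algebra.adjoin k (Set.range y) →+* R'' := (Subalgebra.inclusion hle).toRingHom
            exact ⟨p.map g, hp.map g, (Polynomial.eval₂_map g (algebraMap R'' A) (x i)).trans hp0⟩
          exact isIntegral_trans (R := R') (A := R'') _ h3
      exact Nat.find_min hex (by omega) this
  · constructor
    intro a
    have ha : a ∈ Algebra.adjoin k (Set.range x) := by rw [hx]; trivial
    have : Algebra.adjoin k (Set.range x) ≤ (integralClosure (Algebra.adjoin k (Set.range y)) A).restrictScalars k := by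
      refine Algebra.adjoin_le ?_
      rintro _ ⟨j, rfl⟩
      exact hy2 j
    exact this ha

end S6

namespace S6

theorem count {k : Type} [Field k] {r m D : ℕ} (hm : m ≤ r)
    (z : Fin (r+1) → MvPolynomial (Fin m) k) (hz : ∀ j i, degreeOf i (z j) ≤ D) :
    ∃ G : MvPolynomial (Fin (r+1)) k, G ≠ 0 ∧ aeval z G = 0 ∧
      G.totalDegree ≤ (r+1)*(D*(r+1)+1)^r := by
  classical
  set s := (D*(r+1)+1)^r with hs
  set B := D*(r+1)*s with hB
  let e : (Fin (r+1) → Fin (s+1)) → (Fin (r+1) →₀ ℕ) := fun a => Finsupp.equivFunOnFinite.symm fun i => (a i : ℕ)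
  have he : Function.Injective e := by
    intro a b h
    ext i
    have := DFunLike.congr_fun h i
    simpa [e] using this
  let mk : ((Fin (r+1) → Fin (s+1)) → k) →ₗ[k] MvPolynomial (Fin (r+1)) k :=
    ∑ a, (monomial (e a)).comp (LinearMap.proj a)
  have hmk : ∀ c, mk c = ∑ a, monomial (e a) (c a) := fun c => by simp [mk]
  let e' : (Fin m → Fin (B+1)) → (Fin m →₀ ℕ) := fun a => Finsupp.equivFunOnFinite.symm fun i => (a i : ℕ)
  let T : ((Fin (r+1) → Fin (s+1)) → k) →ₗ[k] ((Fin m → Fin (B+1)) → k) :=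
    LinearMap.pi fun b => (lcoeff k (e' b)).comp ((aeval z).toLinearMap.comp mk)
  have hker : LinearMap.ker T ≠ ⊥ := by
    apply LinearMap.ker_ne_bot_of_finrank_lt
    rw [Module.finrank_fintype_fun_eq_card, Module.finrank_fintype_fun_eq_card]
    simp only [Fintype.card_fun, Fintype.card_fin]
    calc (B+1)^m ≤ (B+1)^r := Nat.pow_le_pow_right (by omega) hm
      _ ≤ ((D*(r+1)+1)*(s+1))^r := Nat.pow_le_pow_left (by rw [hB]; nlinarith) r
      _ = s * (s+1)^r := by rw [mul_pow, ← hs]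
      _ < (s+1) * (s+1)^r := Nat.mul_lt_mul_of_pos_right (by omega) (by positivity)
      _ = (s+1)^(r+1) := by ring
  obtain ⟨c, hc, hc0⟩ := Submodule.exists_mem_ne_zero_of_ne_bot hker
  refine ⟨mk c, ?_, ?_, ?_⟩
  · intro h
    apply hc0
    ext a
    have h2 := congrArg (coeff (e a)) h
    rw [hmk, coeff_sum] at h2
    simpa [coeff_monomial, he.eq_iff] using h2
  · have hdeg : ∀ i, degreeOf i (aeval z (mk c)) ≤ B := by
      intro i
      rw [hmk, map_sum]
      refine (degreeOf_sum_le _ _ _).trans (Finset.sup_le fun a _ => ?_)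
      rw [aeval_monomial]
      refine (degreeOf_mul_le _ _ _).trans ?_
      rw [algebraMap_eq, degreeOf_C, zero_add, Finsupp.prod_fintype _ _ (by simp)]
      refine (degreeOf_prod_le _ _ _).trans ?_
      calc ∑ j, degreeOf i (z j ^ (e a j)) ≤ ∑ j : Fin (r+1), s * D := by
            refine Finset.sum_le_sum fun j _ => (degreeOf_pow_le _ _ _).trans ?_
            exact Nat.mul_le_mul (Nat.lt_succ_iff.1 (a j).2) (hz j i)
        _ = B := by simp [hB]; ring
    ext b
    rw [coeff_zero]
    by_cases hb : ∀ i, b i ≤ B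
    · have h2 : T c (fun i => ⟨b i, Nat.lt_succ_of_le (hb i)⟩) = 0 := by
        rw [LinearMap.mem_ker.1 hc]; rfl
      have h3 : e' (fun i => ⟨b i, Nat.lt_succ_of_le (hb i)⟩) = b := by
        ext i; simp [e']
      simpa [T, h3] using h2
    · push Not at hb
      obtain ⟨i, hi⟩ := hb
      exact notMem_support_iff.1 (notMem_support_of_degreeOf_lt i (lt_of_le_of_lt (hdeg i) hi))
  · rw [hmk]
    refine totalDegree_finsetSum_le fun a _ => ?_
    refine (totalDegree_monomial_le _ _).trans ?_
    rw [Finsupp.sum_fintype _ _ (by simp)]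
    calc ∑ j, e a j ≤ ∑ j : Fin (r+1), s := Finset.sum_le_sum fun j _ => Nat.lt_succ_iff.1 (a j).2
      _ = _ := by simp

theorem totalDegree_aeval_linear {k ι τ : Type} [Field k] (w : ι → MvPolynomial τ k)
    (hw : ∀ i, (w i).totalDegree ≤ 1) (F : MvPolynomial ι k) :
    (aeval w F).totalDegree ≤ F.totalDegree := by
  rw [aeval_def, eval₂_eq]
  refine totalDegree_finsetSum_le fun m hm => ?_
  refine (totalDegree_mul _ _).trans ?_
  rw [algebraMap_eq, totalDegree_C, zero_add]
  refine (totalDegree_finsetProd _ _).trans ?_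
  refine le_trans ?_ (le_totalDegree hm)
  refine Finset.sum_le_sum fun i _ => (totalDegree_pow _ _).trans ?_
  simpa using Nat.mul_le_mul_left (m i) (hw i)

theorem aeval_cons {k A : Type} [Field k] [CommRing A] [Algebra k A] {r : ℕ} (y : Fin r → A) (l : A)
    (F : MvPolynomial (Fin (r+1)) k) :
    aeval (Fin.cons l y : Fin (r+1) → A) F =
      Polynomial.eval₂ (aeval y : MvPolynomial (Fin r) k →ₐ[k] A).toRingHom l (finSuccEquiv k r F) := by
  induction F using MvPolynomial.induction_on with
  | C a => simp [finSuccEquiv_apply]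
  | add p q hp hq => simp [hp, hq, Polynomial.eval₂_add]
  | mul_X p i hp =>
    rw [map_mul, map_mul, Polynomial.eval₂_mul, hp, aeval_X]
    congr 1
    refine Fin.cases ?_ (fun j => ?_) i
    · simp [finSuccEquiv_X_zero]
    · simp [finSuccEquiv_X_succ]

theorem exists_linear_ne {k σ : Type} [Field k] [Infinite k] [Fintype σ] (S : Set (σ → k)) (hS : S.Finite)
    (h0 : ∀ v ∈ S, v ≠ 0) : ∃ c : σ → k, ∀ v ∈ S, ∑ s, c s * v s ≠ 0 := by
  classical
  let P : MvPolynomial σ k := ∏ v ∈ hS.toFinset, ∑ s, C (v s) * X s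
  have hP : P ≠ 0 := by
    refine Finset.prod_ne_zero_iff.2 fun v hv h => h0 v (hS.mem_toFinset.1 hv) ?_
    ext s
    have := congrArg (eval (Pi.single s 1)) h
    simpa [Pi.single_apply] using this
  by_contra hcon
  push Not at hcon
  apply hP
  refine MvPolynomial.funext fun c => ?_
  obtain ⟨v, hv, hv0⟩ := hcon c
  simp only [P, map_prod, map_zero]
  refine Finset.prod_eq_zero (hS.mem_toFinset.2 hv) ?_
  rw [← hv0, map_sum]
  exact Finset.sum_congr rfl fun s _ => by simp [mul_comm]

end S6

namespace S6

theorem sep_aux {k σ A : Type} [Field k] [IsAlgClosed k] [Fintype σ] [CommRing A] [IsDomain A]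
    [Algebra k A] {m D : ℕ}
    (φ' : MvPolynomial σ k →ₐ[k] A) (hφ's : Function.Surjective φ')
    (θ : A →ₐ[k] MvPolynomial (Fin m) k) (hθ : Function.Injective θ)
    (hD : ∀ s i, degreeOf i (θ (φ' (X s))) ≤ D) (g : Fin m → A)
    (hg : AlgebraicIndependent k g) (p : σ → k)
    (hp : ∃ f, φ' f = 0 ∧ eval p f ≠ 0) :
    ∃ r ≤ Fintype.card σ, ∃ f, φ' f = 0 ∧ eval p f ≠ 0 ∧
      f.totalDegree ≤ (r+1)*(D*(r+1)+1)^r := by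
  classical
  have : Infinite k := IsAlgClosed.instInfinite
  let x : σ → A := fun s => φ' (X s)
  have hφx : φ' = aeval x := by ext s; simp [x]
  have hx : Algebra.adjoin k (Set.range x) = ⊤ := by
    rw [Algebra.adjoin_range_eq_range_aeval, ← hφx]
    exact (AlgHom.range_eq_top _).2 hφ's
  obtain ⟨r, y, hr, hyspan, hyind, hyint⟩ := nn x hx
  -- m ≤ r
  have hmr : m ≤ r := by
    have : Algebra.IsAlgebraic (Algebra.adjoin k (Set.range y)) A := Algebra.IsIntegral.isAlgebraic
    have h1 := hg.cardinalMk_le_trdeg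
    have h2 := Algebra.IsAlgebraic.trdeg_le_cardinalMk k (Set.range y)
    have h3 := (h1.trans h2).trans Cardinal.mk_range_le
    simpa using h3
  refine ⟨r, hr, ?_⟩
  -- lifts of y
  have hlift : ∀ i, ∃ c : σ → k, φ' (∑ s, C (c s) * X s) = y i := by
    intro i
    obtain ⟨c, hc⟩ := (Submodule.mem_span_range_iff_exists_fun k).1 (hyspan i)
    refine ⟨c, ?_⟩
    rw [← hc, map_sum]
    refine Finset.sum_congr rfl fun s _ => ?_
    rw [map_mul, ← algebraMap_eq, AlgHom.commutes, Algebra.smul_def]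
  choose cy hcy using hlift
  let lin : (σ → k) → MvPolynomial σ k := fun c => ∑ s, C (c s) * X s
  have hlin1 : ∀ c, (lin c).totalDegree ≤ 1 := by
    intro c
    refine totalDegree_finsetSum_le fun s _ => ?_
    refine (totalDegree_mul _ _).trans ?_
    simp
  have hlinD : ∀ c i, degreeOf i (θ (φ' (lin c))) ≤ D := by
    intro c i
    simp only [lin, map_sum]
    refine (degreeOf_sum_le _ _ _).trans (Finset.sup_le fun s _ => ?_)
    rw [map_mul, map_mul, ← algebraMap_eq, AlgHom.commutes, AlgHom.commutes, algebraMap_eq]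
    exact (degreeOf_C_mul_le _ _ _).trans (hD s i)
  let yh : Fin r → MvPolynomial σ k := fun i => lin (cy i)
  have hyh : ∀ i, φ' (yh i) = y i := hcy
  let ay : (MvPolynomial (Fin r) k) →ₐ[k] A := aeval y
  have hayinj : Function.Injective ay := hyind
  have hayint : ay.toRingHom.IsIntegral := by
    have h1 : (algebraMap (Algebra.adjoin k (Set.range y)) A).IsIntegral := fun a => hyint.isIntegral a
    exact RingHom.IsIntegral.trans (hyind.aevalEquiv.toRingEquiv.toRingHom) _
      (RingHom.isIntegral_of_surjective _ hyind.aevalEquiv.surjective) h1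
  have hayyh : ∀ b : (MvPolynomial (Fin r) k), ay b = φ' (aeval yh b) := by
    intro b
    have : ay = φ'.comp (aeval yh) := by ext i; simp [ay, hyh]
    rw [this]; rfl
  -- the fibre
  let yp : Fin r → k := fun i => eval p (yh i)
  let Fib : Set (σ → k) := {q | (∀ f, φ' f = 0 → eval q f = 0) ∧ ∀ i, eval q (yh i) = yp i}
  have hFibfin : Fib.Finite := by
    have hroots : ∀ s, ∃ S : Set k, S.Finite ∧ ∀ q ∈ Fib, q s ∈ S := by
      intro s
      obtain ⟨P, hPm, hP0⟩ := hayint (x s)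
      let P' : Polynomial k := P.map (eval yp)
      have hP' : P' ≠ 0 := (hPm.map _).ne_zero
      refine ⟨{t | P'.IsRoot t}, Polynomial.finite_setOfPred_isRoot hP', fun q hq => ?_⟩
      have h1 : φ' (Polynomial.eval₂ (aeval yh : (MvPolynomial (Fin r) k) →ₐ[k] MvPolynomial σ k).toRingHom (X s) P) = 0 := by
        have := Polynomial.hom_eval₂ P (aeval yh : (MvPolynomial (Fin r) k) →ₐ[k] MvPolynomial σ k).toRingHom φ'.toRingHom (X s)
        refine this.trans ?_
        rw [← hP0]
        congr 1
        refine RingHom.ext fun b => ?_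
        exact (hayyh b).symm
      have h2 := hq.1 _ h1
      rw [Polynomial.hom_eval₂] at h2
      change Polynomial.eval _ (P.map _) = 0
      rw [Polynomial.eval_map, ← h2]
      congr 1
      · refine MvPolynomial.ringHom_ext (fun t => ?_) (fun i => ?_)
        · simp
        · simp [hq.2]
      · simp
    choose S hSf hS using hroots
    exact (Set.Finite.pi' hSf).subset fun q hq s => hS s q hq
  have hpFib : p ∉ Fib := by
    obtain ⟨f, hf, hfp⟩ := hp
    exact fun h => hfp (h.1 f hf)
  obtain ⟨c, hc⟩ := exists_linear_ne ((fun q => q - p) '' Fib) (hFibfin.image _) (by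
    rintro _ ⟨q, hq, rfl⟩ h
    exact hpFib (by rwa [← sub_eq_zero.1 h]))
  have hevlin : ∀ q, eval q (lin c) = ∑ s, c s * q s := fun q => by simp [lin]
  have hc' : ∀ q ∈ Fib, eval q (lin c) ≠ eval p (lin c) := by
    intro q hq h
    apply hc _ ⟨q, hq, rfl⟩
    rw [hevlin, hevlin] at h
    simp [mul_sub, Finset.sum_sub_distrib, h]
  let l : A := φ' (lin c)
  let algB : Algebra (MvPolynomial (Fin r) k) A := ay.toRingHom.toAlgebra
  have halg : ∀ b, algebraMap (MvPolynomial (Fin r) k) A b = ay b := fun _ => rfl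
  have hlint : IsIntegral (MvPolynomial (Fin r) k) l := hayint l
  have : FaithfulSMul (MvPolynomial (Fin r) k) A := (faithfulSMul_iff_algebraMap_injective _ _).2 hayinj
  let F : Polynomial (MvPolynomial (Fin r) k) := minpoly (MvPolynomial (Fin r) k) l
  obtain ⟨G, hG0, hGz, hGd⟩ := count hmr (Fin.cons (θ (φ' (lin c))) (fun i => θ (φ' (yh i)))) (D := D) (by
    intro j i
    refine Fin.cases ?_ (fun j => ?_) j
    · simpa using hlinD c i
    · simpa using hlinD (cy j) i)
  have hGl : Polynomial.aeval l (finSuccEquiv k r G) = 0 := by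
    have h1 := aeval_cons y l G
    have h2 : aeval (Fin.cons l y : Fin (r+1) → A) G = 0 := by
      apply hθ
      rw [map_zero]
      have h3 : θ (aeval (Fin.cons l y : Fin (r+1) → A) G) = aeval (Fin.cons (θ (φ' (lin c))) (fun i => θ (φ' (yh i))) : Fin (r+1) → _) G := by
        rw [← AlgHom.comp_apply]
        congr 1
        ext1 j
        refine Fin.cases ?_ (fun j => ?_) j
        · simp [l]
        · simp [← hyh]
      exact h3.trans hGz
    rw [h2] at h1
    exact h1.symm
  have hFG : F ∣ finSuccEquiv k r G := minpoly.isIntegrallyClosed_dvd hlint hGl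
  let F' : MvPolynomial (Fin (r+1)) k := (finSuccEquiv k r).symm F
  have hFF' : finSuccEquiv k r F' = F := (finSuccEquiv k r).apply_symm_apply F
  have hF'd : F'.totalDegree ≤ (r+1)*(D*(r+1)+1)^r := by
    refine le_trans ?_ hGd
    obtain ⟨H, hH⟩ := hFG
    have : G = F' * (finSuccEquiv k r).symm H := by
      apply (finSuccEquiv k r).injective
      rw [map_mul, hFF', hH, AlgEquiv.apply_symm_apply]
    rw [this] at hG0 ⊢
    rw [totalDegree_mul_of_isDomain (left_ne_zero_of_mul hG0) (right_ne_zero_of_mul hG0)]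
    omega
  let w : Fin (r+1) → MvPolynomial σ k := Fin.cons (lin c) yh
  refine ⟨aeval w F', ?_, ?_, ?_⟩
  · have h1 : φ' (aeval w F') = aeval (Fin.cons l y : Fin (r+1) → A) F' := by
      rw [← AlgHom.comp_apply]
      congr 1
      ext1 j
      refine Fin.cases ?_ (fun j => ?_) j
      · simp [l, w]
      · simp [← hyh, w]
    rw [h1, aeval_cons, hFF']
    exact minpoly.aeval (MvPolynomial (Fin r) k) l
  · intro hev
    let ev : Polynomial (MvPolynomial (Fin r) k) →+* k := Polynomial.eval₂RingHom (eval yp) (eval p (lin c))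
    have hevs : Function.Surjective ev := fun t => ⟨Polynomial.C (C t), by simp [ev]⟩
    have hevF : ev F = 0 := by
      have h1 := aeval_cons (k := k) yp (eval p (lin c)) F'
      rw [hFF'] at h1
      have h2 : ev F = Polynomial.eval₂ (aeval yp : (MvPolynomial (Fin r) k) →ₐ[k] k).toRingHom (eval p (lin c)) F := by
        simp only [ev, Polynomial.coe_eval₂RingHom]
        congr 1
      rw [h2, ← h1, ← hev]
      rw [← coe_aeval_eq_eval, RingHom.coe_coe, ← AlgHom.comp_apply]
      congr 1
      ext1 j
      refine Fin.cases ?_ (fun j => ?_) j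
      · simp [w]
      · simp [w, yp]
    have : (RingHom.ker ev).IsMaximal := RingHom.ker_isMaximal_of_surjective ev hevs
    let ψ : Polynomial (MvPolynomial (Fin r) k) →+* A := (Polynomial.aeval l : Polynomial (MvPolynomial (Fin r) k) →ₐ[(MvPolynomial (Fin r) k)] A).toRingHom
    have hψint : ψ.IsIntegral := by
      refine RingHom.IsIntegral.tower_top Polynomial.C ψ ?_
      have h5 : ψ.comp Polynomial.C = ay.toRingHom := by
        refine RingHom.ext fun b => ?_
        simp [ψ, halg]
      rw [h5]
      exact hayint
    let algP : Algebra (Polynomial (MvPolynomial (Fin r) k)) A := ψ.toAlgebra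
    have : Algebra.IsIntegral (Polynomial (MvPolynomial (Fin r) k)) A := ⟨hψint⟩
    obtain ⟨Q, hQm, hQ⟩ := Ideal.exists_ideal_over_maximal_of_isIntegral (S := A) (RingHom.ker ev) (by
      intro b hb
      have hb' : Polynomial.aeval l b = 0 := hb
      obtain ⟨H, hH⟩ := minpoly.isIntegrallyClosed_dvd hlint hb'
      rw [RingHom.mem_ker, hH, map_mul]
      change ev F * _ = 0
      rw [hevF, zero_mul])
    have hQ' : ∀ b, ψ b ∈ Q ↔ ev b = 0 := by
      intro b
      have : b ∈ Ideal.comap (algebraMap (Polynomial (MvPolynomial (Fin r) k)) A) Q ↔ b ∈ RingHom.ker ev := by rw [hQ]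
      exact this
    have := hQm
    have hmax : (Ideal.comap φ' Q).IsMaximal := Ideal.comap_isMaximal_of_surjective _ hφ's
    obtain ⟨q, hq⟩ := (isMaximal_iff_eq_vanishingIdeal_singleton (K := k)).1 hmax
    have hq' : ∀ f, eval q f = 0 ↔ φ' f ∈ Q := by
      intro f
      rw [← Ideal.mem_comap, hq, mem_vanishingIdeal_singleton_iff]
      simp [coe_aeval_eq_eval]
    have hgen : ∀ (f : MvPolynomial σ k) (b : Polynomial (MvPolynomial (Fin r) k)), φ' f = ψ b → eval q f = ev b := by
      intro f b hfb
      have h1 : φ' (f - C (ev b)) = ψ (b - Polynomial.C (C (ev b))) := by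
        rw [map_sub, map_sub, hfb]
        congr 1
        rw [← algebraMap_eq, AlgHom.commutes]
        simp [ψ, halg]
      have h2 : ev (b - Polynomial.C (C (ev b))) = 0 := by simp [ev]
      have h3 := (hq' _).2 (h1 ▸ (hQ' _).2 h2)
      simpa [sub_eq_zero] using h3
    have hqF : q ∈ Fib := by
      refine ⟨fun f hf => (hq' f).2 (by rw [hf]; exact Q.zero_mem), fun i => ?_⟩
      rw [hgen (yh i) (Polynomial.C (X i))]
      · simp [ev]
      · simp [ψ, halg, ay, hyh]
    apply hc' q hqF
    rw [hgen (lin c) Polynomial.X]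
    · simp [ev]
    · simp [ψ, l]
  · refine (totalDegree_aeval_linear w ?_ F').trans hF'd
    intro j
    refine Fin.cases ?_ (fun j => ?_) j
    · simpa [w] using hlin1 c
    · simpa [w] using hlin1 (cy j)

theorem sep {k σ : Type} [Field k] [IsAlgClosed k] [Fintype σ] {m D : ℕ}
    (φ : MvPolynomial σ k →ₐ[k] MvPolynomial (Fin m) k)
    (hD : ∀ s i, degreeOf i (φ (X s)) ≤ D) (g : Fin m → MvPolynomial σ k)
    (hg : AlgebraicIndependent k (fun i => φ (g i))) (p : σ → k)
    (hp : ∃ f, φ f = 0 ∧ eval p f ≠ 0) :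
    ∃ r ≤ Fintype.card σ, ∃ f, φ f = 0 ∧ eval p f ≠ 0 ∧
      f.totalDegree ≤ (r+1)*(D*(r+1)+1)^r := by
  have hφ'0 : ∀ f, φ.rangeRestrict f = 0 ↔ φ f = 0 := fun f => by
    rw [← Subtype.coe_inj]; rfl
  have := sep_aux φ.rangeRestrict φ.rangeRestrict_surjective φ.range.val Subtype.val_injective (D := D) hD
    (fun i => φ.rangeRestrict (g i)) (AlgebraicIndependent.of_comp φ.range.val hg) p (by simpa only [hφ'0] using hp)
  simpa only [hφ'0] using this

end S6

namespace S6

theorem indep_extend {k R B B₁ : Type} [Field k] [CommRing R] [Algebra k R] [CommRing B] [IsDomain B] [Algebra k B]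
    [CommRing B₁] [Algebra k B₁] (φ₁ : R →ₐ[k] B₁) (φ₂ : R →ₐ[k] B)
    (hker : ∀ f, φ₂ f = 0 → φ₁ f = 0) {m : ℕ} (g : Fin m → R)
    (hg : AlgebraicIndependent k (fun i => φ₁ (g i))) (f : R) (hf₁ : φ₁ f = 0) (hf₂ : φ₂ f ≠ 0) :
    AlgebraicIndependent k (fun i => φ₂ ((Fin.cons f g : Fin (m+1) → R) i)) := by
  have hcomp : ∀ (F : MvPolynomial (Fin (m+1)) k), aeval (fun i => φ₂ ((Fin.cons f g : Fin (m+1) → R) i)) F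
      = φ₂ (Polynomial.eval₂ (aeval g : MvPolynomial (Fin m) k →ₐ[k] R).toRingHom f (finSuccEquiv k m F)) := by
    intro F
    rw [← aeval_cons, ← AlgHom.comp_apply, comp_aeval]
  rw [algebraicIndependent_iff]
  intro F hF
  by_contra hF0
  rw [hcomp] at hF
  have hP0 : finSuccEquiv k m F ≠ 0 := by simpa using hF0
  obtain ⟨Q, hQ, hQX⟩ := Polynomial.exists_eq_pow_rootMultiplicity_mul_and_not_dvd _ hP0 0
  rw [hQ] at hF
  simp only [map_zero, sub_zero] at hF hQX
  rw [Polynomial.X_dvd_iff] at hQX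
  rw [Polynomial.eval₂_mul, Polynomial.eval₂_pow, Polynomial.eval₂_X, map_mul, map_pow] at hF
  have h1 := (mul_eq_zero.1 hF).resolve_left (pow_ne_zero _ hf₂)
  have h2 := hker _ h1
  apply hQX
  have h3 := Polynomial.hom_eval₂ Q (aeval g : MvPolynomial (Fin m) k →ₐ[k] R).toRingHom φ₁.toRingHom f
  have h4 : φ₁.toRingHom f = 0 := hf₁
  rw [h4, Polynomial.eval₂_at_zero] at h3
  have h5 := h3.symm.trans h2
  refine (algebraicIndependent_iff.1 hg) _ (Eq.trans ?_ h5)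
  change _ = φ₁ (aeval g (Q.coeff 0))
  rw [← AlgHom.comp_apply, comp_aeval]

set_option linter.unusedSectionVars false

variable {k : Type} [Field k] [CharZero k] {n : ℕ}

def bpoly (k : Type) [Field k] (j : ℕ) : Polynomial k :=
  Polynomial.C ((j.factorial : k)⁻¹) * descPochhammer k j

theorem bpoly_natDegree (j : ℕ) : (bpoly k j).natDegree ≤ j :=
  (Polynomial.natDegree_C_mul_le _ _).trans (descPochhammer_natDegree k j).le

theorem bpoly_eval (j a : ℕ) : (bpoly k j).eval (a : k) = (a.choose j : k) := by
  rw [bpoly, Polynomial.eval_mul, Polynomial.eval_C, descPochhammer_eval_eq_descFactorial,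
    Nat.descFactorial_eq_factorial_mul_choose, Nat.cast_mul, inv_mul_cancel_left₀]
  exact_mod_cast j.factorial_ne_zero

def upoly (u : Matrix (Fin n) (Fin n) k) : Matrix (Fin n) (Fin n) (Polynomial k) :=
  Matrix.of fun p q => ∑ j ∈ Finset.range n, Polynomial.C (((u - 1) ^ j) p q) * bpoly k j

theorem upoly_natDegree (u : Matrix (Fin n) (Fin n) k) (p q : Fin n) :
    (upoly u p q).natDegree ≤ n - 1 := by
  rw [upoly, Matrix.of_apply]
  refine Polynomial.natDegree_sum_le_of_forall_le _ _ fun j hj => ?_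
  have := Finset.mem_range.1 hj
  exact (Polynomial.natDegree_C_mul_le _ _).trans ((bpoly_natDegree j).trans (by omega))

theorem upoly_eval (u : Matrix (Fin n) (Fin n) k) (hu : (u - 1) ^ n = 0) (a : ℕ) (p q : Fin n) :
    (upoly u p q).eval (a : k) = (u ^ a) p q := by
  have h1 : u ^ a = ∑ j ∈ Finset.range (a + 1), (u - 1) ^ j * (a.choose j : Matrix (Fin n) (Fin n) k) := by
    have := (Commute.one_right (u - 1)).add_pow a
    simpa using this
  have h2 : ∀ N, n ≤ N ∨ a + 1 ≤ N → n ≤ N → ∑ j ∈ Finset.range N, (u - 1) ^ j * (a.choose j : Matrix (Fin n) (Fin n) k)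
      = ∑ j ∈ Finset.range n, (u - 1) ^ j * (a.choose j : Matrix (Fin n) (Fin n) k) := by
    intro N _ hN
    symm
    refine Finset.sum_subset (Finset.range_mono hN) fun j _ hj => ?_
    rw [pow_eq_zero_of_le (by simpa using hj) hu, zero_mul]
  have h3 : ∑ j ∈ Finset.range (a + 1), (u - 1) ^ j * (a.choose j : Matrix (Fin n) (Fin n) k)
      = ∑ j ∈ Finset.range (max (a+1) n), (u - 1) ^ j * (a.choose j : Matrix (Fin n) (Fin n) k) := by
    refine Finset.sum_subset (Finset.range_mono (le_max_left _ _)) fun j _ hj => ?_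
    rw [Nat.choose_eq_zero_of_lt (by simpa using hj), Nat.cast_zero, mul_zero]
  rw [h1, h3, h2 _ (Or.inl (le_max_right _ _)) (le_max_right _ _), Matrix.sum_apply, upoly]
  simp only [Matrix.of_apply, Polynomial.eval_finsetSum]
  refine Finset.sum_congr rfl fun j _ => ?_
  rw [Polynomial.eval_mul, Polynomial.eval_C, bpoly_eval]
  have h6 : (u - 1) ^ j * (a.choose j : Matrix (Fin n) (Fin n) k) = (a.choose j) • (u - 1) ^ j := (nsmul_eq_mul' _ _).symm
  rw [h6, Matrix.smul_apply, nsmul_eq_mul, mul_comm]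

abbrev IX (n : ℕ) : Type := (Fin n × Fin n) ⊕ Unit

def ptM (M : Matrix (Fin n) (Fin n) k) : IX n → k :=
  Sum.elim (fun p => M p.1 p.2) (fun _ => 1)

def Psi {m : ℕ} (L : Fin m → Matrix (Fin n) (Fin n) k) (i : Fin m) :
    Matrix (Fin n) (Fin n) (MvPolynomial (Fin m) k) :=
  (upoly (L i)).map (Polynomial.aeval (X i))

def Phi {m : ℕ} (L : Fin m → Matrix (Fin n) (Fin n) k) :
    Matrix (Fin n) (Fin n) (MvPolynomial (Fin m) k) :=
  (List.ofFn (Psi L)).prod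

def phi {m : ℕ} (L : Fin m → Matrix (Fin n) (Fin n) k) :
    MvPolynomial (IX n) k →ₐ[k] MvPolynomial (Fin m) k :=
  aeval (Sum.elim (fun p => Phi L p.1 p.2) (fun _ => 1))

def PL {m : ℕ} (L : Fin m → Matrix (Fin n) (Fin n) k) (a : Fin m → ℕ) : Matrix (Fin n) (Fin n) k :=
  (List.ofFn fun i => L i ^ a i).prod

theorem Phi_eval {m : ℕ} (L : Fin m → Matrix (Fin n) (Fin n) k) (hL : ∀ i, (L i - 1) ^ n = 0)
    (a : Fin m → ℕ) : (eval (fun i => (a i : k))).mapMatrix (Phi L) = PL L a := by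
  rw [Phi, map_list_prod, List.map_ofFn, PL]
  congr 2
  funext i
  ext p q
  simp only [Psi, Function.comp_apply, RingHom.mapMatrix_apply, Matrix.map_apply]
  rw [← upoly_eval (L i) (hL i), ← coe_aeval_eq_eval, RingHom.coe_coe, ← Polynomial.aeval_algHom_apply]
  simp

theorem phi_eval {m : ℕ} (L : Fin m → Matrix (Fin n) (Fin n) k) (hL : ∀ i, (L i - 1) ^ n = 0)
    (a : Fin m → ℕ) (f : MvPolynomial (IX n) k) :
    eval (fun i => (a i : k)) (phi L f) = eval (ptM (PL L a)) f := by
  rw [← Phi_eval L hL]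
  have : (eval (fun i => (a i : k))).comp (phi L).toRingHom = eval (ptM ((eval (fun i => (a i : k))).mapMatrix (Phi L))) := by
    refine MvPolynomial.ringHom_ext (fun t => by simp) ?_
    rintro (⟨p, q⟩ | _) <;> simp [phi, ptM]
  rw [← this]; rfl

theorem phi_eq_zero {m : ℕ} (L : Fin m → Matrix (Fin n) (Fin n) k) (hL : ∀ i, (L i - 1) ^ n = 0)
    (f : MvPolynomial (IX n) k) :
    phi L f = 0 ↔ ∀ a : Fin m → ℕ, eval (ptM (PL L a)) f = 0 := by
  constructor
  · intro h a
    rw [← phi_eval L hL, h, map_zero]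
  · intro h
    refine MvPolynomial.funext_set (fun _ => Set.range (Nat.cast : ℕ → k))
      (fun _ => Set.infinite_range_of_injective Nat.cast_injective) fun x hx => ?_
    choose a ha using fun i => hx i (Set.mem_univ i)
    obtain rfl : (fun i => (a i : k)) = x := _root_.funext ha
    rw [phi_eval L hL, h, map_zero]

theorem degreeOf_listProd {τ : Type} (i : τ) : ∀ {m : ℕ} (M : Fin m → Matrix (Fin n) (Fin n) (MvPolynomial τ k))
    (d : Fin m → ℕ) (_ : ∀ j p q, degreeOf i (M j p q) ≤ d j) (p q : Fin n),
    degreeOf i ((List.ofFn M).prod p q) ≤ ∑ j, d j := by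
  intro m
  induction m with
  | zero =>
    intro M d h p q
    simp only [List.ofFn_zero, List.prod_nil, Matrix.one_apply]
    split_ifs <;> simp
  | succ m ih =>
    intro M d h p q
    rw [List.ofFn_succ, List.prod_cons, Matrix.mul_apply, Fin.sum_univ_succ]
    refine (degreeOf_sum_le _ _ _).trans (Finset.sup_le fun j _ => ?_)
    exact (degreeOf_mul_le _ _ _).trans (Nat.add_le_add (h 0 p j) (ih _ _ (fun l => h l.succ) j q))

theorem degreeOf_aeval_X {τ : Type} [DecidableEq τ] (i j : τ) (P : Polynomial k) {D : ℕ} (hP : P.natDegree ≤ D) :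
    degreeOf i (Polynomial.aeval (X j : MvPolynomial τ k) P) ≤ if i = j then D else 0 := by
  rw [Polynomial.aeval_eq_sum_range]
  refine (degreeOf_sum_le _ _ _).trans (Finset.sup_le fun e he => ?_)
  rw [smul_eq_C_mul]
  refine (degreeOf_C_mul_le _ _ _).trans ((degreeOf_pow_le _ _ _).trans ?_)
  have := Finset.mem_range.1 he
  rw [degreeOf_X]
  split_ifs <;> simp; omega

theorem phi_degree {m : ℕ} (L : Fin m → Matrix (Fin n) (Fin n) k) (s : IX n) (i : Fin m) :
    degreeOf i (phi L (X s)) ≤ n - 1 := by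
  rcases s with ⟨p, q⟩ | _
  · have := degreeOf_listProd i (Psi L) (fun j => if i = j then n - 1 else 0)
      (fun j p q => degreeOf_aeval_X i j _ (upoly_natDegree _ p q)) p q
    simpa [phi, Phi] using this
  · simp [phi]

def rmul (u : Matrix (Fin n) (Fin n) k) : MvPolynomial (IX n) k →ₐ[k] MvPolynomial (IX n) k :=
  aeval (Sum.elim (fun p => ∑ j, X (Sum.inl (p.1, j)) * C (u j p.2)) (fun _ => X (Sum.inr ())))

theorem rmul_eval (u M : Matrix (Fin n) (Fin n) k) (f : MvPolynomial (IX n) k) :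
    eval (ptM M) (rmul u f) = eval (ptM (M * u)) f := by
  have : (eval (ptM M)).comp (rmul u).toRingHom = eval (ptM (M * u)) := by
    refine MvPolynomial.ringHom_ext (fun t => by simp) ?_
    rintro (⟨p, q⟩ | _) <;> simp [rmul, ptM, Matrix.mul_apply]
  rw [← this]; rfl

theorem PL_snoc {m : ℕ} (L : Fin m → Matrix (Fin n) (Fin n) k) (u : Matrix (Fin n) (Fin n) k)
    (a : Fin m → ℕ) (b : ℕ) :
    PL (Fin.snoc L u : Fin (m+1) → _) (Fin.snoc a b : Fin (m+1) → ℕ) = PL L a * u ^ b := by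
  rw [PL, List.ofFn_succ', List.concat_eq_append, List.prod_append]
  simp [PL]

theorem exists_param (S : Set (GL (Fin n) k)) (hS : ∀ u ∈ S, ((u : Matrix (Fin n) (Fin n) k) - 1) ^ n = 0)
    (hinv : ∀ u ∈ S, u⁻¹ ∈ S) :
    ∃ (m : ℕ) (φ : MvPolynomial (IX n) k →ₐ[k] MvPolynomial (Fin m) k) (g : Fin m → MvPolynomial (IX n) k),
      (∀ s i, degreeOf i (φ (X s)) ≤ n - 1) ∧ AlgebraicIndependent k (fun i => φ (g i)) ∧
      ∀ f, φ f = 0 ↔ ∀ h ∈ Subgroup.closure S, eval (ptM (h : Matrix (Fin n) (Fin n) k)) f = 0 := by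
  let c : GL (Fin n) k → Matrix (Fin n) (Fin n) k := fun u => u
  let good : ℕ → Prop := fun m => ∃ L : Fin m → GL (Fin n) k, (∀ i, L i ∈ S) ∧
    ∃ g : Fin m → MvPolynomial (IX n) k, AlgebraicIndependent k (fun i => phi (fun i => c (L i)) (g i))
  have h0 : good 0 := ⟨Fin.elim0, fun i => i.elim0, Fin.elim0,
    algebraicIndependent_empty_type_iff.2 (algebraMap k _).injective⟩
  have hb : ∀ m, good m → m ≤ Fintype.card (IX n) := by
    rintro m ⟨L, _, g, hg⟩
    have h1 : AlgebraicIndependent k g := AlgebraicIndependent.of_comp _ hg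
    have h2 := h1.cardinalMk_le_trdeg
    rw [MvPolynomial.trdeg_of_isDomain] at h2
    simpa only [Cardinal.mk_fintype, Cardinal.lift_natCast, Nat.cast_le, Fintype.card_fin] using h2
  obtain ⟨m, ⟨L, hLS, g, hg⟩, hm2⟩ : ∃ m, good m ∧ ¬ good (m+1) := by
    by_contra hcon
    push Not at hcon
    have : ∀ m, good m := fun m => Nat.rec h0 hcon m
    have := hb _ (this (Fintype.card (IX n) + 1))
    omega
  have hLu : ∀ i, (c (L i) - 1) ^ n = 0 := fun i => hS _ (hLS i)
  refine ⟨m, phi (fun i => c (L i)), g, phi_degree _, hg, ?_⟩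
  -- kernel stable
  have hstab : ∀ f, phi (fun i => c (L i)) f = 0 → ∀ u ∈ S, phi (fun i => c (L i)) (rmul (c u) f) = 0 := by
    intro f hf u hu
    have hsn : (fun i => c ((Fin.snoc L u : Fin (m+1) → GL (Fin n) k) i)) = Fin.snoc (fun i => c (L i)) (c u) := by
      funext i
      refine Fin.lastCases ?_ (fun j => ?_) i <;> simp
    have hsnS : ∀ i, (Fin.snoc L u : Fin (m+1) → GL (Fin n) k) i ∈ S := by
      intro i
      refine Fin.lastCases ?_ (fun j => ?_) i
      · simpa using hu
      · simpa using hLS j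
    have hsnU : ∀ i, ((Fin.snoc (fun i => c (L i)) (c u) : Fin (m+1) → Matrix (Fin n) (Fin n) k) i - 1) ^ n = 0 := by
      intro i
      rw [← hsn]
      exact hS _ (hsnS i)
    have hz : phi (Fin.snoc (fun i => c (L i)) (c u) : Fin (m+1) → Matrix (Fin n) (Fin n) k) f = 0 := by
      by_contra hne
      apply hm2
      refine ⟨Fin.snoc L u, hsnS, Fin.cons f g, ?_⟩
      rw [hsn]
      refine indep_extend _ _ ?_ g hg f hf hne
      intro f' hf'
      rw [phi_eq_zero _ hLu]
      rw [phi_eq_zero _ hsnU] at hf'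
      intro a
      have := hf' (Fin.snoc a 0)
      rwa [PL_snoc, pow_zero, mul_one] at this
    rw [phi_eq_zero _ hLu]
    rw [phi_eq_zero _ hsnU] at hz
    intro a
    have := hz (Fin.snoc a 1)
    rwa [PL_snoc, pow_one, ← rmul_eval] at this
  intro f
  constructor
  · intro hf h hh
    induction hh using Subgroup.closure_induction_right generalizing f with
    | one =>
      have := (phi_eq_zero _ hLu f).1 hf 0
      simpa [PL] using this
    | mul_right x hx y hy ih =>
      have := ih _ (hstab f hf y hy)
      rw [rmul_eval] at this
      simpa [c] using this
    | mul_inv_cancel x hx y hy ih =>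
      have := ih _ (hstab f hf _ (hinv y hy))
      rw [rmul_eval] at this
      simpa only [c, Units.val_mul] using this
  · intro hf
    rw [phi_eq_zero _ hLu]
    intro a
    have hmem : (List.ofFn fun i => L i ^ a i).prod ∈ Subgroup.closure S := by
      refine Subgroup.list_prod_mem _ fun x hx => ?_
      obtain ⟨i, rfl⟩ := (List.mem_ofFn' _ _).1 hx
      exact Subgroup.pow_mem _ (Subgroup.subset_closure (hLS i)) _
    have := hf _ hmem
    have hco : (((List.ofFn fun i => L i ^ a i).prod : GL (Fin n) k) : Matrix (Fin n) (Fin n) k) = PL (fun i => c (L i)) a := by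
      rw [PL, ← Units.coeHom_apply, map_list_prod, List.map_ofFn]
      congr 2
    rwa [hco] at this

end S6

namespace S6

theorem bound_ineq (n r : ℕ) (hn : 1 ≤ n) (hr : r ≤ n ^ 2 + 1) :
    (r+1)*((n-1)*(r+1)+1)^r ≤ (n ^ 3 + 1) ^ (2 ^ (3 * n ^ 2)) := by
  obtain ⟨c, rfl⟩ : ∃ c, n = c + 1 := ⟨n - 1, by omega⟩
  simp only [Nat.add_sub_cancel]
  set M := (c+1)^3+1 with hM
  have h1 : r + 1 ≤ M ^ 2 := by
    have : (c+1)^2 + 2 ≤ M^2 := by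
      rw [hM]; ring_nf; nlinarith [Nat.zero_le c, Nat.zero_le (c^2), Nat.zero_le (c^3), Nat.zero_le (c^4), Nat.zero_le (c^5), Nat.zero_le (c^6)]
    omega
  have h2 : c * (r+1) + 1 ≤ M := by
    have : c * (r+1) ≤ c * ((c+1)^2+2) := Nat.mul_le_mul_left c (by omega)
    have h3 : c * ((c+1)^2+2) + 1 ≤ M := by
      rw [hM]; ring_nf; nlinarith [Nat.zero_le c, Nat.zero_le (c^2)]
    omega
  have hM1 : 1 ≤ M := by omega
  have h4 : (c+1)^2 + 3 ≤ 2 ^ (3 * (c+1)^2) := by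
    rw [pow_mul]
    have h5 : ∀ a : ℕ, 1 ≤ a → a + 3 ≤ (2^3)^a := by
      intro a ha
      induction a, ha using Nat.le_induction with
      | base => norm_num
      | succ a ha ih => rw [pow_succ]; omega
    exact h5 _ (Nat.one_le_pow _ _ (by omega))
  calc (r+1)*(c*(r+1)+1)^r ≤ M^2 * M^r := Nat.mul_le_mul h1 (Nat.pow_le_pow_left h2 r)
    _ = M ^ (2 + r) := (pow_add _ _ _).symm
    _ ≤ _ := Nat.pow_le_pow_right hM1 (by omega)

theorem isGalois_Qbar : IsGalois ℚ Qbar := by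
  have h : @IsGalois ℚ _ Qbar _ (AlgebraicClosure.instAlgebra ℚ) :=
    @IsAlgClosure.isGalois ℚ (AlgebraicClosure ℚ) _ _ (AlgebraicClosure.instAlgebra ℚ) inferInstance _
  have e : (AlgebraicClosure.instAlgebra ℚ : Algebra ℚ Qbar) = DivisionRing.toRatAlgebra := Subsingleton.elim _ _
  rwa [e] at h

theorem descent {τ : Type} (Z : Submodule Qbar (MvPolynomial τ Qbar))
    (hZ : ∀ s : Qbar ≃ₐ[ℚ] Qbar, ∀ f ∈ Z, MvPolynomial.map (s : Qbar →+* Qbar) f ∈ Z) (p : τ → Qbar) :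
    ∀ (N : ℕ) (f : MvPolynomial τ Qbar), f ∈ Z → f.support.card = N → eval p f ≠ 0 →
      ∃ f' ∈ Z, f'.support ⊆ f.support ∧ eval p f' ≠ 0 ∧ ∀ m, f'.coeff m ∈ Set.range (algebraMap ℚ Qbar) := by
  classical
  intro N
  induction N using Nat.strong_induction_on with
  | _ N ih =>
  intro f hf hN hfp
  have hf0 : f ≠ 0 := by rintro rfl; simp at hfp
  let W : Set (MvPolynomial τ Qbar) := {f' | f' ∈ Z ∧ f' ≠ 0 ∧ f'.support ⊆ f.support}
  obtain ⟨f₁, ⟨hf₁Z, hf₁0, hf₁s⟩, hmin⟩ := WellFounded.has_min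
    (measure (fun f' : MvPolynomial τ Qbar => f'.support.card)).wf W ⟨f, hf, hf0, subset_rfl⟩
  obtain ⟨m, hm⟩ := support_nonempty.2 hf₁0
  have hcm : coeff m f₁ ≠ 0 := mem_support_iff.1 hm
  let f₂ := (coeff m f₁)⁻¹ • f₁
  have hf₂Z : f₂ ∈ Z := Z.smul_mem _ hf₁Z
  have hf₂m : coeff m f₂ = 1 := by simp [f₂, hcm]
  have hf₂s : f₂.support ⊆ f₁.support := support_smul
  have hrat : ∀ s : Qbar ≃ₐ[ℚ] Qbar, MvPolynomial.map (s : Qbar →+* Qbar) f₂ = f₂ := by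
    intro s
    by_contra hne
    have hsub : (MvPolynomial.map (s : Qbar →+* Qbar) f₂ - f₂).support ⊆ f₁.support.erase m := by
      intro l hl
      rw [mem_support_iff, coeff_sub, coeff_map] at hl
      rw [Finset.mem_erase]
      constructor
      · rintro rfl
        apply hl
        rw [hf₂m]; simp
      · apply hf₂s
        rw [mem_support_iff]
        intro h
        rw [h] at hl
        simp at hl
    refine hmin (MvPolynomial.map (s : Qbar →+* Qbar) f₂ - f₂)
      ⟨Z.sub_mem (hZ s _ hf₂Z) hf₂Z, sub_ne_zero.2 hne, hsub.trans ((Finset.erase_subset _ _).trans hf₁s)⟩ ?_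
    exact lt_of_le_of_lt (Finset.card_le_card hsub) (Finset.card_erase_lt_of_mem hm)
  have hrat' : ∀ l, f₂.coeff l ∈ Set.range (algebraMap ℚ Qbar) := by
    intro l
    have : IsGalois ℚ Qbar := isGalois_Qbar
    rw [InfiniteGalois.mem_range_algebraMap_iff_fixed]
    intro s
    have := congrArg (coeff l) (hrat s)
    rwa [coeff_map] at this
  by_cases hev : eval p f₂ = 0
  · let f₃ := f - coeff m f • f₂
    have hsub : f₃.support ⊆ f.support.erase m := by
      intro l hl
      rw [mem_support_iff, coeff_sub, coeff_smul] at hl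
      rw [Finset.mem_erase]
      constructor
      · rintro rfl
        apply hl
        rw [hf₂m]; simp
      · by_contra hlf
        have h1 : coeff l f₂ = 0 := notMem_support_iff.1 fun h => hlf (hf₁s (hf₂s h))
        rw [notMem_support_iff.1 hlf, h1] at hl
        simp at hl
    obtain ⟨f', h1, h2, h3⟩ := ih _ (hN ▸ lt_of_le_of_lt (Finset.card_le_card hsub)
      (Finset.card_erase_lt_of_mem (hf₁s hm))) f₃ (Z.sub_mem hf (Z.smul_mem _ hf₂Z)) rfl (by
        simpa [f₃, smul_eval, hev] using hfp)
    exact ⟨f', h1, h2.trans (hsub.trans (Finset.erase_subset _ _)), h3⟩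
  · exact ⟨f₂, hf₂Z, hf₂s.trans hf₁s, hev, hrat'⟩

variable {n : ℕ}

theorem glPoint_inj {g h : GL (Fin n) Qbar} (e : glPoint g = glPoint h) : g = h := by
  ext i j
  exact congrFun e (Sum.inl (i, j))

/-- regular self-maps of the general linear group -/
def Reg (T : GL (Fin n) Qbar → GL (Fin n) Qbar) : Prop :=
  ∀ f : MvPolynomial (glIdx n) Qbar, ∃ f' : MvPolynomial (glIdx n) Qbar,
    ∀ h, eval (glPoint h) f' = eval (glPoint (T h)) f

theorem reg_of {T : GL (Fin n) Qbar → GL (Fin n) Qbar} (t : glIdx n → MvPolynomial (glIdx n) Qbar)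
    (ht : ∀ h s, eval (glPoint h) (t s) = glPoint (T h) s) : Reg T := by
  intro f
  refine ⟨bind₁ t f, fun h => ?_⟩
  have : (eval (glPoint h)).comp (bind₁ t).toRingHom = eval (glPoint (T h)) := by
    refine MvPolynomial.ringHom_ext (fun c => by simp) fun s => ?_
    simp [ht]
  rw [← this]; rfl

theorem reg_right (u : GL (Fin n) Qbar) : Reg (fun h => h * u) := by
  refine reg_of (Sum.elim (fun p => ∑ j, X (Sum.inl (p.1, j)) * C (u.val j p.2))
    (fun _ => X (Sum.inr ()) * C (u.val.det)⁻¹)) ?_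
  rintro h (⟨p, q⟩ | _)
  · simp [glPoint, Matrix.mul_apply]
  · simp [glPoint, mul_comm]

theorem reg_left (u : GL (Fin n) Qbar) : Reg (fun h => u * h) := by
  refine reg_of (Sum.elim (fun p => ∑ j, C (u.val p.1 j) * X (Sum.inl (j, p.2)))
    (fun _ => X (Sum.inr ()) * C (u.val.det)⁻¹)) ?_
  rintro h (⟨p, q⟩ | _)
  · simp [glPoint, Matrix.mul_apply]
  · simp [glPoint]

/-- generic matrix -/
def gen (n : ℕ) : Matrix (Fin n) (Fin n) (MvPolynomial (glIdx n) Qbar) :=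
  Matrix.of fun i j => X (Sum.inl (i, j))

theorem gen_eval (a : glIdx n → Qbar) : (eval a).mapMatrix (gen n) = pointMatrix a := by
  ext i j
  simp [gen, pointMatrix]

theorem pointMatrix_glPoint (g : GL (Fin n) Qbar) : pointMatrix (glPoint g) = g.val := by
  ext i j
  simp [glPoint, pointMatrix]

theorem det_eval (a : glIdx n → Qbar) : eval a (gen n).det = (pointMatrix a).det := by
  rw [RingHom.map_det, gen_eval]

theorem reg_inv : Reg (fun h : GL (Fin n) Qbar => h⁻¹) := by
  refine reg_of (Sum.elim (fun p => X (Sum.inr ()) * (gen n).adjugate p.1 p.2)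
    (fun _ => (gen n).det)) ?_
  rintro h (⟨p, q⟩ | _)
  · have h1 : eval (glPoint h) ((gen n).adjugate p q) = h.val.adjugate p q := by
      rw [← pointMatrix_glPoint h, ← gen_eval, ← RingHom.map_adjugate]
      simp
    simp only [Sum.elim_inl, map_mul, h1, eval_X]
    simp [glPoint, Matrix.inv_def]
  · simp only [Sum.elim_inr, det_eval, pointMatrix_glPoint]
    simp [glPoint, Matrix.det_nonsing_inv]

theorem exists_glPoint (a : glIdx n → Qbar) (ha : (pointMatrix a).det * a (Sum.inr ()) = 1) :
    ∃ g, glPoint g = a := by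
  have hu : IsUnit (pointMatrix a).det := IsUnit.of_mul_eq_one _ ha
  refine ⟨Matrix.GeneralLinearGroup.mk'' (pointMatrix a) hu, ?_⟩
  funext s
  rcases s with ⟨p, q⟩ | _
  · rfl
  · have : a (Sum.inr ()) = ((pointMatrix a).det)⁻¹ := (inv_eq_of_mul_eq_one_right ha).symm
    exact this.symm

/-- the closure membership predicate -/
def InCl (H : Subgroup (GL (Fin n) Qbar)) (g : GL (Fin n) Qbar) : Prop :=
  ∀ f : MvPolynomial (glIdx n) Qbar, (∀ h ∈ H, eval (glPoint h) f = 0) → eval (glPoint g) f = 0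

theorem InCl.of_mem {H : Subgroup (GL (Fin n) Qbar)} {g} (hg : g ∈ H) : InCl H g := fun _ hf => hf g hg

theorem InCl.map {H : Subgroup (GL (Fin n) Qbar)} {T} (hT : Reg T) (h : ∀ x ∈ H, InCl H (T x)) {g}
    (hg : InCl H g) : InCl H (T g) := by
  intro f hf
  obtain ⟨f', hf'⟩ := hT f
  rw [← hf']
  exact hg f' fun x hx => by rw [hf']; exact h x hx f hf

/-- closure subgroup -/
def clSub (H : Subgroup (GL (Fin n) Qbar)) : Subgroup (GL (Fin n) Qbar) where
  carrier := {g | InCl H g}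
  one_mem' := InCl.of_mem H.one_mem
  mul_mem' := by
    intro a b ha hb
    refine InCl.map (T := fun h => a * h) (reg_left a) (fun x hx => ?_) hb
    exact InCl.map (T := fun h => h * x) (reg_right x) (fun y hy => InCl.of_mem (H.mul_mem hy hx)) ha
  inv_mem' := by
    intro a ha
    exact InCl.map reg_inv (fun y hy => InCl.of_mem (H.inv_mem hy)) ha

theorem clSub_image (H : Subgroup (GL (Fin n) Qbar)) :
    glPoint '' (clSub H : Set (GL (Fin n) Qbar)) = zariskiClosure (glPoint '' (H : Set (GL (Fin n) Qbar))) := by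
  ext a
  constructor
  · rintro ⟨g, hg, rfl⟩ f hf
    exact hg f fun h hh => hf _ ⟨h, hh, rfl⟩
  · intro ha
    have h1 : eval a ((gen n).det * X (Sum.inr ()) - 1) = 0 := by
      apply ha
      rintro _ ⟨h, hh, rfl⟩
      have hdet : h.val.det ≠ 0 := (Matrix.isUnits_det_units h).ne_zero
      simp only [map_sub, map_mul, det_eval, pointMatrix_glPoint, eval_X, map_one]
      simp [glPoint, hdet]
    obtain ⟨g, rfl⟩ := exists_glPoint a (by
      simpa only [map_sub, map_mul, det_eval, eval_X, map_one, sub_eq_zero] using h1)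
    refine ⟨g, fun f hf => ha f ?_, rfl⟩
    rintro _ ⟨h, hh, rfl⟩
    exact hf h hh

theorem unip_inv {u : GL (Fin n) Qbar} (hu : IsUnipotent u) : IsUnipotent u⁻¹ := by
  unfold IsUnipotent at *
  have h1 : ((u⁻¹ : GL (Fin n) Qbar) : Matrix (Fin n) (Fin n) Qbar) - 1 = -((u⁻¹ : GL (Fin n) Qbar) : Matrix (Fin n) (Fin n) Qbar) * (u.val - 1) := by
    rw [mul_sub, neg_mul, Units.inv_mul]; simp; abel
  have h2 : Commute (-((u⁻¹ : GL (Fin n) Qbar) : Matrix (Fin n) (Fin n) Qbar)) (u.val - 1) := by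
    refine Commute.neg_left (Commute.sub_right ?_ (Commute.one_right _))
    exact (Units.inv_mul u).trans (Units.mul_inv u).symm
  rw [h1, h2.mul_pow, hu, mul_zero]

theorem unip_conj {u : GL (Fin n) Qbar} (hu : IsUnipotent u) (g : GL (Fin n) Qbar) : IsUnipotent (g * u * g⁻¹) := by
  unfold IsUnipotent at *
  have h1 : ((g * u * g⁻¹ : GL (Fin n) Qbar) : Matrix (Fin n) (Fin n) Qbar) - 1 = g.val * (u.val - 1) * (g⁻¹).val := by
    rw [mul_sub, sub_mul, mul_one, Units.mul_inv]; rfl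
  rw [h1, Units.conj_pow, hu, mul_zero, zero_mul]

theorem unip_det {u : GL (Fin n) Qbar} (hu : IsUnipotent u) : u.val.det = 1 := by
  have h1 := Matrix.isNilpotent_charpoly_sub_pow_of_isNilpotent (M := u.val - 1) ⟨n, hu⟩
  have h2 := sub_eq_zero.1 h1.eq_zero
  have h3 := congrArg (Polynomial.eval (-1)) h2
  rw [Matrix.eval_charpoly] at h3
  have h4 : Matrix.scalar (Fin n) (-1 : Qbar) - (u.val - 1) = - u.val := by
    rw [map_neg, map_one]; abel
  rw [h4, Matrix.det_neg] at h3
  simpa using h3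

theorem unip_map {u : GL (Fin n) Qbar} (hu : IsUnipotent u) (s : Qbar →+* Qbar) :
    IsUnipotent (Matrix.GeneralLinearGroup.map s u) := by
  unfold IsUnipotent at *
  have : ((Matrix.GeneralLinearGroup.map s u : GL (Fin n) Qbar) : Matrix (Fin n) (Fin n) Qbar) - 1
      = s.mapMatrix (u.val - 1) := by
    rw [map_sub, map_one]; rfl
  rw [this, ← map_pow, hu, map_zero]

theorem glPoint_map (u : GL (Fin n) Qbar) (s : Qbar →+* Qbar) :
    glPoint (Matrix.GeneralLinearGroup.map s u) = fun i => s (glPoint u i) := by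
  funext i
  rcases i with ⟨p, q⟩ | _
  · simp [glPoint]
  · simp only [glPoint, Sum.elim_inr, map_inv₀]
    rw [RingHom.map_det]; rfl

theorem eval_map_comp {τ : Type} (s : Qbar →+* Qbar) (a : τ → Qbar) (f : MvPolynomial τ Qbar) :
    eval (fun i => s (a i)) (MvPolynomial.map s f) = s (eval a f) := by
  rw [eval_map]
  exact (eval₂_comp s a f).symm

theorem main (n : ℕ) (G : Subgroup (GL (Fin n) Qbar))
    (hG : DefinedOverQ (glPoint '' (G : Set (GL (Fin n) Qbar)))) :
    ∃ U : Subgroup (GL (Fin n) Qbar),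
      glPoint '' (U : Set (GL (Fin n) Qbar)) =
        zariskiClosure (glPoint ''
          ((Subgroup.closure {g : GL (Fin n) Qbar | g ∈ G ∧ IsUnipotent g} :
            Subgroup (GL (Fin n) Qbar)) : Set (GL (Fin n) Qbar))) ∧
      U ≤ G ∧
      (∀ g ∈ G, ∀ u ∈ U, g * u * g⁻¹ ∈ U) ∧
      BoundedOverQ (glPoint '' (U : Set (GL (Fin n) Qbar)))
        ((n ^ 3 + 1) ^ (2 ^ (3 * n ^ 2))) := by
  set S : Set (GL (Fin n) Qbar) := {g : GL (Fin n) Qbar | g ∈ G ∧ IsUnipotent g} with hS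
  set H := Subgroup.closure S with hH
  obtain ⟨I, hGI, hI⟩ := hG
  have hHG : H ≤ G := (Subgroup.closure_le _).2 fun g hg => hg.1
  refine ⟨clSub H, clSub_image H, ?_, ?_, ?_⟩
  · intro g hg
    have h1 : glPoint g ∈ glPoint '' (G : Set (GL (Fin n) Qbar)) := by
      rw [hGI]
      intro f hf
      refine hg f fun h hh => ?_
      have : glPoint h ∈ zeroSet I := hGI ▸ ⟨h, hHG hh, rfl⟩
      exact this f hf
    obtain ⟨g', hg', e⟩ := h1
    rw [← glPoint_inj e]
    exact hg'
  · intro g hg u hu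
    have hreg : Reg (fun h => g * h * g⁻¹) := by
      intro f
      obtain ⟨f₁, h₁⟩ := reg_right g⁻¹ f
      obtain ⟨f₂, h₂⟩ := reg_left g f₁
      exact ⟨f₂, fun h => by rw [h₂, h₁]⟩
    refine InCl.map hreg (fun x hx => InCl.of_mem ?_) hu
    have h1 : H.map (MulAut.conj g).toMonoidHom ≤ H := by
      rw [hH, MonoidHom.map_closure, Subgroup.closure_le]
      rintro _ ⟨y, hy, rfl⟩
      exact Subgroup.subset_closure ⟨G.mul_mem (G.mul_mem hg hy.1) (G.inv_mem hg), unip_conj hy.2 g⟩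
    exact h1 ⟨x, hx, rfl⟩
  · rw [clSub_image]
    rcases Nat.eq_zero_or_pos n with rfl | hn
    · refine ⟨{X (Sum.inr ()) - 1}, ?_, ?_⟩
      · rw [← clSub_image]
        ext a
        constructor
        · rintro ⟨g, _, rfl⟩ f rfl
          simp [glPoint]
        · intro ha
          refine ⟨1, (clSub H).one_mem, ?_⟩
          have := ha _ rfl
          funext s
          rcases s with ⟨p, q⟩ | _
          · exact p.elim0
          · simp [glPoint]
            rw [map_sub, eval_X, map_one, sub_eq_zero] at this
            exact this.symm
      · rintro f rfl
        refine ⟨(totalDegree_sub _ _).trans (by simp), fun m => ?_⟩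
        classical
        rw [coeff_sub, coeff_X, coeff_one]
        refine ⟨(if Finsupp.single (Sum.inr ()) 1 = m then 1 else 0) - (if 0 = m then 1 else 0), ?_⟩
        rw [map_sub]
        congr 1 <;> split_ifs <;> simp
    · have hdet : ∀ h ∈ H, h.val.det = 1 := by
        intro h hh
        have h1 : H ≤ (Matrix.GeneralLinearGroup.det (n := Fin n) (R := Qbar)).ker := by
          rw [hH, Subgroup.closure_le]
          intro u hu
          rw [SetLike.mem_coe, MonoidHom.mem_ker]
          ext
          exact unip_det hu.2
        have h2 := congrArg Units.val (MonoidHom.mem_ker.1 (h1 hh))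
        exact h2
      have hpt : ∀ h ∈ H, glPoint h = ptM h.val := by
        intro h hh
        funext s
        rcases s with ⟨p, q⟩ | _
        · rfl
        · simp only [glPoint, ptM, Sum.elim_inr, hdet h hh, inv_one]
      let Z : Submodule Qbar (MvPolynomial (glIdx n) Qbar) :=
        { carrier := {f | ∀ h ∈ H, eval (glPoint h) f = 0}
          zero_mem' := fun h _ => by simp
          add_mem' := fun {a b} ha hb h hh => by rw [map_add, ha h hh, hb h hh, add_zero]
          smul_mem' := fun c f hf h hh => by rw [smul_eval, hf h hh, mul_zero] }
      have hZ : ∀ f, f ∈ Z ↔ ∀ h ∈ H, eval (glPoint h) f = 0 := fun f => Iff.rfl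
      have hGal : ∀ s : Qbar ≃ₐ[ℚ] Qbar, ∀ h ∈ H, Matrix.GeneralLinearGroup.map (s : Qbar →+* Qbar) h ∈ H := by
        intro s h hh
        have h1 : H.map (Matrix.GeneralLinearGroup.map (s : Qbar →+* Qbar)) ≤ H := by
          rw [hH, MonoidHom.map_closure, Subgroup.closure_le]
          rintro _ ⟨y, hy, rfl⟩
          refine Subgroup.subset_closure ⟨?_, unip_map hy.2 _⟩
          have h2 : glPoint (Matrix.GeneralLinearGroup.map (s : Qbar →+* Qbar) y) ∈ glPoint '' (G : Set (GL (Fin n) Qbar)) := by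
            rw [hGI, glPoint_map]
            intro f hf
            have h3 : MvPolynomial.map (s : Qbar →+* Qbar) f = f := by
              ext m
              rw [coeff_map]
              obtain ⟨q, hq⟩ := hI f hf m
              rw [← hq]
              exact s.commutes q
            have h4 : glPoint y ∈ zeroSet I := hGI ▸ ⟨y, hy.1, rfl⟩
            rw [← h3, eval_map_comp, h4 f hf, map_zero]
          obtain ⟨g', hg', e⟩ := h2
          rw [← glPoint_inj e]
          exact hg'
        exact h1 ⟨h, hh, rfl⟩
      have hZGal : ∀ s : Qbar ≃ₐ[ℚ] Qbar, ∀ f ∈ Z, MvPolynomial.map (s : Qbar →+* Qbar) f ∈ Z := by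
        intro s f hf h hh
        have h1 := hf _ (hGal s.symm h hh)
        have h2 : glPoint h = fun i => (s : Qbar →+* Qbar) (glPoint (Matrix.GeneralLinearGroup.map (s.symm : Qbar →+* Qbar) h) i) := by
          rw [glPoint_map]
          funext i
          simp
        rw [h2, eval_map_comp, h1, map_zero]
      obtain ⟨m, φ, g, hφD, hg, hφ⟩ := exists_param S (fun u hu => hu.2)
        (fun u hu => ⟨G.inv_mem hu.1, unip_inv hu.2⟩)
      have hφZ : ∀ f, φ f = 0 ↔ f ∈ Z := by
        intro f
        rw [hφ, hZ]
        exact forall₂_congr fun h hh => by rw [hpt h hh]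
      refine ⟨{f | f ∈ Z ∧ f.totalDegree ≤ (n ^ 3 + 1) ^ (2 ^ (3 * n ^ 2)) ∧
        ∀ m, f.coeff m ∈ Set.range (algebraMap ℚ Qbar)}, ?_, fun f hf => hf.2⟩
      ext a
      constructor
      · intro ha f hf
        refine ha f ?_
        rintro _ ⟨h, hh, rfl⟩
        exact hf.1 h hh
      · intro ha f hf
        by_contra hne
        have hfZ : f ∈ Z := fun h hh => hf _ ⟨h, hh, rfl⟩
        obtain ⟨r, hr, f₁, hf₁, hf₁a, hf₁d⟩ := sep φ hφD g hg a ⟨f, (hφZ f).2 hfZ, hne⟩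
        obtain ⟨f₂, hf₂Z, hf₂s, hf₂a, hf₂r⟩ := descent Z hZGal a _ f₁ ((hφZ f₁).1 hf₁) rfl hf₁a
        refine hf₂a (ha f₂ ⟨hf₂Z, ?_, hf₂r⟩)
        have hr' : r ≤ n ^ 2 + 1 := by simpa [pow_two] using hr
        exact (Finset.sup_mono hf₂s).trans (hf₁d.trans (bound_ineq n r hn hr'))

end S6

/-- **Unipotent-generated subgroup**: let `G` be a closed subgroup of `GL_n(ℚ̄)` defined
over `ℚ` and `U = Zcl(⟨unipotent elements of G⟩)`.  Then `U` is a normal subgroup of `G`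
which is `(n³+1)^(2^(3n²))`-bounded over `ℚ`. -/
theorem stmt6 (n : ℕ) (G : Subgroup (GL (Fin n) Qbar))
    (hG : DefinedOverQ (glPoint '' (G : Set (GL (Fin n) Qbar)))) :
    ∃ U : Subgroup (GL (Fin n) Qbar),
      glPoint '' (U : Set (GL (Fin n) Qbar)) =
        zariskiClosure (glPoint ''
          ((Subgroup.closure {g : GL (Fin n) Qbar | g ∈ G ∧ IsUnipotent g} :
            Subgroup (GL (Fin n) Qbar)) : Set (GL (Fin n) Qbar))) ∧
      U ≤ G ∧
      (∀ g ∈ G, ∀ u ∈ U, g * u * g⁻¹ ∈ U) ∧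
      BoundedOverQ (glPoint '' (U : Set (GL (Fin n) Qbar)))
        ((n ^ 3 + 1) ^ (2 ^ (3 * n ^ 2))) := by
  exact S6.main n G hG
end
end

section
/- There exists an absolute constant c ∈ ℕ such that the following holds for all n ≥ 1. For 1 ≤ i ≤ ℓ, let G_i = Zcl(⟨S_i⟩) be the Zariski closure in GL_n(ℚ̄) of the subgroup generated by a set S_i ⊆ GL_n(ℚ). If G₁ ⊊ G₂ ⊊ ⋯ ⊊ G_ℓ is a strictly increasing chain, then ℓ ≤ exp⁴(n^c). -/
noncomputable section

open scoped MatrixGroups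
open MvPolynomial

/-! ### Abstract part: chains of closed subgroups in a Noetherian space -/

open Pointwise in
lemma exists_bigger_irreducible {G : Type} [Group G] [TopologicalSpace G]
    [TopologicalSpace.NoetherianSpace G]
    (hmul : ∀ g : G, Continuous fun x : G => g * x)
    (K H : Subgroup G) (hKH : K ≤ H) (hHc : IsClosed (H : Set G))
    (hidx : K.relIndex H = 0)
    (X : TopologicalSpace.IrreducibleCloseds G) (hX : (X : Set G) ⊆ K) :
    ∃ Y : TopologicalSpace.IrreducibleCloseds G, X < Y ∧ (Y : Set G) ⊆ H := by
  by_contra hno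
  push Not at hno
  have hXi : IsIrreducible (X : Set G) := X.isIrreducible'
  have hXc : IsClosed (X : Set G) := X.isClosed'
  obtain ⟨S, hSf, hSc, hSi, hSU⟩ :=
    TopologicalSpace.NoetherianSpace.exists_finite_set_isClosed_irreducible hHc
  have hsub : MulAction.orbit H (X : Set G) ⊆ S := by
    rintro _ ⟨h, rfl⟩
    have himg : IsIrreducible ((h : G) • (X : Set G)) := by
      have := hXi.image (fun x => (h : G) * x) (hmul h).continuousOn
      simpa [← Set.image_smul] using this
    have hcov : ((h : G) • (X : Set G)) ⊆ ⋃₀ S := by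
      rw [← hSU]
      rintro _ ⟨x, hx, rfl⟩
      exact H.mul_mem h.2 (hKH (hX hx))
    lift S to Finset (Set G) using hSf
    obtain ⟨t, htS, ht⟩ := isIrreducible_iff_sUnion_isClosed.1 himg S hSc hcov
    have htH : t ⊆ (H : Set G) := by rw [hSU]; exact Set.subset_sUnion_of_mem htS
    have hti : IsIrreducible ((h : G)⁻¹ • t) := by
      have := (hSi t htS).image (fun x => (h : G)⁻¹ * x) (hmul _).continuousOn
      simpa [← Set.image_smul] using this
    have htc : IsClosed ((h : G)⁻¹ • t) := by
      have := (hSc t htS).preimage (hmul (h : G))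
      rwa [show (fun x => (h : G) * x) ⁻¹' t = (h : G)⁻¹ • t from
        Set.preimage_smul (h : G) t] at this
    have hle : (X : Set G) ⊆ (h : G)⁻¹ • t := Set.subset_smul_set_iff.2 (by simpa using ht)
    have heq : (X : Set G) = (h : G)⁻¹ • t := by
      by_contra hne
      refine hno ⟨_, hti, htc⟩ ?_ ?_
      · exact lt_of_le_of_ne hle (fun h' => hne (congrArg (fun Z : TopologicalSpace.IrreducibleCloseds G => (Z : Set G)) h'))
      · rintro _ ⟨x, hx, rfl⟩
        exact H.mul_mem (H.inv_mem h.2) (htH hx)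
    have : (h : G) • (X : Set G) = t := by rw [heq, smul_inv_smul]
    change (h : G) • (X : Set G) ∈ _
    rw [this]; exact htS
  have hfin : (MulAction.orbit H (X : Set G)).Finite := hSf.subset hsub
  have h1 : (MulAction.stabilizer H (X : Set G)).index ≠ 0 := by
    rw [MulAction.index_stabilizer]
    exact (Set.ncard_pos hfin).2 (MulAction.nonempty_orbit _) |>.ne'
  have h2 : MulAction.stabilizer H (X : Set G) ≤ K.subgroupOf H := by
    intro h hh
    rw [MulAction.mem_stabilizer_iff] at hh
    obtain ⟨x, hx⟩ := hXi.1
    have h3 : (h : G) * x ∈ (X : Set G) := by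
      rw [← hh]; exact ⟨x, hx, rfl⟩
    rw [Subgroup.mem_subgroupOf]
    have := K.mul_mem (hX h3) (K.inv_mem (hX hx))
    simpa using this
  have h3 := Subgroup.index_dvd_of_le h2
  rw [show (K.subgroupOf H).index = 0 from hidx] at h3
  exact h1 (Nat.eq_zero_of_zero_dvd h3)

lemma two_pow_le_relIndex {G : Type} [Group G] {ℓ : ℕ} (K : Fin ℓ → Subgroup G)
    (hK : StrictMono K) (t : ℕ) (i : ℕ) (h : i + t < ℓ)
    (h0 : (K ⟨i, by omega⟩).relIndex (K ⟨i + t, h⟩) ≠ 0) :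
    2 ^ t ≤ (K ⟨i, by omega⟩).relIndex (K ⟨i + t, h⟩) := by
  induction t with
  | zero => simp
  | succ t ih =>
    have hle : K ⟨i, by omega⟩ ≤ K ⟨i + t, by omega⟩ := hK.monotone (by simp)
    have hlt : K ⟨i + t, by omega⟩ < K ⟨i + (t + 1), h⟩ := hK (by simp)
    have hm := Subgroup.relIndex_mul_relIndex _ _ _ hle hlt.le
    rw [← hm] at h0 ⊢
    have h1 := ih (by omega) (left_ne_zero_of_mul h0)
    have h2 : (K ⟨i + t, by omega⟩).relIndex (K ⟨i + (t + 1), h⟩) ≠ 1 := by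
      rw [Ne, Subgroup.relIndex_eq_one]; exact not_le_of_gt hlt
    have h3 := right_ne_zero_of_mul h0
    rw [pow_succ]
    exact Nat.mul_le_mul h1 (by omega)

lemma chain_bound {G : Type} [Group G] [TopologicalSpace G]
    [TopologicalSpace.NoetherianSpace G]
    (hmul : ∀ g : G, Continuous fun x : G => g * x) (D b : ℕ)
    (hD : topologicalKrullDim G ≤ D)
    (hb : ∀ K H : Subgroup G, K ≤ H → IsClosed (K : Set G) → IsClosed (H : Set G) →
      K.relIndex H ≠ 0 → K.relIndex H ≤ 2 ^ b)
    {ℓ : ℕ} (K : Fin ℓ → Subgroup G) (hK : StrictMono K)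
    (hKc : ∀ i, IsClosed (K i : Set G)) : ℓ ≤ (D + 1) * (b + 1) := by
  by_contra hlt
  push Not at hlt
  have key : ∀ t : ℕ, ∀ ht : t * (b + 1) < ℓ,
      ∃ s : LTSeries (TopologicalSpace.IrreducibleCloseds G), s.length = t ∧
        (s.last : Set G) ⊆ K ⟨t * (b + 1), ht⟩ := by
    intro t
    induction t with
    | zero =>
      intro ht
      refine ⟨RelSeries.singleton _ ⟨closure {1}, isIrreducible_singleton.closure,
        isClosed_closure⟩, rfl, ?_⟩
      refine closure_minimal ?_ (hKc _)
      simp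
    | succ t ih =>
      intro ht
      have ht' : t * (b + 1) + (b + 1) < ℓ := by rw [Nat.succ_mul] at ht; exact ht
      obtain ⟨s, hs, hsK⟩ := ih (by omega)
      have hidx : (K ⟨t * (b + 1), by omega⟩).relIndex (K ⟨t * (b + 1) + (b + 1), ht'⟩) = 0 := by
        by_contra h0
        have h1 := two_pow_le_relIndex K hK (b + 1) (t * (b + 1)) ht' h0
        have h2 := hb _ _ (hK.monotone (by simp)) (hKc _) (hKc _) h0
        have h3 : 2 ^ b < 2 ^ (b + 1) := Nat.pow_lt_pow_right (by norm_num) (by omega)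
        omega
      obtain ⟨Y, hY, hYK⟩ := exists_bigger_irreducible hmul _ _ (hK.monotone (by simp))
        (hKc _) hidx s.last hsK
      refine ⟨s.snoc Y hY, by simp [hs], ?_⟩
      simp only [RelSeries.last_snoc]
      have : (⟨(t + 1) * (b + 1), ht⟩ : Fin ℓ) = ⟨t * (b + 1) + (b + 1), ht'⟩ := by
        ext; simp [Nat.succ_mul]
      rw [this]; exact hYK
  obtain ⟨s, hs, -⟩ := key (D + 1) hlt
  have := (Order.LTSeries.length_le_krullDim s).trans hD
  rw [hs] at this
  have h' : D + 1 ≤ D := by exact_mod_cast this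
  omega

/-! ### Arithmetic: a bound on the index -/

lemma arith_part (n m a A : ℕ) (ha : 2 ≤ a) (hm : m ≠ 0) (hcop : a.Coprime m) 
    (h : ∀ p : ℕ, p.Prime → A < p → m ∣ ∏ i : Fin n, (p ^ n - p ^ (i : ℕ))) :
    m ≤ a ^ (n * n) := by
  obtain ⟨p, hpA, hp, hmod⟩ := Nat.forall_exists_prime_gt_and_modEq A hm hcop
  have h1 := h p hp hpA
  have h2 : m ∣ ∏ i : Fin n, (a ^ n - a ^ (i : ℕ)) := by
    rw [← Int.natCast_dvd_natCast] at h1 ⊢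
    rw [← ZMod.intCast_zmod_eq_zero_iff_dvd] at h1 ⊢
    have hpm : (p : ZMod m) = (a : ZMod m) := (ZMod.natCast_eq_natCast_iff _ _ _).2 hmod
    have e : ∀ b : ℕ, 0 < b → (((∏ i : Fin n, (b ^ n - b ^ (i : ℕ)) : ℕ) : ℤ) : ZMod m)
        = ∏ i : Fin n, ((b : ZMod m) ^ n - (b : ZMod m) ^ (i : ℕ)) := by
      intro b hb
      push_cast
      refine Finset.prod_congr rfl fun i _ => ?_
      rw [Nat.cast_sub (Nat.pow_le_pow_right hb i.2.le)]
      push_cast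
      rfl
    rw [e p hp.pos, hpm] at h1
    rw [e a (by omega)]
    exact h1
  have hpos : 0 < ∏ i : Fin n, (a ^ n - a ^ (i : ℕ)) :=
    Finset.prod_pos fun i _ => Nat.sub_pos_of_lt (Nat.pow_lt_pow_right (by omega) i.2)
  refine (Nat.le_of_dvd hpos h2).trans ?_
  calc ∏ i : Fin n, (a ^ n - a ^ (i : ℕ)) ≤ ∏ _i : Fin n, a ^ n :=
        Finset.prod_le_prod' fun i _ => Nat.sub_le _ _
    _ = a ^ (n * n) := by simp [pow_mul]

lemma arith_bound (n d A : ℕ) (hd : d ≠ 0)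
    (h : ∀ p : ℕ, p.Prime → A < p → d ∣ ∏ i : Fin n, (p ^ n - p ^ (i : ℕ))) :
    d ≤ 2 ^ (3 * (n * n)) := by
  obtain ⟨e, m, hm, rfl⟩ := Nat.exists_eq_two_pow_mul_odd hd
  have h1 : m ≤ 2 ^ (n * n) := arith_part n m 2 A le_rfl (by rintro rfl; simp at hm)
    (Nat.coprime_two_left.2 hm) fun p hp hA => (dvd_mul_left _ _).trans (h p hp hA)
  have h2 : 2 ^ e ≤ 3 ^ (n * n) := arith_part n (2 ^ e) 3 A (by norm_num) (by positivity)
    (Nat.Coprime.pow_right _ (by norm_num)) fun p hp hA => (dvd_mul_right _ _).trans (h p hp hA)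
  have h3 : 3 ^ (n * n) ≤ 4 ^ (n * n) := Nat.pow_le_pow_left (by norm_num) _
  calc 2 ^ e * m ≤ 4 ^ (n * n) * 2 ^ (n * n) := Nat.mul_le_mul (h2.trans h3) h1
    _ = 2 ^ (3 * (n * n)) := by
      rw [← Nat.mul_pow, pow_mul 2 3]; norm_num

lemma final_arith (n : ℕ) (hn : 1 ≤ n) :
    (n * n + 1 + 1) * (3 * (n * n) + 1) ≤ iexp 4 (n ^ 1) := by
  simp only [iexp, pow_one]
  have h1 : n + 1 ≤ 2 ^ n := Nat.lt_two_pow_self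
  have h2 : 2 ^ n + 1 ≤ 2 ^ 2 ^ n := Nat.lt_two_pow_self
  generalize hx : 2 ^ n = x at *
  obtain ⟨k, rfl⟩ : ∃ k, x = k + 2 := ⟨x - 2, by omega⟩
  have hy : 4 * (k + 1) ≤ 2 ^ (k + 2) := by
    have : k < 2 ^ k := Nat.lt_two_pow_self
    rw [pow_add]; omega
  have h3 : 2 ^ (4 * (k + 1)) ≤ 2 ^ (2 ^ (k + 2)) := Nat.pow_le_pow_right (by norm_num) hy
  have h4 : n ≤ k + 1 := by omega
  generalize 2 ^ (k + 2) = y at *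
  have h5 : 2 ^ (2 ^ (4 * (k + 1))) ≤ 2 ^ 2 ^ y := 
    Nat.pow_le_pow_right (by norm_num) h3
  refine le_trans ?_ h5
  have h6 : (k + 2) ^ 4 ≤ 2 ^ (4 * (k + 1)) := by
    rw [mul_comm, pow_mul]
    exact Nat.pow_le_pow_left Nat.lt_two_pow_self _
  have h7 : 2 ^ ((k + 2) ^ 4) ≤ 2 ^ (2 ^ (4 * (k + 1))) := Nat.pow_le_pow_right (by norm_num) h6
  refine le_trans ?_ h7
  have h9 : (n * n + 1 + 1) * (3 * (n * n) + 1) ≤ 3 * (n + 1) ^ 4 := by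
    have e1 : n * n + 1 + 1 ≤ (n + 1) ^ 2 := by nlinarith
    have e2 : 3 * (n * n) + 1 ≤ 3 * (n + 1) ^ 2 := by nlinarith
    calc _ ≤ (n + 1) ^ 2 * (3 * (n + 1) ^ 2) := Nat.mul_le_mul e1 e2
      _ = _ := by ring
  have h10 : (n + 1) ^ 4 ≤ (k + 2) ^ 4 := Nat.pow_le_pow_left (by omega) _
  have h11 : 2 ^ 4 ≤ (k + 2) ^ 4 := Nat.pow_le_pow_left (by omega) _
  generalize (k + 2) ^ 4 = z at *
  obtain ⟨w, rfl⟩ : ∃ w, z = w + 4 := ⟨z - 4, by omega⟩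
  have h12 : w < 2 ^ w := Nat.lt_two_pow_self
  have h13 : 2 ^ (w + 4) = 16 * 2 ^ w := by ring
  omega

/-! ### The Zariski topology on `GL_n(ℚ)` -/

/-- The point `(M, det(M)⁻¹)` attached to an invertible matrix over any field. -/
def gpt {K : Type} [Field K] {n : ℕ} (g : GL (Fin n) K) : glIdx n → K :=
  Sum.elim (fun p => (g : Matrix (Fin n) (Fin n) K) p.1 p.2)
    (fun _ => ((g : Matrix (Fin n) (Fin n) K).det)⁻¹)

lemma gpt_map {K L : Type} [Field K] [Field L] (φ : K →+* L) {n : ℕ} (g : GL (Fin n) K) :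
    gpt (Matrix.GeneralLinearGroup.map φ g) = fun s => φ (gpt g s) := by
  funext s
  rcases s with ⟨i, j⟩ | u
  · simp [gpt]
  · have : ((Matrix.GeneralLinearGroup.map φ g : GL (Fin n) L) : Matrix (Fin n) (Fin n) L)
      = φ.mapMatrix (g : Matrix (Fin n) (Fin n) K) := rfl
    simp only [gpt, Sum.elim_inr, this, ← RingHom.map_det, map_inv₀]

/-- A copy of `GL_n(ℚ)`, to carry the Zariski topology. -/
def GQ (n : ℕ) : Type := GL (Fin n) ℚ

instance (n : ℕ) : Group (GQ n) := inferInstanceAs (Group (GL (Fin n) ℚ))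

/-- inclusion of `GL_n(ℚ)` in `GL_n(ℚ̄)`. -/
def incl (n : ℕ) : GQ n →* GL (Fin n) Qbar :=
  Matrix.GeneralLinearGroup.map (n := Fin n) (algebraMap ℚ Qbar)

/-- The coordinates of a rational matrix, in `ℚ̄`. -/
def qpt {n : ℕ} (g : GQ n) : glIdx n → Qbar := glPoint (incl n g)

lemma qpt_eq {n : ℕ} (g : GQ n) : qpt g = fun s => algebraMap ℚ Qbar (gpt (K := ℚ) g s) :=
  gpt_map (algebraMap ℚ Qbar) (K := ℚ) g

/-- The prime ideal of polynomials vanishing at `g`. -/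
def specPt {n : ℕ} (g : GQ n) : PrimeSpectrum (MvPolynomial (glIdx n) Qbar) :=
  ⟨RingHom.ker (MvPolynomial.eval (qpt g)), RingHom.ker_isPrime _⟩

instance (n : ℕ) : TopologicalSpace (GQ n) := TopologicalSpace.induced specPt inferInstance

lemma specPt_inducing (n : ℕ) : Topology.IsInducing (specPt (n := n)) := ⟨rfl⟩

instance (n : ℕ) : TopologicalSpace.NoetherianSpace (GQ n) :=
  (specPt_inducing n).noetherianSpace

lemma dim_GQ (n : ℕ) : topologicalKrullDim (GQ n) ≤ ((n * n + 1 : ℕ) : WithBot ℕ∞) := by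
  refine (specPt_inducing n).topologicalKrullDim_le.trans ?_
  rw [PrimeSpectrum.topologicalKrullDim_eq_ringKrullDim,
    MvPolynomial.ringKrullDim_of_isNoetherianRing, ringKrullDim_eq_zero_of_field]
  simp

lemma mem_closure_GQ {n : ℕ} (s : Set (GQ n)) (g : GQ n) :
    g ∈ closure s ↔ ∀ f : MvPolynomial (glIdx n) Qbar,
      (∀ h ∈ s, MvPolynomial.eval (qpt h) f = 0) → MvPolynomial.eval (qpt g) f = 0 := by
  rw [(specPt_inducing n).closure_eq_preimage_closure_image, Set.mem_preimage,
    ← PrimeSpectrum.zeroLocus_vanishingIdeal_eq_closure, PrimeSpectrum.mem_zeroLocus]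
  constructor
  · intro h f hf
    have : f ∈ PrimeSpectrum.vanishingIdeal (specPt '' s) := by
      rw [PrimeSpectrum.mem_vanishingIdeal]
      rintro _ ⟨x, hx, rfl⟩
      exact hf x hx
    exact h this
  · intro h f hf
    refine h f fun x hx => ?_
    rw [SetLike.mem_coe, PrimeSpectrum.mem_vanishingIdeal] at hf
    exact hf _ ⟨x, hx, rfl⟩

lemma continuous_of_poly {n : ℕ} (T : GQ n → GQ n) (P : glIdx n → MvPolynomial (glIdx n) Qbar)
    (hT : ∀ g, qpt (T g) = fun s => MvPolynomial.eval (qpt g) (P s)) : Continuous T := by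
  rw [continuous_iff_image_closure_subset_closure_image]
  rintro s _ ⟨g, hg, rfl⟩
  rw [mem_closure_GQ] at hg ⊢
  intro f hf
  have e : ∀ h : GQ n, MvPolynomial.eval (qpt (T h)) f
      = MvPolynomial.eval (qpt h) (MvPolynomial.bind₁ P f) := by
    intro h
    rw [hT h]
    exact (MvPolynomial.eval₂Hom_bind₁ _ _ _ _).symm
  rw [e]
  refine hg _ fun h hh => ?_
  rw [← e]
  exact hf _ ⟨h, hh, rfl⟩

lemma continuous_mul_left_GQ {n : ℕ} (g : GQ n) : Continuous fun x : GQ n => g * x := by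
  refine continuous_of_poly _ (Sum.elim
    (fun p => ∑ k, MvPolynomial.C (qpt g (Sum.inl (p.1, k))) * MvPolynomial.X (Sum.inl (k, p.2)))
    (fun u => MvPolynomial.C (qpt g (Sum.inr u)) * MvPolynomial.X (Sum.inr u))) fun x => ?_
  funext s
  rcases s with ⟨i, j⟩ | u
  · simp [qpt, glPoint, Matrix.mul_apply]
  · simp [qpt, glPoint, mul_comm]

lemma continuous_mul_right_GQ {n : ℕ} (g : GQ n) : Continuous fun x : GQ n => x * g := by
  refine continuous_of_poly _ (Sum.elim
    (fun p => ∑ k, MvPolynomial.X (Sum.inl (p.1, k)) * MvPolynomial.C (qpt g (Sum.inl (k, p.2))))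
    (fun u => MvPolynomial.C (qpt g (Sum.inr u)) * MvPolynomial.X (Sum.inr u))) fun x => ?_
  funext s
  rcases s with ⟨i, j⟩ | u
  · simp [qpt, glPoint, Matrix.mul_apply]
  · simp [qpt, glPoint]

lemma continuous_inv_GQ {n : ℕ} : Continuous fun x : GQ n => x⁻¹ := by
  let XX : Matrix (Fin n) (Fin n) (MvPolynomial (glIdx n) Qbar) :=
    Matrix.of fun i j => MvPolynomial.X (Sum.inl (i, j))
  refine continuous_of_poly _ (Sum.elim
    (fun p => MvPolynomial.X (Sum.inr ()) * XX.adjugate p.1 p.2)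
    (fun u => XX.det)) fun x => ?_
  have hXX : (MvPolynomial.eval (qpt x)).mapMatrix XX
      = ((incl n x : GL (Fin n) Qbar) : Matrix (Fin n) (Fin n) Qbar) := by
    ext i j
    simp [XX, qpt, glPoint]
  funext s
  rcases s with ⟨i, j⟩ | u
  · simp only [Sum.elim_inl, map_mul, MvPolynomial.eval_X]
    have : MvPolynomial.eval (qpt x) (XX.adjugate i j)
      = ((MvPolynomial.eval (qpt x)).mapMatrix XX.adjugate) i j := rfl
    rw [this, RingHom.map_adjugate, hXX]
    simp [qpt, glPoint, Matrix.inv_def]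
  · simp only [Sum.elim_inr]
    rw [RingHom.map_det, hXX]
    simp [qpt, glPoint]

instance (n : ℕ) : SeparatelyContinuousMul (GQ n) where
  continuous_const_mul {a} := continuous_mul_left_GQ a
  continuous_mul_const {a} := continuous_mul_right_GQ a

/-- The Zariski closure of a subgroup is a subgroup. -/
def zcl {n : ℕ} (H : Subgroup (GQ n)) : Subgroup (GQ n) :=
  { H.toSubmonoid.topologicalClosure with
    inv_mem' := by
      intro g hg
      have h1 := image_closure_subset_closure_image (continuous_inv_GQ (n := n))
        (s := (H : Set (GQ n))) ⟨g, hg, rfl⟩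
      have h2 : (fun x : GQ n => x⁻¹) '' (H : Set (GQ n)) = H := by
        ext x; simp
      rw [h2] at h1
      exact h1 }

lemma coe_zcl {n : ℕ} (H : Subgroup (GQ n)) : (zcl H : Set (GQ n)) = closure (H : Set (GQ n)) :=
  rfl

/-! ### The `p`-adic argument -/

lemma matrix_pow_congr {R : Type} [CommRing R] {n p : ℕ} (M X : Matrix (Fin n) (Fin n) R)
    (hM : M = 1 + (p : R) • X) (m t : ℕ) :
    ∃ Z : Matrix (Fin n) (Fin n) R, M ^ (1 + p ^ m * t) = M + ((p : R) ^ m) • Z := by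
  let a : Polynomial R := 1 + (p : Polynomial R) * Polynomial.X
  have h1 : (p : Polynomial R) ∣ a - 1 := ⟨Polynomial.X, by simp [a]⟩
  have h2 := dvd_sub_pow_of_dvd_sub h1 m
  have h3 : ((p : Polynomial R) ^ m) ∣ a ^ (1 + p ^ m * t) - a := by
    have h4 : a ^ p ^ m - 1 ^ p ^ m ∣ (a ^ p ^ m) ^ t - (1 ^ p ^ m) ^ t := sub_dvd_pow_sub_pow _ _ _
    have h5 : a ^ (1 + p ^ m * t) - a = a * ((a ^ p ^ m) ^ t - (1 ^ p ^ m) ^ t) := by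
      rw [pow_add, pow_mul]; ring
    rw [h5]
    exact (((pow_dvd_pow _ (Nat.le_succ m)).trans h2).trans h4).mul_left _
  obtain ⟨z, hz⟩ := h3
  have ha : Polynomial.aeval X a = M := by
    rw [hM]; simp [a, Algebra.smul_def]
  refine ⟨Polynomial.aeval X z, ?_⟩
  have := congrArg (Polynomial.aeval X) hz
  rw [map_sub, map_pow, ha, map_mul, map_pow, map_natCast, sub_eq_iff_eq_add'] at this
  rw [this, Algebra.smul_def, map_pow, map_natCast]

lemma poly_limit {n p : ℕ} [Fact p.Prime] (F : MvPolynomial (glIdx n) ℚ) (h : GL (Fin n) ℚ)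
    (g : GL (Fin n) ℤ_[p])
    (hg : Matrix.GeneralLinearGroup.map (n := Fin n) (algebraMap ℤ_[p] ℚ_[p]) g
      = Matrix.GeneralLinearGroup.map (n := Fin n) (algebraMap ℚ ℚ_[p]) h)
    (hred : Matrix.GeneralLinearGroup.map (n := Fin n) (PadicInt.toZMod (p := p)) g = 1)
    (k : ℕ) (hk : k.Coprime p)
    (hF : ∀ j : ℕ, MvPolynomial.eval (gpt (h ^ (k * j))) F = 0) :
    MvPolynomial.eval (gpt h) F = 0 := by
  have hp : p.Prime := Fact.out
  obtain ⟨X, hX⟩ : ∃ X : Matrix (Fin n) (Fin n) ℤ_[p],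
      (g : Matrix (Fin n) (Fin n) ℤ_[p]) = 1 + (p : ℤ_[p]) • X := by
    have : ∀ i j, (p : ℤ_[p]) ∣ (g : Matrix (Fin n) (Fin n) ℤ_[p]) i j
        - (1 : Matrix (Fin n) (Fin n) ℤ_[p]) i j := by
      intro i j
      rw [← Ideal.mem_span_singleton, ← PadicInt.maximalIdeal_eq_span_p,
        ← PadicInt.ker_toZMod, RingHom.mem_ker, map_sub]
      have e := congrArg (fun u : GL (Fin n) (ZMod p) => (u : Matrix (Fin n) (Fin n) (ZMod p)) i j)
        hred
      simp only [Matrix.GeneralLinearGroup.map_apply] at e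
      rw [e]
      by_cases hij : i = j
      · subst hij; simp
      · simp [hij]
    choose X hX using this
    refine ⟨Matrix.of X, ?_⟩
    ext i j : 2
    have := hX i j
    simp only [Matrix.add_apply, Matrix.smul_apply, smul_eq_mul, Matrix.of_apply]
    rw [← this]; ring
  have hN : ∀ m : ℕ, ∃ j t : ℕ, k * j = 1 + p ^ m * t := by
    intro m
    rcases Nat.eq_zero_or_pos m with rfl | hm
    · rcases Nat.eq_zero_or_pos k with rfl | hk0
      · simp at hk; exact absurd hk hp.one_lt.ne'
      · exact ⟨1, k - 1, by simp; omega⟩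
    · obtain ⟨j, hj⟩ := Nat.exists_mul_mod_eq_one_of_coprime (hk.pow_right m)
        (Nat.one_lt_pow hm.ne' hp.one_lt)
      refine ⟨j, k * j / p ^ m, ?_⟩
      have := Nat.mod_add_div (k * j) (p ^ m)
      rw [hj.2] at this
      exact this.symm
  choose j t hjt using hN
  choose Z hZ using fun m => matrix_pow_congr _ X hX m (t m)
  -- entries of powers
  have hent : ∀ m a b, ((((h ^ (k * j m) : GL (Fin n) ℚ) : Matrix (Fin n) (Fin n) ℚ) a b : ℚ) : ℚ_[p])
      = (((h : Matrix (Fin n) (Fin n) ℚ) a b : ℚ) : ℚ_[p])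
        + (p : ℚ_[p]) ^ m * ((Z m a b : ℤ_[p]) : ℚ_[p]) := by
    intro m a b
    have e1 : ∀ N : ℕ, ((((h ^ N : GL (Fin n) ℚ) : Matrix (Fin n) (Fin n) ℚ) a b : ℚ) : ℚ_[p])
        = ((((g ^ N : GL (Fin n) ℤ_[p]) : Matrix (Fin n) (Fin n) ℤ_[p]) a b : ℤ_[p]) : ℚ_[p]) := by
      intro N
      have e2 : Matrix.GeneralLinearGroup.map (n := Fin n) (algebraMap ℤ_[p] ℚ_[p]) (g ^ N)
          = Matrix.GeneralLinearGroup.map (n := Fin n) (algebraMap ℚ ℚ_[p]) (h ^ N) := by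
        rw [map_pow, map_pow, hg]
      have e3 := congrArg (fun u : GL (Fin n) ℚ_[p] => (u : Matrix (Fin n) (Fin n) ℚ_[p]) a b) e2
      exact e3.symm
    have e4 := e1 1
    rw [pow_one, pow_one] at e4
    rw [e1, e4, hjt, Units.val_pow_eq_pow_val, hZ]
    simp
  -- convergence
  have hconv : ∀ a b, Filter.Tendsto (fun m =>
      ((((h ^ (k * j m) : GL (Fin n) ℚ) : Matrix (Fin n) (Fin n) ℚ) a b : ℚ) : ℚ_[p]))
      Filter.atTop (nhds (((h : Matrix (Fin n) (Fin n) ℚ) a b : ℚ) : ℚ_[p])) := by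
    intro a b
    simp_rw [hent]
    have : Filter.Tendsto (fun m => (p : ℚ_[p]) ^ m * ((Z m a b : ℤ_[p]) : ℚ_[p]))
        Filter.atTop (nhds 0) := by
      refine squeeze_zero_norm (a := fun m => ((p : ℝ)⁻¹) ^ m) (fun m => ?_) ?_
      · rw [norm_mul, norm_pow, Padic.norm_p]
        exact mul_le_of_le_one_right (by positivity) (PadicInt.norm_le_one _)
      · exact tendsto_pow_atTop_nhds_zero_of_lt_one (by positivity)
          (inv_lt_one_of_one_lt₀ (by exact_mod_cast hp.one_lt))
    simpa using this.const_add _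
  have hmap : ∀ u : GL (Fin n) ℚ, gpt (Matrix.GeneralLinearGroup.map (n := Fin n) (algebraMap ℚ ℚ_[p]) u)
      = fun s => algebraMap ℚ ℚ_[p] (gpt u s) := fun u => gpt_map _ u
  have hconvM : Filter.Tendsto (fun m =>
      ((Matrix.GeneralLinearGroup.map (n := Fin n) (algebraMap ℚ ℚ_[p]) (h ^ (k * j m)) :
        GL (Fin n) ℚ_[p]) : Matrix (Fin n) (Fin n) ℚ_[p])) Filter.atTop
      (nhds ((Matrix.GeneralLinearGroup.map (n := Fin n) (algebraMap ℚ ℚ_[p]) h :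
        GL (Fin n) ℚ_[p]) : Matrix (Fin n) (Fin n) ℚ_[p])) := by
    refine tendsto_pi_nhds.2 fun a => tendsto_pi_nhds.2 fun b => ?_
    exact hconv a b
  have hconvpt : Filter.Tendsto (fun m =>
      gpt (Matrix.GeneralLinearGroup.map (n := Fin n) (algebraMap ℚ ℚ_[p]) (h ^ (k * j m))))
      Filter.atTop
      (nhds (gpt (Matrix.GeneralLinearGroup.map (n := Fin n) (algebraMap ℚ ℚ_[p]) h))) := by
    refine tendsto_pi_nhds.2 fun s => ?_
    rcases s with ⟨a, b⟩ | u
    · exact hconv a b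
    · have hdet := ((continuous_id.matrix_det (R := ℚ_[p])).tendsto _).comp hconvM
      exact hdet.inv₀ (Matrix.GeneralLinearGroup.det_ne_zero _)
  have hlim := ((MvPolynomial.continuous_eval (MvPolynomial.map (algebraMap ℚ ℚ_[p]) F)).tendsto
    _).comp hconvpt
  have hz : ∀ u : GL (Fin n) ℚ, MvPolynomial.eval
      (gpt (Matrix.GeneralLinearGroup.map (n := Fin n) (algebraMap ℚ ℚ_[p]) u))
      (MvPolynomial.map (algebraMap ℚ ℚ_[p]) F)
      = algebraMap ℚ ℚ_[p] (MvPolynomial.eval (gpt u) F) := by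
    intro u
    rw [hmap, MvPolynomial.eval_map, MvPolynomial.eval₂_comp]
    rfl
  have hconst : ((fun x => MvPolynomial.eval x (MvPolynomial.map (algebraMap ℚ ℚ_[p]) F)) ∘ fun m =>
      gpt (Matrix.GeneralLinearGroup.map (n := Fin n) (algebraMap ℚ ℚ_[p]) (h ^ (k * j m))))
      = fun _ => 0 := by
    funext m
    simp only [Function.comp]
    rw [hz, hF, map_zero]
  rw [hconst] at hlim
  have := tendsto_nhds_unique hlim tendsto_const_nhds
  rw [hz] at this
  exact (map_eq_zero _).1 this

/-! ### Bounding finite indices -/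

lemma relIndex_eq_ncard_orbit {G : Type} [Group G] (K L : Subgroup G) :
    K.relIndex L = (MulAction.orbit L ((1 : G) : G ⧸ K)).ncard := by
  rw [← MulAction.index_stabilizer, Subgroup.relIndex]
  congr 1
  ext x
  rw [Subgroup.mem_subgroupOf, MulAction.mem_stabilizer_iff]
  change _ ↔ (((x : G) * 1 : G) : G ⧸ K) = ((1 : G) : G ⧸ K)
  rw [eq_comm, QuotientGroup.eq]
  simp

lemma relIndex_eq_of_cosets {G : Type} [Group G] (K A H : Subgroup G) (hAH : A ≤ H)
    (h : ∀ x ∈ H, ∃ a ∈ A, ∃ k ∈ K, x = a * k) : K.relIndex A = K.relIndex H := by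
  rw [relIndex_eq_ncard_orbit, relIndex_eq_ncard_orbit]
  congr 1
  ext y
  constructor
  · rintro ⟨a, rfl⟩
    exact ⟨⟨a, hAH a.2⟩, rfl⟩
  · rintro ⟨x, rfl⟩
    obtain ⟨a, ha, k, hk, hx⟩ := h x x.2
    refine ⟨⟨a, ha⟩, ?_⟩
    change ((a * 1 : G) : G ⧸ K) = (((x : G) * 1 : G) : G ⧸ K)
    rw [QuotientGroup.eq, hx]
    simpa using hk

lemma exists_integral {n : ℕ} (u : GL (Fin n) ℚ) : ∃ A : ℕ, ∀ p : ℕ, ∀ _ : Fact p.Prime, A < p →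
    ∃ g : GL (Fin n) ℤ_[p],
      Matrix.GeneralLinearGroup.map (n := Fin n) (algebraMap ℤ_[p] ℚ_[p]) g
      = Matrix.GeneralLinearGroup.map (n := Fin n) (algebraMap ℚ ℚ_[p]) u := by
  have key : ∀ M : Matrix (Fin n) (Fin n) ℚ, ∃ A : ℕ, ∀ p : ℕ, ∀ _ : Fact p.Prime, A < p →
      ∃ N : Matrix (Fin n) (Fin n) ℤ_[p],
        (algebraMap ℤ_[p] ℚ_[p]).mapMatrix N = (algebraMap ℚ ℚ_[p]).mapMatrix M := by
    intro M
    refine ⟨∑ i, ∑ j, (M i j).den, fun p _ hA => ?_⟩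
    have hle : ∀ i j, (M i j).den < p := fun i j =>
      lt_of_le_of_lt ((Finset.single_le_sum (f := fun j => (M i j).den) (fun _ _ => Nat.zero_le _)
        (Finset.mem_univ j)).trans (Finset.single_le_sum (f := fun i => ∑ j, (M i j).den)
          (fun _ _ => Nat.zero_le _) (Finset.mem_univ i))) hA
    refine ⟨Matrix.of fun i j => ⟨((M i j : ℚ) : ℚ_[p]), Padic.norm_rat_le_one fun hd =>
      absurd (Nat.le_of_dvd (M i j).den_pos hd) (not_le.2 (hle i j))⟩, ?_⟩
    ext i j : 2
    rfl
  obtain ⟨A, hA⟩ := key (u : Matrix (Fin n) (Fin n) ℚ)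
  obtain ⟨B, hB⟩ := key ((u⁻¹ : GL (Fin n) ℚ) : Matrix (Fin n) (Fin n) ℚ)
  refine ⟨max A B, fun p hp hlt => ?_⟩
  obtain ⟨N, hN⟩ := hA p hp (lt_of_le_of_lt (le_max_left _ _) hlt)
  obtain ⟨N', hN'⟩ := hB p hp (lt_of_le_of_lt (le_max_right _ _) hlt)
  have hinj : Function.Injective ((algebraMap ℤ_[p] ℚ_[p]).mapMatrix (m := Fin n)) := by
    intro X Y hXY
    ext i j : 2
    have := congrFun (congrFun hXY i) j
    exact Subtype.ext this
  have h1 : N * N' = 1 := by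
    apply hinj
    rw [map_mul, hN, hN', ← map_mul, ← Units.val_mul, mul_inv_cancel, Units.val_one, map_one,
      map_one]
  have h2 : N' * N = 1 := by
    apply hinj
    rw [map_mul, hN, hN', ← map_mul, ← Units.val_mul, inv_mul_cancel, Units.val_one, map_one,
      map_one]
  refine ⟨⟨N, N', h1, h2⟩, ?_⟩
  apply Units.ext
  exact hN

lemma mem_of_closed {n p : ℕ} [Fact p.Prime] (K : Subgroup (GQ n)) (hK : IsClosed (K : Set (GQ n)))
    (h : GQ n) (g : GL (Fin n) ℤ_[p])
    (hg : Matrix.GeneralLinearGroup.map (n := Fin n) (algebraMap ℤ_[p] ℚ_[p]) g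
      = Matrix.GeneralLinearGroup.map (n := Fin n) (algebraMap ℚ ℚ_[p]) h)
    (hred : Matrix.GeneralLinearGroup.map (n := Fin n) (PadicInt.toZMod (p := p)) g = 1)
    (k : ℕ) (hk : k.Coprime p) (hkK : h ^ k ∈ K) : h ∈ K := by
  have : h ∈ closure (K : Set (GQ n)) := by
    rw [mem_closure_GQ]
    intro f hf
    rw [← Module.forall_dual_apply_eq_zero_iff ℚ]
    intro lam
    let F : MvPolynomial (glIdx n) ℚ :=
      ∑ m ∈ f.support, MvPolynomial.monomial m (lam (f.coeff m))
    have hFe : ∀ u : GQ n, MvPolynomial.eval (gpt (K := ℚ) u) F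
        = lam (MvPolynomial.eval (qpt u) f) := by
      intro u
      rw [MvPolynomial.eval_eq (qpt u) f, qpt_eq]
      simp only [F, map_sum, MvPolynomial.eval_monomial]
      refine Finset.sum_congr rfl fun m _ => ?_
      have : MvPolynomial.coeff m f * ∏ i ∈ m.support, (algebraMap ℚ Qbar (gpt (K := ℚ) u i)) ^ m i
          = (∏ i ∈ m.support, (gpt (K := ℚ) u i) ^ m i) • MvPolynomial.coeff m f := by
        rw [Algebra.smul_def, map_prod, mul_comm]
        simp only [map_pow]
      rw [this, map_smul, smul_eq_mul, mul_comm, Finsupp.prod]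
    rw [← hFe]
    refine poly_limit F h g hg hred k hk fun j => ?_
    refine (hFe (h ^ (k * j))).trans ?_
    rw [hf _ (by rw [pow_mul]; exact K.pow_mem hkK j), map_zero]
  rwa [hK.closure_eq] at this

lemma relIndex_dvd {n : ℕ} (K H : Subgroup (GQ n)) (hKH : K ≤ H)
    (hK : IsClosed (K : Set (GQ n))) (h0 : K.relIndex H ≠ 0) :
    ∃ A : ℕ, ∀ p : ℕ, p.Prime → A < p → K.relIndex H ∣ ∏ i : Fin n, (p ^ n - p ^ (i : ℕ)) := by
  have hfin : Finite (H ⧸ K.subgroupOf H) := (Subgroup.fintypeOfIndexNeZero h0).finite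
  choose A hA using fun u : GL (Fin n) ℚ => exists_integral u
  have := Fintype.ofFinite (H ⧸ K.subgroupOf H)
  refine ⟨max (K.relIndex H) (∑ x : H ⧸ K.subgroupOf H, A (x.out : GQ n)), fun p hp hlt => ?_⟩
  haveI : Fact p.Prime := ⟨hp⟩
  let ι : GL (Fin n) ℤ_[p] →* GL (Fin n) ℚ_[p] :=
    Matrix.GeneralLinearGroup.map (n := Fin n) (algebraMap ℤ_[p] ℚ_[p])
  let jj : GQ n →* GL (Fin n) ℚ_[p] :=
    Matrix.GeneralLinearGroup.map (n := Fin n) (algebraMap ℚ ℚ_[p])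
  let red : GL (Fin n) ℤ_[p] →* GL (Fin n) (ZMod p) :=
    Matrix.GeneralLinearGroup.map (n := Fin n) (PadicInt.toZMod (p := p))
  have hjj : Function.Injective jj := by
    intro x y hxy
    apply Units.ext
    ext a b
    have := congrArg (fun u : GL (Fin n) ℚ_[p] => (u : Matrix (Fin n) (Fin n) ℚ_[p]) a b) hxy
    exact (algebraMap ℚ ℚ_[p]).injective this
  let AA : Subgroup (GL (Fin n) ℤ_[p]) := (H.map jj).comap ι
  let BB : Subgroup (GL (Fin n) ℤ_[p]) := (K.map jj).comap ι
  have h1 : BB.relIndex AA = K.relIndex H := by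
    rw [Subgroup.relIndex_comap, relIndex_eq_of_cosets (K.map jj) (AA.map ι) (H.map jj)
      (Subgroup.map_comap_le _ _), Subgroup.relIndex_map_map_of_injective _ _ hjj]
    rintro _ ⟨x, hx, rfl⟩
    let q : H ⧸ K.subgroupOf H := ((⟨x, hx⟩ : H) : H ⧸ K.subgroupOf H)
    have hq : A (q.out : GQ n) < p := by
      refine lt_of_le_of_lt ?_ (lt_of_le_of_lt (le_max_right _ _) hlt)
      exact Finset.single_le_sum (f := fun x : H ⧸ K.subgroupOf H => A (x.out : GQ n))
        (fun _ _ => Nat.zero_le _) (Finset.mem_univ q)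
    obtain ⟨g, hg⟩ := hA (q.out : GQ n) p ⟨hp⟩ hq
    have hg' : ι g = jj (q.out : GQ n) := hg
    refine ⟨ι g, ⟨g, ?_, rfl⟩, jj ((q.out : GQ n)⁻¹ * x), ⟨_, ?_, rfl⟩, ?_⟩
    · exact ⟨(q.out : GQ n), q.out.2, hg'.symm⟩
    · have : ((q.out : H) : H ⧸ K.subgroupOf H) = ((⟨x, hx⟩ : H) : H ⧸ K.subgroupOf H) :=
        QuotientGroup.out_eq' q
      rw [QuotientGroup.eq, Subgroup.mem_subgroupOf] at this
      exact this
    · rw [hg', ← map_mul, mul_inv_cancel_left]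
  have h2 : red.ker ⊓ AA ≤ BB := by
    rintro g ⟨hg, h, hh, hgh⟩
    obtain ⟨k, hk0, hkd, hkK⟩ := Subgroup.exists_pow_mem_of_relIndex_ne_zero h0 hh
    have hkp : k < p := lt_of_le_of_lt hkd (lt_of_le_of_lt (le_max_left _ _) hlt)
    refine ⟨h, mem_of_closed K hK h g hgh.symm hg k ?_ hkK.1, hgh⟩
    exact Nat.Coprime.symm ((Nat.Prime.coprime_iff_not_dvd hp).2 fun hd =>
      absurd (Nat.le_of_dvd hk0 hd) (not_le.2 hkp))
  have h3 : BB.relIndex AA ∣ Nat.card (GL (Fin n) (ZMod p)) := by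
    have e1 := Subgroup.relIndex_dvd_of_le_left AA h2
    rw [Subgroup.inf_relIndex_right, Subgroup.relIndex_ker] at e1
    exact e1.trans (Subgroup.card_subgroup_dvd_card _)
  rw [h1, Matrix.card_GL_field, ZMod.card] at h3
  exact h3

lemma relIndex_le {n : ℕ} (K H : Subgroup (GQ n)) (hKH : K ≤ H)
    (hK : IsClosed (K : Set (GQ n))) (h0 : K.relIndex H ≠ 0) :
    K.relIndex H ≤ 2 ^ (3 * (n * n)) := by
  obtain ⟨A, hA⟩ := relIndex_dvd K H hKH hK h0
  exact arith_bound n _ A h0 hA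

/-! ### Reduction of the statement to `GL_n(ℚ)` -/

lemma exists_incl {n : ℕ} (g : GL (Fin n) Qbar) (hg : HasRatEntries g) : ∃ h : GQ n, incl n h = g := by
  choose M hM using hg
  have hMm : (algebraMap ℚ Qbar).mapMatrix (Matrix.of M)
      = (g : Matrix (Fin n) (Fin n) Qbar) := by
    ext i j
    exact (hM i j).symm
  have hdet : (Matrix.of M).det ≠ 0 := by
    intro h0
    have h1 := RingHom.map_det (algebraMap ℚ Qbar) (Matrix.of M)
    rw [hMm, h0, map_zero] at h1
    exact Matrix.GeneralLinearGroup.det_ne_zero g h1.symm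
  refine ⟨(Matrix.GeneralLinearGroup.mkOfDetNeZero (Matrix.of M) hdet : GL (Fin n) ℚ), ?_⟩
  apply Units.ext
  exact hMm

lemma image_closure_eq {n : ℕ} (S : Set (GL (Fin n) Qbar)) (hS : ∀ g ∈ S, HasRatEntries g) :
    glPoint '' (Subgroup.closure S : Set (GL (Fin n) Qbar))
      = qpt '' (((Subgroup.closure S).comap (incl n) : Subgroup (GQ n)) : Set (GQ n)) := by
  have hle : Subgroup.closure S ≤ (incl n).range := by
    rw [Subgroup.closure_le]
    intro g hg
    exact exists_incl g (hS g hg)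
  ext y
  constructor
  · rintro ⟨g, hg, rfl⟩
    obtain ⟨h, rfl⟩ := hle hg
    exact ⟨h, hg, rfl⟩
  · rintro ⟨h, hh, rfl⟩
    exact ⟨incl n h, hh, rfl⟩

lemma zcl_le_iff {n : ℕ} (H L : Subgroup (GQ n)) :
    zcl H ≤ zcl L ↔ zariskiClosure (qpt '' (H : Set (GQ n))) ⊆ zariskiClosure (qpt '' (L : Set (GQ n))) := by
  constructor
  · intro h a ha f hf
    refine ha f ?_
    rintro _ ⟨x, hx, rfl⟩
    have hx' : x ∈ closure (L : Set (GQ n)) := h (subset_closure (s := (H : Set (GQ n))) hx)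
    rw [mem_closure_GQ] at hx'
    exact hx' f fun y hy => hf _ ⟨y, hy, rfl⟩
  · intro h x hx
    have hx' : x ∈ closure (H : Set (GQ n)) := hx
    change x ∈ closure (L : Set (GQ n))
    rw [mem_closure_GQ] at hx' ⊢
    intro f hf
    have hxz : qpt x ∈ zariskiClosure (qpt '' (H : Set (GQ n))) := fun f hf =>
      hx' f fun y hy => hf _ ⟨y, hy, rfl⟩
    refine h hxz f ?_
    rintro _ ⟨y, hy, rfl⟩
    exact hf y hy

/-- **Chains of algebraic groups over ℚ**: there is an absolute constant `c` such that
for all `n ≥ 1`, any strictly increasing chain `G₁ ⊊ ⋯ ⊊ G_ℓ` of Zariski closures of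
groups generated by sets of rational matrices in `GL_n(ℚ̄)` has length
`ℓ ≤ exp⁴(n^c)`. -/
theorem stmt11 :
    ∃ c : ℕ, ∀ n : ℕ, 1 ≤ n → ∀ ℓ : ℕ, ∀ S : Fin ℓ → Set (GL (Fin n) Qbar),
      (∀ i, ∀ g ∈ S i, HasRatEntries g) →
      (StrictMono fun i : Fin ℓ =>
        zariskiClosure (glPoint '' (Subgroup.closure (S i) : Set (GL (Fin n) Qbar)))) →
      ℓ ≤ iexp 4 (n ^ c) := by
  refine ⟨1, fun n hn ℓ S hS hmono => ?_⟩
  refine le_trans ?_ (final_arith n hn)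
  let H : Fin ℓ → Subgroup (GQ n) := fun i => (Subgroup.closure (S i)).comap (incl n)
  refine chain_bound continuous_mul_left_GQ (n * n + 1) (3 * (n * n)) (dim_GQ n)
    (fun K L hKL hK _ h0 => relIndex_le K L hKL hK h0) (fun i => zcl (H i)) ?_
    (fun i => isClosed_closure)
  intro i j hij
  have h := hmono hij
  simp only [image_closure_eq (S i) (hS i), image_closure_eq (S j) (hS j)] at h
  rw [lt_iff_le_not_ge, zcl_le_iff, zcl_le_iff]
  exact ⟨h.1, h.2⟩
end
end

section
/- There exists an absolute constant c ∈ ℕ such that the following holds for all n ≥ 1. Let g ∈ GL_n(ℚ) have entries of height at most h, where h ≥ 2, and let λ₁,…,λ_n ∈ ℚ̄ be the eigenvalues of g (the roots, with multiplicity, of its characteristic polynomial); note each λᵢ is nonzero. Then the subgroup L := {(k₁,…,k_n) ∈ ℤⁿ : λ₁^{k₁}⋯λ_n^{k_n} = 1} of ℤⁿ (with integer, possibly negative, exponents) is generated, as an additive subgroup of ℤⁿ, by a collection of vectors all of whose entries have absolute value at most (c·n⁷·n!·log₂ h)^n. -/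
noncomputable section

open scoped MatrixGroups

section LatA
variable {n : ℕ} (q : (Fin n → ℤ) → ℝ)

lemma q_nonneg_aux (hadd : ∀ x y, q (x + y) ≤ q x + q y)
    (hsmul : ∀ (k : ℤ) x, q (k • x) = |(k : ℝ)| * q x) (x : Fin n → ℤ) : 0 ≤ q x := by
  have h0 : q 0 = 0 := by simpa using hsmul 0 0
  have h1 : q (-x) = q x := by simpa using hsmul (-1) x
  have := hadd x (-x)
  rw [add_neg_cancel, h0, h1] at this
  linarith

lemma q_sum_aux (hadd : ∀ x y, q (x + y) ≤ q x + q y)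
    (hsmul : ∀ (k : ℤ) x, q (k • x) = |(k : ℝ)| * q x) {ι : Type*} (s : Finset ι)
    (f : ι → Fin n → ℤ) : q (∑ i ∈ s, f i) ≤ ∑ i ∈ s, q (f i) := by
  classical
  induction s using Finset.induction_on with
  | empty => simpa using (hsmul 0 0).le
  | insert a s ha ih =>
    rw [Finset.sum_insert ha, Finset.sum_insert ha]
    exact (hadd _ _).trans (by linarith)

lemma q_le_aux (hadd : ∀ x y, q (x + y) ≤ q x + q y)
    (hsmul : ∀ (k : ℤ) x, q (k • x) = |(k : ℝ)| * q x) (x : Fin n → ℤ) :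
    q x ≤ ∑ i, |(x i : ℝ)| * q (Pi.single i 1) := by
  have hx : x = ∑ i, x i • (Pi.single i 1 : Fin n → ℤ) := by
    conv_lhs => rw [← Finset.univ_sum_single x]
    refine Finset.sum_congr rfl fun i _ => ?_
    rw [← Pi.single_smul]; simp
  conv_lhs => rw [hx]
  refine (q_sum_aux q hadd hsmul _ _).trans (le_of_eq ?_)
  exact Finset.sum_congr rfl fun i _ => hsmul _ _

lemma smallvec (hadd : ∀ x y, q (x + y) ≤ q x + q y)
    (hsmul : ∀ (k : ℤ) x, q (k • x) = |(k : ℝ)| * q x) (η H : ℝ)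
    (hη : ∀ x, q x < η → q x = 0) (hH : ∑ i, q (Pi.single i 1) ≤ H)
    (Q : ℕ) (hQ : 1 ≤ Q) (hQH : H < η * Q) (v : Fin n → ℤ) (hv : q v = 0) (hv0 : v ≠ 0) :
    ∃ u : Fin n → ℤ, q u = 0 ∧ u ≠ 0 ∧ (∀ i, v i = 0 → u i = 0) ∧
      ∀ i, |u i| ≤ (Q : ℤ) ^ (n - 1) + 1 := by
  classical
  have hne : Nonempty (Fin n) := by
    by_contra h
    rw [not_nonempty_iff] at h
    exact hv0 (Subsingleton.elim _ _)
  obtain ⟨m, hm⟩ := Finite.exists_max (fun i => |v i|)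
  have hVne : v m ≠ 0 := by
    intro h
    apply hv0
    funext i
    have := hm i
    rw [h, abs_zero] at this
    exact abs_nonpos_iff.mp this
  have hVpos : 0 < |v m| := abs_pos.mpr hVne
  have hQ0 : (0 : ℤ) < Q := by exact_mod_cast hQ
  -- pigeonhole
  let F : Fin (Q ^ (n - 1) + 1) → ({i : Fin n // i ≠ m} → Fin Q) := fun t i =>
    ⟨((Q * ((t : ℤ) * v i % v m)) / |v m|).toNat, by
      have h1 : 0 ≤ (t : ℤ) * v i % v m := Int.emod_nonneg _ hVne
      have h2 : (t : ℤ) * v i % v m < |v m| := Int.emod_lt_abs _ hVne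
      have h3 : (Q * ((t : ℤ) * v i % v m)) / |v m| < Q := by
        apply Int.ediv_lt_of_lt_mul hVpos
        exact mul_lt_mul_of_pos_left h2 hQ0
      omega⟩
  have hcard : Fintype.card ({i : Fin n // i ≠ m} → Fin Q) <
      Fintype.card (Fin (Q ^ (n - 1) + 1)) := by
    simp
  obtain ⟨t₁, t₂, hne12, hF⟩ := Fintype.exists_ne_map_eq_of_card_lt F hcard
  wlog hlt : t₁ < t₂ generalizing t₁ t₂ with Hw
  · exact Hw t₂ t₁ hne12.symm hF.symm (lt_of_le_of_ne (not_lt.mp hlt) hne12.symm)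
  have key : ∀ i, (Q : ℤ) * |(t₁ : ℤ) * v i % v m - (t₂ : ℤ) * v i % v m| ≤ |v m| := by
    intro i
    by_cases him : i = m
    · subst him; simp
    · have := congrFun hF ⟨i, him⟩
      simp only [F, Fin.mk.injEq] at this
      have p1 : 0 ≤ (Q * ((t₁ : ℤ) * v i % v m)) / |v m| :=
        Int.ediv_nonneg (mul_nonneg hQ0.le (Int.emod_nonneg _ hVne)) hVpos.le
      have p2 : 0 ≤ (Q * ((t₂ : ℤ) * v i % v m)) / |v m| :=
        Int.ediv_nonneg (mul_nonneg hQ0.le (Int.emod_nonneg _ hVne)) hVpos.le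
      have e : (Q * ((t₁ : ℤ) * v i % v m)) / |v m| = (Q * ((t₂ : ℤ) * v i % v m)) / |v m| := by
        omega
      have a1 := Int.mul_ediv_add_emod (Q * ((t₁ : ℤ) * v i % v m)) |v m|
      have a2 := Int.mul_ediv_add_emod (Q * ((t₂ : ℤ) * v i % v m)) |v m|
      have b1 := Int.emod_nonneg (Q * ((t₁ : ℤ) * v i % v m)) hVpos.ne'
      have b2 := Int.emod_nonneg (Q * ((t₂ : ℤ) * v i % v m)) hVpos.ne'
      have c1 := Int.emod_lt_of_pos (Q * ((t₁ : ℤ) * v i % v m)) hVpos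
      have c2 := Int.emod_lt_of_pos (Q * ((t₂ : ℤ) * v i % v m)) hVpos
      rw [e] at a1
      rw [← abs_of_pos hQ0, ← abs_mul, mul_sub, abs_le]
      constructor <;> linarith
  set t : ℤ := (t₂ : ℤ) - t₁ with ht
  have htpos : 0 < t := by
    have : (t₁ : ℕ) < t₂ := hlt
    omega
  have htle : t ≤ (Q : ℤ) ^ (n - 1) := by
    have : (t₂ : ℕ) < Q ^ (n - 1) + 1 := t₂.2
    have h' : (t₂ : ℤ) ≤ (Q : ℤ) ^ (n - 1) := by
      exact_mod_cast Nat.lt_succ_iff.mp this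
    omega
  let u : Fin n → ℤ := fun i => ((t₂ : ℤ) * v i) / v m - ((t₁ : ℤ) * v i) / v m
  have hu : ∀ i, v m * u i - t * v i =
      (t₁ : ℤ) * v i % v m - (t₂ : ℤ) * v i % v m := by
    intro i
    have a1 := Int.mul_ediv_add_emod ((t₁ : ℤ) * v i) (v m)
    have a2 := Int.mul_ediv_add_emod ((t₂ : ℤ) * v i) (v m)
    simp only [u, ht]
    linear_combination a2 - a1
  have hum : u m = t := by
    simp only [u]
    rw [Int.mul_ediv_cancel _ hVne, Int.mul_ediv_cancel _ hVne]
  have hq0 : 0 ≤ H := by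
    refine le_trans (Finset.sum_nonneg fun i _ => q_nonneg_aux q hadd hsmul _) hH
  have hVR : (0 : ℝ) < |(v m : ℝ)| := by exact_mod_cast hVpos
  have hQR : (0 : ℝ) < Q := by exact_mod_cast hQ
  refine ⟨u, hη u ?_, ?_, ?_, ?_⟩
  · have h1 : q (v m • u) ≤ |(v m : ℝ)| / Q * H := by
      have e : v m • u = (v m • u - t • v) + t • v := by abel
      rw [e]
      refine (hadd _ _).trans ?_
      rw [hsmul t v, hv, mul_zero, add_zero]
      refine (q_le_aux q hadd hsmul _).trans ?_
      refine le_trans ?_ (mul_le_mul_of_nonneg_left hH (by positivity))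
      rw [Finset.mul_sum]
      refine Finset.sum_le_sum fun i _ => ?_
      refine mul_le_mul_of_nonneg_right ?_ (q_nonneg_aux q hadd hsmul _)
      have k := key i
      rw [← hu i] at k
      have k' : (Q : ℝ) * |((v m * u i - t * v i : ℤ) : ℝ)| ≤ |(v m : ℝ)| := by exact_mod_cast k
      rw [le_div_iff₀ hQR, mul_comm]
      simpa using k'
    rw [hsmul] at h1
    have h2 : |(v m : ℝ)| / Q * H < |(v m : ℝ)| * η := by
      rw [div_mul_eq_mul_div, div_lt_iff₀ hQR, mul_assoc]
      exact mul_lt_mul_of_pos_left hQH hVR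
    exact lt_of_mul_lt_mul_left (lt_of_le_of_lt h1 h2) hVR.le
  · intro h
    rw [h] at hum
    simp at hum
    omega
  · intro i hi
    simp [u, hi]
  · intro i
    have h1 : |v m| * |u i| ≤ |v m| * (t + 1) := by
      rw [← abs_mul]
      have e : v m * u i = (v m * u i - t * v i) + t * v i := by ring
      rw [e]
      refine (abs_add_le _ _).trans ?_
      have k := key i
      rw [← hu i] at k
      have k2 : |v m * u i - t * v i| ≤ |v m| :=
        le_trans (le_mul_of_one_le_left (abs_nonneg _) (by exact_mod_cast hQ)) k
      have k3 : |t * v i| ≤ t * |v m| := by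
        rw [abs_mul, abs_of_pos htpos]
        exact mul_le_mul_of_nonneg_left (hm i) htpos.le
      linarith
    have h2 := le_of_mul_le_mul_left h1 hVpos
    linarith

lemma genlem (hadd : ∀ x y, q (x + y) ≤ q x + q y)
    (hsmul : ∀ (k : ℤ) x, q (k • x) = |(k : ℝ)| * q x) (η H : ℝ)
    (hη : ∀ x, q x < η → q x = 0) (hH : ∑ i, q (Pi.single i 1) ≤ H)
    (Q : ℕ) (hQ : 1 ≤ Q) (hQH : H < η * Q)
    (L : AddSubgroup (Fin n → ℤ)) (hL : ∀ x ∈ L, q x = 0) (W : ℕ) (hW : 1 ≤ W)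
    (hWL : ∀ x, q x = 0 → (W : ℤ) • x ∈ L) (w : Fin n → ℤ) (hw : w ∈ L) :
    w ∈ AddSubgroup.closure {v : Fin n → ℤ | v ∈ L ∧
      ∀ i, |v i| ≤ (n : ℤ) * W * ((Q : ℤ) ^ (n - 1) + 1)} := by
  classical
  set B : ℤ := (Q : ℤ) ^ (n - 1) + 1 with hB
  have hB0 : 0 ≤ B := by positivity
  -- q-zero vectors form a subgroup
  have hq0add : ∀ x y, q x = 0 → q y = 0 → q (x + y) = 0 := fun x y hx hy =>
    le_antisymm ((hadd x y).trans (by rw [hx, hy, add_zero])) (q_nonneg_aux q hadd hsmul _)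
  have hq0smul : ∀ (k : ℤ) x, q x = 0 → q (k • x) = 0 := fun k x hx => by
    rw [hsmul, hx, mul_zero]
  have hq0sum : ∀ (s : Finset (Fin n)) (f : Fin n → Fin n → ℤ), (∀ j ∈ s, q (f j) = 0) →
      q (∑ j ∈ s, f j) = 0 := fun s f hf =>
    le_antisymm ((q_sum_aux q hadd hsmul s f).trans (by rw [Finset.sum_eq_zero hf]))
      (q_nonneg_aux q hadd hsmul _)
  let Ind : Finset (Fin n) → Prop := fun I => ∀ v, q v = 0 → (∀ i, i ∉ I → v i = 0) → v = 0
  have h0 : Ind ∅ := fun v _ h => funext fun i => h i (by simp)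
  obtain ⟨I, -, hI⟩ := Finite.exists_le_maximal (p := Ind) h0
  have hex : ∀ j, ∃ x : Fin n → ℤ, j ∉ I → (q x = 0 ∧ x j ≠ 0 ∧
      (∀ i, i ∉ I → i ≠ j → x i = 0) ∧ ∀ i, |x i| ≤ B) := by
    intro j
    by_cases hj : j ∈ I
    · exact ⟨0, fun h => absurd hj h⟩
    have hnot : ¬ Ind (insert j I) := fun h =>
      hj (hI.2 h (Finset.subset_insert j I) (Finset.mem_insert_self j I))
    simp only [Ind, not_forall] at hnot
    obtain ⟨v, hv, hvs, hv0⟩ := hnot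
    obtain ⟨u, hu, hu0, hus, hub⟩ := smallvec q hadd hsmul η H hη hH Q hQ hQH v hv hv0
    refine ⟨u, fun _ => ⟨hu, ?_, ?_, hub⟩⟩
    · intro hj0
      apply hu0
      apply hI.1 u hu
      intro i hi
      by_cases hij : i = j
      · rw [hij, hj0]
      · exact hus i (hvs i (by simp [hij, hi]))
    · intro i hi hij
      exact hus i (hvs i (by simp [hij, hi]))
  choose x hx using hex
  let z : Fin n → Fin n → ℤ := fun j => (W : ℤ) • x j
  have hW0 : (W : ℤ) ≠ 0 := by omega
  have hWpos : (0 : ℤ) < W := by omega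
  have hzL : ∀ j, j ∉ I → z j ∈ L := fun j hj => hWL _ (hx j hj).1
  have hzj : ∀ j, j ∉ I → z j j ≠ 0 := fun j hj => mul_ne_zero hW0 (hx j hj).2.1
  have hzs : ∀ j, j ∉ I → ∀ i, i ∉ I → i ≠ j → z j i = 0 := fun j hj i hi hij => by
    simp [z, (hx j hj).2.2.1 i hi hij]
  have hzb : ∀ j, j ∉ I → ∀ i, |z j i| ≤ W * B := fun j hj i => by
    simp only [z, Pi.smul_apply, smul_eq_mul, abs_mul, Nat.abs_cast]
    exact mul_le_mul_of_nonneg_left ((hx j hj).2.2.2 i) hWpos.le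
  have hn1 : (1 : ℤ) ≤ n ∨ n = 0 := by omega
  rcases hn1 with hn1 | hn0
  swap
  · subst hn0
    have : w = 0 := Subsingleton.elim _ _
    rw [this]; exact zero_mem _
  have hWB : (W : ℤ) * B ≤ n * W * B := by
    rw [mul_assoc]; exact le_mul_of_one_le_left (by positivity) hn1
  have hzT : ∀ j, j ∉ I → z j ∈ AddSubgroup.closure {v : Fin n → ℤ | v ∈ L ∧
      ∀ i, |v i| ≤ (n : ℤ) * W * B} := fun j hj =>
    AddSubgroup.subset_closure ⟨hzL j hj, fun i => (hzb j hj i).trans hWB⟩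
  set s : Fin n → ℤ := ∑ j ∈ Iᶜ, (w j / z j j) • z j with hs
  have hsT : s ∈ AddSubgroup.closure {v : Fin n → ℤ | v ∈ L ∧
      ∀ i, |v i| ≤ (n : ℤ) * W * B} :=
    AddSubgroup.sum_mem _ fun j hj =>
      AddSubgroup.zsmul_mem _ (hzT j (by simpa using hj)) _
  have hsL : s ∈ L := AddSubgroup.sum_mem _ fun j hj =>
      AddSubgroup.zsmul_mem _ (hzL j (by simpa using hj)) _
  set y := w - s with hy
  have hyL : y ∈ L := sub_mem hw hsL
  have hyj : ∀ j, j ∉ I → |y j| ≤ |z j j| := by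
    intro j hj
    have e : s j = (w j / z j j) * z j j := by
      rw [hs, Finset.sum_apply, Finset.sum_eq_single j]
      · simp
      · intro b hb hbj
        simp [hzs b (by simpa using hb) j hj hbj.symm]
      · intro h; simp at h; exact absurd h hj
    have e2 : y j = w j % z j j := by
      rw [hy, Pi.sub_apply, e, Int.emod_def, mul_comm]
    rw [e2, abs_of_nonneg (Int.emod_nonneg _ (hzj j hj))]
    exact (Int.emod_lt_abs _ (hzj j hj)).le
  have hyT : y ∈ {v : Fin n → ℤ | v ∈ L ∧ ∀ i, |v i| ≤ (n : ℤ) * W * B} := by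
    refine ⟨hyL, fun i => ?_⟩
    by_cases hi : i ∈ I
    · let P : ℤ := ∏ j ∈ Iᶜ, z j j
      have hP : P ≠ 0 := Finset.prod_ne_zero_iff.mpr fun j hj => hzj j (by simpa using hj)
      let R : Fin n → ℤ := fun j => ∏ k ∈ Iᶜ.erase j, z k k
      have hR : ∀ j ∈ Iᶜ, R j * z j j = P := fun j hj =>
        Finset.prod_erase_mul _ _ hj
      have hz : P • y - ∑ j ∈ Iᶜ, (R j * y j) • z j = 0 := by
        apply hI.1
        · rw [sub_eq_add_neg]
          apply hq0add _ _ (hq0smul _ _ (hL y hyL))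
          rw [← neg_one_zsmul]
          apply hq0smul
          apply hq0sum
          intro j hj
          exact hq0smul _ _ (hL _ (hzL j (by simpa using hj)))
        · intro k hk
          rw [Pi.sub_apply, Finset.sum_apply, Finset.sum_eq_single k]
          · simp only [Pi.smul_apply, smul_eq_mul]
            rw [← hR k (by simpa using hk)]; ring
          · intro b hb hbk
            simp [hzs b (by simpa using hb) k hk hbk.symm]
          · intro h; simp at h; exact absurd h hk
      have hzi : P * y i = ∑ j ∈ Iᶜ, R j * y j * z j i := by
        have := congrFun hz i
        simp only [Pi.sub_apply, Finset.sum_apply, Pi.smul_apply, smul_eq_mul,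
          Pi.zero_apply] at this
        linarith
      have hPp : 0 < |P| := abs_pos.mpr hP
      have : |P| * |y i| ≤ |P| * (n * W * B) := by
        rw [← abs_mul, hzi]
        refine (Finset.abs_sum_le_sum_abs _ _).trans ?_
        have : ∀ j ∈ Iᶜ, |R j * y j * z j i| ≤ |P| * (W * B) := by
          intro j hj
          have hj' : j ∉ I := by simpa using hj
          rw [abs_mul, abs_mul]
          apply mul_le_mul _ (hzb j hj' i) (abs_nonneg _) (abs_nonneg _)
          rw [← hR j hj, abs_mul]
          exact mul_le_mul_of_nonneg_left (hyj j hj') (abs_nonneg _)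
        refine (Finset.sum_le_sum this).trans ?_
        rw [Finset.sum_const, nsmul_eq_mul]
        have hc : ((Iᶜ.card : ℕ) : ℤ) ≤ n := by
          have := Finset.card_le_univ (Iᶜ : Finset (Fin n))
          rw [Fintype.card_fin] at this
          exact_mod_cast this
        calc ((Iᶜ.card : ℕ) : ℤ) * (|P| * (W * B)) ≤ n * (|P| * (W * B)) :=
              mul_le_mul_of_nonneg_right hc (by positivity)
          _ = _ := by ring
      exact le_of_mul_le_mul_left this hPp
    · exact (hyj i hi).trans ((hzb i hi i).trans hWB)
  have : w = y + s := by rw [hy]; abel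
  rw [this]
  exact add_mem (AddSubgroup.subset_closure hyT) hsT
end LatA

section OmegaB

lemma prod_pred_aux (S : Finset ℕ) : (∀ p ∈ S, 2 ≤ p) →
    ∏ p ∈ S, p ≤ (∏ p ∈ S, (p - 1)) * (S.card + 1) := by
  classical
  induction S using Finset.induction_on_max with
  | empty => simp
  | insert a S hmax ih =>
    intro h
    have ha : a ∉ S := fun h => lt_irrefl _ (hmax a h)
    rw [Finset.prod_insert ha, Finset.prod_insert ha, Finset.card_insert_of_notMem ha]
    have h1 := ih (fun p hp => h p (Finset.mem_insert_of_mem hp))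
    have hc : S.card + 2 ≤ a := by
      have hsub : S ⊆ Finset.Ico 2 a := fun p hp => by
        rw [Finset.mem_Ico]; exact ⟨h p (Finset.mem_insert_of_mem hp), hmax p hp⟩
      have := Finset.card_le_card hsub
      rw [Nat.card_Ico] at this
      have := h a (Finset.mem_insert_self _ _)
      omega
    obtain ⟨b, rfl⟩ : ∃ b, a = b + 1 := ⟨a - 1, by omega⟩
    simp only [Nat.add_sub_cancel]
    calc (b + 1) * ∏ p ∈ S, p ≤ (b + 1) * ((∏ p ∈ S, (p - 1)) * (S.card + 1)) :=
          Nat.mul_le_mul_left _ h1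
      _ = (∏ p ∈ S, (p - 1)) * ((b + 1) * (S.card + 1)) := by ring
      _ ≤ (∏ p ∈ S, (p - 1)) * (b * (S.card + 1 + 1)) := by
          apply Nat.mul_le_mul_left
          nlinarith
      _ = _ := by ring

lemma le_totient_mul (m : ℕ) : m ≤ m.totient * (m.primeFactors.card + 1) := by
  have h := Nat.totient_mul_prod_primeFactors m
  have h2 := prod_pred_aux m.primeFactors (fun p hp => (Nat.prime_of_mem_primeFactors hp).two_le)
  have hpos : 0 < ∏ p ∈ m.primeFactors, (p - 1) :=
    Finset.prod_pos fun p hp => by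
      have := (Nat.prime_of_mem_primeFactors hp).two_le
      omega
  apply Nat.le_of_mul_le_mul_right _ hpos
  rw [← h]
  calc _ ≤ m.totient * ((∏ p ∈ m.primeFactors, (p - 1)) * (m.primeFactors.card + 1)) :=
        Nat.mul_le_mul_left _ h2
    _ = _ := by ring

lemma one_add_le_two_pow_half (k : ℕ) : 1 + k ≤ 2 ^ (k / 2 + 1) := by
  have : k / 2 + 1 ≤ 2 ^ (k / 2) := Nat.lt_two_pow_self
  rw [pow_succ]; omega

lemma omega_aux (m n : ℕ) (hm : m ≠ 0) (h : m.totient ≤ n.factorial) :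
    m.primeFactors.card ≤ 2 * n ^ 2 + 2 ∧ m ≤ n.factorial * (2 * n ^ 2 + 3) := by
  set k := m.primeFactors.card with hk
  have h1 := le_totient_mul m
  have h2 : 2 ^ k ≤ m := by
    refine le_trans ?_ (Nat.le_of_dvd (Nat.pos_of_ne_zero hm) (Nat.prod_primeFactors_dvd m))
    exact Finset.pow_card_le_prod _ _ _
      (fun p hp => (Nat.prime_of_mem_primeFactors hp).two_le)
  have h3 : m ≤ n.factorial * (k + 1) := h1.trans (Nat.mul_le_mul_right _ h)
  have h4 : n.factorial ≤ 2 ^ (n ^ 2) := by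
    calc n.factorial ≤ n ^ n := Nat.factorial_le_pow n
      _ ≤ (2 ^ n) ^ n := Nat.pow_le_pow_left Nat.lt_two_pow_self.le n
      _ = 2 ^ (n ^ 2) := by rw [← pow_mul, pow_two]
  have h5 : 2 ^ k ≤ 2 ^ (n ^ 2 + (k / 2 + 1)) := by
    rw [pow_add]
    refine h2.trans (h3.trans (Nat.mul_le_mul h4 ?_))
    have := one_add_le_two_pow_half k
    omega
  have h6 : k ≤ n ^ 2 + (k / 2 + 1) := (Nat.pow_le_pow_iff_right (by norm_num)).mp h5
  have h7 : k ≤ 2 * n ^ 2 + 2 := by omega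
  exact ⟨h7, h3.trans (Nat.mul_le_mul_left _ (by omega))⟩

lemma totient_torsion (K : Type*) [Field K] [NumberField K] :
    (NumberField.Units.torsionOrder K).totient ≤ Module.finrank ℚ K := by
  obtain ⟨g, hg⟩ := IsCyclic.exists_generator (α := NumberField.Units.torsion K)
  have ho : orderOf g = NumberField.Units.torsionOrder K := orderOf_eq_card_of_forall_mem_zpowers hg
  set m := NumberField.Units.torsionOrder K with hm
  have hm0 : 0 < m := NumberField.Units.torsionOrder_pos K
  let ζ : K := (((g : (NumberField.RingOfIntegers K)ˣ) : NumberField.RingOfIntegers K) : K)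
  have hζ : IsPrimitiveRoot ζ m := by
    have h1 : IsPrimitiveRoot g m := ho ▸ IsPrimitiveRoot.orderOf g
    have h2 := h1.map_of_injective
      (f := (NumberField.Units.torsion K).subtype) Subtype.val_injective
    have h3 := IsPrimitiveRoot.coe_units_iff.mpr h2
    exact h3.map_of_injective (f := algebraMap (NumberField.RingOfIntegers K) K)
      (NumberField.RingOfIntegers.coe_injective)
  have h := Polynomial.cyclotomic_eq_minpoly_rat hζ hm0
  have h1 := minpoly.natDegree_le (A := ℚ) ζ
  rw [← h, Polynomial.natDegree_cyclotomic] at h1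
  exact h1

lemma pow_torsion (K : Type*) [Field K] [NumberField K] (x : K) (m : ℕ) (hm : 0 < m)
    (hx : x ^ m = 1) : x ^ (NumberField.Units.torsionOrder K) = 1 := by
  have hfo : IsOfFinOrder x := isOfFinOrder_iff_pow_eq_one.mpr ⟨m, hm, hx⟩
  have hpos := hfo.orderOf_pos
  have : NeZero (orderOf x) := ⟨hpos.ne'⟩
  have h := NumberField.Units.dvd_torsionOrder_of_isPrimitiveRoot (IsPrimitiveRoot.orderOf x)
  exact orderOf_dvd_iff_pow_eq_one.mp h

lemma prime_count (n : ℕ) (hn : 1 ≤ n) :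
    32773 * n ^ 2 ≤ Nat.primeCounting ((512 * n) ^ 3) := by
  have h := Chebyshev.pi_ge ((512 * n) ^ 3)
  have hn1 : (1 : ℝ) ≤ n := by exact_mod_cast hn
  set y : ℝ := 512 * (n : ℝ) with hy
  have hy1 : 512 ≤ y := by rw [hy]; linarith
  have hcast : (((512 * n) ^ 3 : ℕ) : ℝ) = y ^ 3 := by push_cast; rw [hy]
  rw [hcast] at h
  have hlog : Real.log (y ^ 3) ≤ 3 * y := by
    rw [Real.log_pow]
    have := Real.log_le_self (show 0 ≤ y by linarith)
    push_cast; linarith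
  have hy3 : y ^ 3 ≥ 262144 * y := by nlinarith [sq_nonneg (y - 512)]
  have hlogpos : 0 < Real.log (y ^ 3) := Real.log_pos (by nlinarith)
  have hlog1 : Real.log (y ^ 3 + 1) ≤ 1 + 3 * y := by
    calc Real.log (y ^ 3 + 1) ≤ Real.log (2 * y ^ 3) :=
          Real.log_le_log (by nlinarith) (by nlinarith)
      _ = Real.log 2 + Real.log (y ^ 3) := Real.log_mul (by norm_num) (by nlinarith)
      _ ≤ 1 + 3 * y := by
          have := Real.log_two_lt_d9
          linarith
  have h2 : y ^ 3 / 2 ≤ y ^ 3 * Real.log 2 - Real.log (y ^ 3 + 1) := by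
    have := Real.log_two_gt_d9
    nlinarith
  have h3 : y ^ 2 / 6 ≤ Nat.primeCounting ((512 * n) ^ 3) := by
    refine le_trans ?_ h
    rw [le_div_iff₀ hlogpos]
    calc y ^ 2 / 6 * Real.log (y ^ 3) ≤ y ^ 2 / 6 * (3 * y) := by gcongr
      _ = y ^ 3 / 2 := by ring
      _ ≤ _ := h2
  have h4 : (32773 * (n : ℝ) ^ 2) ≤ Nat.primeCounting ((512 * n) ^ 3) := by
    refine le_trans ?_ h3
    rw [hy]; nlinarith
  exact_mod_cast h4

/-- the set of good primes -/
lemma good_primes (m n : ℕ) (hn : 1 ≤ n) (hm : m ≠ 0) (hk : m.primeFactors.card ≤ 2 * n ^ 2 + 2) :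
    ∃ P : Finset ℕ, (∀ p ∈ P, p.Prime ∧ n ≤ p ∧ p ≤ (512 * n) ^ 3 ∧ ¬ p ∣ m) ∧
      2 * (128 * n) ^ 2 ≤ P.card := by
  classical
  let S := (Finset.range ((512 * n) ^ 3 + 1)).filter Nat.Prime
  have hS : S.card = Nat.primeCounting ((512 * n) ^ 3) := by
    rw [Nat.primeCounting, Nat.primeCounting', Nat.count_eq_card_filter_range]
  refine ⟨(S \ m.primeFactors) \ Finset.range n, ?_, ?_⟩
  · intro p hp
    simp only [S, Finset.mem_sdiff, Finset.mem_filter, Finset.mem_range, Nat.mem_primeFactors] at hp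
    obtain ⟨⟨⟨h1, h2⟩, h3⟩, h4⟩ := hp
    exact ⟨h2, by omega, by omega, fun h => h3 ⟨h2, h, hm⟩⟩
  · have h1 := Finset.le_card_sdiff (Finset.range n) (S \ m.primeFactors)
    have h2 := Finset.le_card_sdiff m.primeFactors S
    have h3 := prime_count n hn
    rw [Finset.card_range] at h1
    have h5 : (n : ℕ) ≤ n ^ 2 := Nat.le_self_pow (by norm_num) n
    have h6 : 2 * (128 * n) ^ 2 = 32768 * n ^ 2 := by ring
    omega
end OmegaB

section DobC
open Polynomial

lemma dob_int (f : ℤ[X]) (A : Finset ℂ)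
    (hA : f.map (Int.castRingHom ℂ) = ∏ a ∈ A, (X - C a)) (G : ℤ[X]) :
    ∃ z : ℤ, ∏ a ∈ A, aeval a G = (z : ℂ) := by
  have hmon : (f.map (Int.castRingHom ℂ)).Monic := by
    rw [hA]; exact monic_prod_X_sub_C _ _
  have h := resultant_eq_prod_eval (f.map (Int.castRingHom ℂ)) (G.map (Int.castRingHom ℂ))
    G.natDegree natDegree_map_le (IsAlgClosed.splits _)
  rw [resultant_map_map, hmon.leadingCoeff, one_pow, one_mul, hA, roots_prod_X_sub_C] at h
  refine ⟨f.resultant G (natDegree (∏ a ∈ A, (X - C a))) G.natDegree, ?_⟩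
  rw [eq_intCast] at h
  rw [h, Finset.prod]
  congr 1
  apply Multiset.map_congr rfl
  intro a _
  rw [aeval_def, eval_map]
  rfl

lemma dob_zero (f : ℤ[X]) (A : Finset ℂ)
    (hA : f.map (Int.castRingHom ℂ) = ∏ a ∈ A, (X - C a))
    (hconj : ∀ G : ℤ[X], ∀ a ∈ A, ∀ b ∈ A, aeval a G = 0 → aeval b G = 0) (G : ℤ[X])
    (hlt : ∏ a ∈ A, ‖aeval a G‖ < 1) : ∀ b ∈ A, aeval b G = 0 := by
  obtain ⟨z, hz⟩ := dob_int f A hA G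
  have h1 : ‖(z : ℂ)‖ < 1 := by rw [← hz, norm_prod]; exact hlt
  have h2 : z = 0 := by
    rw [Complex.norm_intCast] at h1
    have : |z| < 1 := by exact_mod_cast h1
    exact Int.abs_lt_one_iff.mp this
  rw [h2, Int.cast_zero, Finset.prod_eq_zero_iff] at hz
  obtain ⟨a, ha, h0⟩ := hz
  exact fun b hb => hconj G a ha b hb h0

lemma dob_bound (G : ℤ[X]) (N : ℕ) (hN : G.natDegree < N) (K : ℝ)
    (hK : ∀ i, |(G.coeff i : ℝ)| ≤ K) (a : ℂ) :
    ‖aeval a G‖ ≤ N * K * max 1 ‖a‖ ^ N := by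
  rw [aeval_eq_sum_range' hN]
  refine (norm_sum_le _ _).trans ?_
  have : ∀ i ∈ Finset.range N, ‖G.coeff i • a ^ i‖ ≤ K * max 1 ‖a‖ ^ N := by
    intro i hi
    rw [zsmul_eq_mul, norm_mul, norm_pow, Complex.norm_intCast]
    apply mul_le_mul (hK i) _ (by positivity) ((abs_nonneg _).trans (hK 0))
    calc ‖a‖ ^ i ≤ max 1 ‖a‖ ^ i := pow_le_pow_left₀ (norm_nonneg _) (le_max_right _ _) _
      _ ≤ max 1 ‖a‖ ^ N := pow_le_pow_right₀ (le_max_left _ _) (Finset.mem_range.mp hi).le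
  refine (Finset.sum_le_sum this).trans (le_of_eq ?_)
  rw [Finset.sum_const, Finset.card_range, nsmul_eq_mul, mul_assoc]

lemma dob_dvd (f : ℤ[X]) (A : Finset ℂ)
    (hA : f.map (Int.castRingHom ℂ) = ∏ a ∈ A, (X - C a)) (F : ℤ[X]) (hF : F ≠ 0) (T : ℕ)
    (h : ∀ a ∈ A, ∀ j < T, aeval a (hasseDeriv j F) = 0) : f ^ T ∣ F := by
  have hinj : Function.Injective (Int.castRingHom ℂ) := Int.cast_injective
  have hmon : f.Monic := by
    apply Polynomial.monic_of_injective hinj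
    rw [hA]; exact monic_prod_X_sub_C _ _
  rw [← Polynomial.map_dvd_map (Int.castRingHom ℂ) hinj (hmon.pow T), Polynomial.map_pow, hA,
    ← Finset.prod_pow]
  have hF' : F.map (Int.castRingHom ℂ) ≠ 0 := by
    rwa [Ne, Polynomial.map_eq_zero_iff hinj]
  apply Finset.prod_dvd_of_coprime
  · intro a _ b _ hab
    apply IsCoprime.pow
    exact isCoprime_X_sub_C_of_isUnit_sub (sub_ne_zero.mpr hab).isUnit
  · intro a ha
    rcases T with _ | T
    · simp
    rw [← le_rootMultiplicity_iff hF', Nat.succ_le_iff,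
      lt_rootMultiplicity_iff_isRoot_iterate_derivative hF']
    intro m hm
    have := h a ha m (by omega)
    rw [Polynomial.iterate_derivative_map, ← factorial_smul_hasseDeriv, IsRoot, eval_map]
    change aeval a (m.factorial • hasseDeriv m F) = 0
    rw [map_nsmul, this, smul_zero]

lemma dob_siegel (f : ℤ[X]) (A : Finset ℂ)
    (hA : f.map (Int.castRingHom ℂ) = ∏ a ∈ A, (X - C a))
    (hconj : ∀ G : ℤ[X], ∀ a ∈ A, ∀ b ∈ A, aeval a G = 0 → aeval b G = 0)
    (N T H : ℕ) (hN : 0 < N) (hT : 1 ≤ T)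
    (hcount : ((2 * (6 * N ^ T * H) + 1) ^ 2) ^ (A.card * T) < (H + 1) ^ N)
    (hM : (∏ a ∈ A, max 1 ‖a‖) ^ N < 3 ^ A.card) :
    ∃ F : ℤ[X], F ≠ 0 ∧ F.natDegree < N ∧ (∀ i, |(F.coeff i : ℝ)| ≤ H) ∧ f ^ T ∣ F := by
  classical
  have hNe : NeZero N := ⟨hN.ne'⟩
  set B : ℕ := 6 * N ^ T * H with hB
  let P : (Fin N → Fin (H + 1)) → ℤ[X] := fun c => ofFn N (fun i => ((c i : ℕ) : ℤ))
  have hPdeg : ∀ c, (P c).natDegree < N := fun c => ofFn_natDegree_lt hN _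
  have hPco : ∀ c i, 0 ≤ (P c).coeff i ∧ (P c).coeff i ≤ H := by
    intro c i
    by_cases hi : i < N
    · simp only [P]
      rw [ofFn_coeff_eq_val_of_lt _ hi]
      have := (c ⟨i, hi⟩).2
      constructor
      · positivity
      · exact_mod_cast Nat.lt_succ_iff.mp this
    · simp only [P]
      rw [ofFn_coeff_eq_zero_of_ge _ (not_lt.mp hi)]
      simp
  let w : ℂ → ℝ := fun a => max 1 ‖a‖ ^ N / 6
  have hw : ∀ a, 0 < w a := fun a => by
    simp only [w]
    have : (0:ℝ) < max 1 ‖a‖ := lt_of_lt_of_le one_pos (le_max_left _ _)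
    positivity
  have hV : ∀ c a, ∀ j < T, ‖aeval a (hasseDeriv j (P c))‖ ≤ B * w a := by
    intro c a j hj
    have := dob_bound (hasseDeriv j (P c)) N
      (lt_of_le_of_lt (natDegree_hasseDeriv_le _ _) (lt_of_le_of_lt (Nat.sub_le _ _) (hPdeg c)))
      ((N : ℝ) ^ (T - 1) * H) ?_ a
    · refine this.trans (le_of_eq ?_)
      simp only [w, hB]
      push_cast
      obtain ⟨T, rfl⟩ : ∃ k, T = k + 1 := ⟨T - 1, by omega⟩
      simp only [Nat.add_sub_cancel, pow_succ]
      ring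
    · intro i
      rw [hasseDeriv_coeff]
      push_cast
      rw [abs_mul]
      by_cases hi : i + j < N
      · apply mul_le_mul _ _ (abs_nonneg _) (by positivity)
        · rw [abs_of_nonneg (by positivity)]
          have h1 : (i + j).choose j ≤ N ^ (T - 1) :=
            (Nat.choose_le_pow _ _).trans ((Nat.pow_le_pow_left hi.le j).trans
              (Nat.pow_le_pow_right hN (by omega)))
          exact_mod_cast h1
        · obtain ⟨h1, h2⟩ := hPco c (i + j)
          rw [abs_of_nonneg (by exact_mod_cast h1)]
          exact_mod_cast h2
      · rw [show (P c).coeff (i + j) = 0 from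
          coeff_eq_zero_of_natDegree_lt (lt_of_lt_of_le (hPdeg c) (not_lt.mp hi))]
        simp
        positivity
  have hfl : ∀ x : ℝ, |x| ≤ B → ⌊x⌋ ∈ Finset.Icc (-(B : ℤ)) B := by
    intro x hx
    rw [abs_le] at hx
    rw [Finset.mem_Icc]
    constructor
    · rw [Int.le_floor]; push_cast; exact hx.1
    · have : (⌊x⌋ : ℝ) ≤ B := (Int.floor_le x).trans hx.2
      exact_mod_cast this
  have hre : ∀ c (a : A) (j : Fin T),
      |(aeval (a : ℂ) (hasseDeriv (j : ℕ) (P c))).re / w a| ≤ B := by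
    intro c a j
    rw [abs_div, abs_of_pos (hw a), div_le_iff₀ (hw a)]
    exact (Complex.abs_re_le_norm _).trans (hV c a j j.2)
  have him : ∀ c (a : A) (j : Fin T),
      |(aeval (a : ℂ) (hasseDeriv (j : ℕ) (P c))).im / w a| ≤ B := by
    intro c a j
    rw [abs_div, abs_of_pos (hw a), div_le_iff₀ (hw a)]
    exact (Complex.abs_im_le_norm _).trans (hV c a j j.2)
  let Φ : (Fin N → Fin (H + 1)) →
      (A × Fin T → (Finset.Icc (-(B : ℤ)) B) × (Finset.Icc (-(B : ℤ)) B)) := fun c x =>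
    (⟨⌊(aeval (x.1 : ℂ) (hasseDeriv (x.2 : ℕ) (P c))).re / w x.1⌋, hfl _ (hre c x.1 x.2)⟩,
     ⟨⌊(aeval (x.1 : ℂ) (hasseDeriv (x.2 : ℕ) (P c))).im / w x.1⌋, hfl _ (him c x.1 x.2)⟩)
  have hcard : Fintype.card (A × Fin T → (Finset.Icc (-(B : ℤ)) B) × (Finset.Icc (-(B : ℤ)) B)) <
      Fintype.card (Fin N → Fin (H + 1)) := by
    have e : ((B : ℤ) + 1 - -(B : ℤ)).toNat = 2 * B + 1 := by omega
    rw [Fintype.card_fun, Fintype.card_fun]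
    simp only [Fintype.card_prod, Fintype.card_coe, Fintype.card_fin, Int.card_Icc, e]
    rw [← pow_two]
    exact hcount
  obtain ⟨c, c', hne, hΦ⟩ := Fintype.exists_ne_map_eq_of_card_lt Φ hcard
  have hF0 : P c - P c' ≠ 0 := by
    intro h
    apply hne
    funext i
    have h1 := congrArg (fun G => coeff G (i : ℕ)) (sub_eq_zero.mp h)
    simp only [P] at h1
    rw [ofFn_coeff_eq_val_of_lt _ i.2, ofFn_coeff_eq_val_of_lt _ i.2] at h1
    ext
    exact_mod_cast h1
  refine ⟨P c - P c', hF0, ?_, ?_, ?_⟩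
  · exact lt_of_le_of_lt (natDegree_sub_le _ _) (max_lt (hPdeg c) (hPdeg c'))
  · intro i
    obtain ⟨h1, h2⟩ := hPco c i
    obtain ⟨h3, h4⟩ := hPco c' i
    have : |(P c - P c').coeff i| ≤ (H : ℤ) := by
      rw [coeff_sub, abs_le]; constructor <;> linarith
    exact_mod_cast this
  · apply dob_dvd f A hA _ hF0
    intro b hb j hj
    refine dob_zero f A hA hconj _ ?_ b hb
    have hsmall : ∀ a ∈ A, ‖aeval a (hasseDeriv j (P c - P c'))‖ ≤ max 1 ‖a‖ ^ N / 3 := by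
      intro a ha
      have h1 := congrFun hΦ (⟨a, ha⟩, ⟨j, hj⟩)
      simp only [Φ, Prod.mk.injEq, Subtype.mk.injEq] at h1
      have h2 := Int.abs_sub_lt_one_of_floor_eq_floor h1.1
      have h3 := Int.abs_sub_lt_one_of_floor_eq_floor h1.2
      rw [← sub_div, abs_div, abs_of_pos (hw a), div_lt_one (hw a)] at h2 h3
      rw [map_sub, map_sub]
      refine (Complex.norm_le_abs_re_add_abs_im _).trans ?_
      rw [Complex.sub_re, Complex.sub_im]
      have : w a = max 1 ‖a‖ ^ N / 6 := rfl
      linarith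
    calc ∏ a ∈ A, ‖aeval a (hasseDeriv j (P c - P c'))‖
        ≤ ∏ a ∈ A, (max 1 ‖a‖ ^ N / 3) :=
          Finset.prod_le_prod (fun _ _ => norm_nonneg _) hsmall
      _ = (∏ a ∈ A, max 1 ‖a‖) ^ N / 3 ^ A.card := by
          rw [Finset.prod_div_distrib, Finset.prod_pow, Finset.prod_const]
      _ < 1 := by rw [div_lt_one (by positivity)]; exact hM

lemma dob_expand (f : ℤ[X]) (p : ℕ) (hp : p.Prime) :
    ∃ g : ℤ[X], expand ℤ p f = f ^ p + C (p : ℤ) * g := by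
  have : Fact p.Prime := ⟨hp⟩
  have h : C (p : ℤ) ∣ expand ℤ p f - f ^ p := by
    rw [C_dvd_iff_dvd_coeff]
    intro i
    rw [← ZMod.intCast_zmod_eq_zero_iff_dvd _ p] 
    have e : (expand ℤ p f - f ^ p).map (Int.castRingHom (ZMod p)) = 0 := by
      rw [Polynomial.map_sub, Polynomial.map_pow, map_expand, ZMod.expand_card, sub_self]
    have := congrArg (fun G => coeff G i) e
    simp only [coeff_map, coeff_zero, eq_intCast] at this
    exact this
  obtain ⟨g, hg⟩ := h
  exact ⟨g, by rw [← hg]; ring⟩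

theorem dob_main (f : ℤ[X]) (A : Finset ℂ) (hAne : A.Nonempty)
    (hA : f.map (Int.castRingHom ℂ) = ∏ a ∈ A, (X - C a))
    (hconj : ∀ G : ℤ[X], ∀ a ∈ A, ∀ b ∈ A, aeval a G = 0 → aeval b G = 0)
    (T N : ℕ) (hT : 6 ≤ T) (hN : N = 2 * A.card * T ^ 2)
    (hM : (∏ a ∈ A, max 1 ‖a‖) ^ N < 3 ^ A.card)
    (P : Finset ℕ) (hP : ∀ p ∈ P, p.Prime)
    (hPb : ∀ p ∈ P, ((N : ℝ) ^ 3) ^ A.card * ((∏ a ∈ A, max 1 ‖a‖) ^ N) ^ p <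
      ((p : ℝ) ^ T) ^ A.card)
    (hinj : ∀ a ∈ A, ∀ p ∈ P, ∀ b ∈ A, ∀ r ∈ P, a ^ p = b ^ r → a = b ∧ p = r)
    (hPc : 2 * T ^ 2 ≤ P.card) : False := by
  classical
  have hd : 1 ≤ A.card := hAne.card_pos
  have hN72 : 72 ≤ N := by
    rw [hN]; nlinarith [Nat.pow_le_pow_left hT 2]
  have hcount : ((2 * (6 * N ^ T * N ^ 2) + 1) ^ 2) ^ (A.card * T) < (N ^ 2 + 1) ^ N := by
    have h1 : 2 * (6 * N ^ T * N ^ 2) + 1 ≤ N ^ (T + 3) := by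
      have e : N ^ (T + 3) = N * (N ^ T * N ^ 2) := by ring
      have h0 : 1 ≤ N ^ T * N ^ 2 := Nat.one_le_iff_ne_zero.mpr (by positivity)
      rw [e]; nlinarith
    calc ((2 * (6 * N ^ T * N ^ 2) + 1) ^ 2) ^ (A.card * T)
        ≤ ((N ^ (T + 3)) ^ 2) ^ (A.card * T) := by gcongr
      _ = N ^ ((T + 3) * 2 * (A.card * T)) := by rw [← pow_mul, ← pow_mul, mul_assoc]
      _ ≤ N ^ (2 * N) := by
          apply Nat.pow_le_pow_right (by omega)
          have : (T + 3) * (A.card * T) ≤ (2 * T) * (A.card * T) :=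
            Nat.mul_le_mul_right _ (by omega)
          have e : N = (2 * T) * (A.card * T) := by rw [hN]; ring
          rw [e]; linarith
      _ = (N ^ 2) ^ N := by rw [pow_mul]
      _ < (N ^ 2 + 1) ^ N := Nat.pow_lt_pow_left (by omega) (by omega)
  obtain ⟨F, hF0, hFdeg, hFco, Q, hQ⟩ := dob_siegel f A hA hconj N T (N ^ 2) (by omega) (by omega)
    hcount hM
  have hroot : ∀ p ∈ P, ∀ b ∈ A, aeval (b ^ p) F = 0 := by
    intro p hp b hb
    have hpp := hP p hp
    obtain ⟨g, hg⟩ := dob_expand f p hpp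
    have hfa : ∀ a ∈ A, aeval a f = 0 := by
      intro a ha
      have : aeval a f = (f.map (Int.castRingHom ℂ)).eval a := by
        rw [aeval_def, eval_map]; rfl
      rw [this, hA, eval_prod]
      exact Finset.prod_eq_zero ha (by simp)
    let G : ℤ[X] := g ^ T * expand ℤ p Q
    have hG : ∀ a ∈ A, aeval (a ^ p) F = (p : ℂ) ^ T * aeval a G := by
      intro a ha
      rw [← expand_aeval, hQ, map_mul, map_pow, hg]
      simp only [G, map_mul, map_pow, map_add, hfa a ha, zero_pow hpp.ne_zero, zero_add]
      simp
      ring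
    have hp0 : (0 : ℝ) < p := by exact_mod_cast hpp.pos
    have hprod : ∏ a ∈ A, ‖aeval a G‖ < 1 := by
      have h1 : ∏ a ∈ A, ‖aeval (a ^ p) F‖ = ((p : ℝ) ^ T) ^ A.card * ∏ a ∈ A, ‖aeval a G‖ := by
        rw [← Finset.prod_const, ← Finset.prod_mul_distrib]
        refine Finset.prod_congr rfl fun a ha => ?_
        rw [hG a ha, norm_mul, norm_pow, Complex.norm_natCast]
      have h2 : ∏ a ∈ A, ‖aeval (a ^ p) F‖ ≤
          ((N : ℝ) ^ 3) ^ A.card * ((∏ a ∈ A, max 1 ‖a‖) ^ N) ^ p := by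
        rw [← Finset.prod_const, ← Finset.prod_pow, ← Finset.prod_pow, ← Finset.prod_mul_distrib]
        refine Finset.prod_le_prod (fun _ _ => norm_nonneg _) fun a ha => ?_
        have h3 := dob_bound F N hFdeg ((N ^ 2 : ℕ) : ℝ) hFco (a ^ p)
        refine h3.trans (le_of_eq ?_)
        have h4 : max 1 ‖a ^ p‖ = max 1 ‖a‖ ^ p := by
          rw [norm_pow]
          rcases le_total 1 ‖a‖ with h | h
          · rw [max_eq_right h, max_eq_right (one_le_pow₀ h)]
          · rw [max_eq_left h, one_pow, max_eq_left (pow_le_one₀ (norm_nonneg _) h)]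
        rw [h4, ← pow_mul, ← pow_mul, mul_comm p N]
        push_cast; ring
      have h5 := lt_of_le_of_lt h2 (hPb p hp)
      rw [h1] at h5
      have h6 : (0 : ℝ) < ((p : ℝ) ^ T) ^ A.card := by positivity
      by_contra hcon
      push Not at hcon
      nlinarith
    rw [hG b hb, dob_zero f A hA hconj G hprod b hb, mul_zero]
  let Z : Finset ℂ := (A ×ˢ P).image (fun x => x.1 ^ x.2)
  have hZc : Z.card = A.card * P.card := by
    rw [Finset.card_image_of_injOn, Finset.card_product]
    rintro ⟨a, p⟩ h1 ⟨b, r⟩ h2 h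
    simp only [Finset.coe_product, Set.mem_prod, Finset.mem_coe] at h1 h2
    obtain ⟨h3, h4⟩ := hinj a h1.1 p h1.2 b h2.1 r h2.2 h
    rw [h3, h4]
  have hF' : F.map (Int.castRingHom ℂ) ≠ 0 := by
    rwa [Ne, Polynomial.map_eq_zero_iff Int.cast_injective]
  have hZle : Z.card ≤ (F.map (Int.castRingHom ℂ)).natDegree := by
    apply card_le_degree_of_subset_roots
    intro z hz
    rw [Finset.mem_val, Finset.mem_image] at hz
    obtain ⟨⟨a, p⟩, hap, rfl⟩ := hz
    rw [Finset.mem_product] at hap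
    rw [mem_roots hF', IsRoot, eval_map]
    exact hroot p hap.2 a hap.1
  have h1 : (F.map (Int.castRingHom ℂ)).natDegree ≤ F.natDegree := natDegree_map_le
  have h2 : A.card * (2 * T ^ 2) ≤ A.card * P.card := Nat.mul_le_mul_left _ hPc
  have h3 : N = A.card * (2 * T ^ 2) := by rw [hN]; ring
  omega
end DobC
section HtD
open NumberField Height Real

lemma ht_inf {K : Type*} [Field K] [NumberField K] (x : K) :
    ∑ v : InfinitePlace K, (v.mult : ℝ) * log⁺ (v x) = ∑ σ : K →+* ℂ, log⁺ ‖σ x‖ := by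
  classical
  rw [← Finset.sum_fiberwise (s := (Finset.univ : Finset (K →+* ℂ))) (g := fun σ => InfinitePlace.mk σ)]
  refine Finset.sum_congr rfl fun v _ => ?_
  rw [← InfinitePlace.card_filter_mk_eq, ← nsmul_eq_mul, ← Finset.sum_const]
  refine Finset.sum_congr rfl fun σ hσ => ?_
  rw [Finset.mem_filter] at hσ
  rw [← hσ.2]; rfl

lemma ht_ge {K : Type*} [Field K] [NumberField K] (x : K) :
    ∑ σ : K →+* ℂ, log⁺ ‖σ x‖ ≤ logHeight₁ x := by
  rw [← ht_inf, NumberField.logHeight₁_eq]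
  have : 0 ≤ ∑ᶠ v : FinitePlace K, log⁺ (v x) := finsum_nonneg fun v => posLog_nonneg
  linarith

lemma ht_int {K : Type*} [Field K] [NumberField K] (x : K) (hx : IsIntegral ℤ x) :
    logHeight₁ x = ∑ σ : K →+* ℂ, log⁺ ‖σ x‖ := by
  rw [← ht_inf, NumberField.logHeight₁_eq]
  have : ∑ᶠ v : FinitePlace K, log⁺ (v x) = 0 := by
    refine finsum_eq_zero_of_forall_eq_zero fun v => ?_
    rw [posLog_eq_zero_iff]
    have h := FinitePlace.norm_le_one (K := K) v.maximalIdeal (⟨x, hx⟩ : 𝓞 K)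
    rw [FinitePlace.norm_embedding_eq] at h
    rw [abs_of_nonneg (apply_nonneg v x)]
    exact h
  linarith

lemma ht_nonint {K : Type*} [Field K] [NumberField K] (x : K) (hx : ¬ IsIntegral ℤ x) :
    log 2 ≤ logHeight₁ x := by
  obtain ⟨n, hn, hle, hi⟩ := NumberField.exists_nat_le_mulHeight₁ x
  have : n ≠ 1 := by rintro rfl; simp at hi; exact hx hi
  have h2 : (2:ℝ) ≤ n := by exact_mod_cast (by omega : 2 ≤ n)
  exact Real.log_le_log (by norm_num) (h2.trans hle)

lemma ht_upper {K : Type*} [Field K] [NumberField K] (x : K) (δ : ℕ) (hδ : δ ≠ 0)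
    (hx : IsIntegral ℤ ((δ:K) * x)) (B : ℝ) (hB : 1 ≤ B) (hδB : (δ:ℝ) ≤ B)
    (h : ∀ σ : K →+* ℂ, ‖σ ((δ:K)*x)‖ ≤ B) :
    logHeight₁ x ≤ 2 * Module.finrank ℚ K * log B := by
  have key : ∀ y : K, IsIntegral ℤ y → (∀ σ : K →+* ℂ, ‖σ y‖ ≤ B) →
      logHeight₁ y ≤ Module.finrank ℚ K * log B := by
    intro y hy hb
    rw [ht_int y hy, ← NumberField.Embeddings.card K ℂ, ← nsmul_eq_mul]
    refine Finset.sum_le_card_nsmul _ _ _ fun σ _ => ?_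
    calc log⁺ ‖σ y‖ ≤ log⁺ B := posLog_le_posLog (norm_nonneg _) (hb σ)
      _ = log B := posLog_eq_log (by rwa [abs_of_nonneg (by linarith)])
  have h1 := key _ hx h
  have h2 := key (δ:K) (by simpa using isIntegral_algebraMap (R := ℤ) (A := K) (x := (δ:ℤ))) (by
    intro σ; simpa using hδB)
  have h3 := logHeight₁_mul_le ((δ:K)*x) ((δ:K)⁻¹)
  rw [logHeight₁_inv, mul_comm (δ:K) x, mul_assoc, mul_inv_cancel₀ (by exact_mod_cast hδ), mul_one] at h3
  rw [mul_comm x] at h3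
  linarith

end HtD
section DobApp
open NumberField Height Real Polynomial

lemma num_hM (n d : ℕ) (hn : 1 ≤ n) (hd : 1 ≤ d) (M : ℝ) (hM : 1 ≤ M)
    (hl : log M < 1 / (2^37 * (n:ℝ)^4)) : M ^ (2*d*(128*n)^2) < 3 ^ d := by
  have hn' : (1:ℝ) ≤ n := by exact_mod_cast hn
  have hd' : (1:ℝ) ≤ d := by exact_mod_cast hd
  have hM0 : 0 < M := by linarith
  rw [← Real.log_lt_log_iff (by positivity) (by positivity), Real.log_pow, Real.log_pow]
  have h3 : (1:ℝ) < log 3 := by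
    rw [Real.lt_log_iff_exp_lt (by norm_num)]
    exact Real.exp_one_lt_d9.trans (by norm_num)
  have : (2:ℝ)^37 * n^4 * log M < 1 := by
    rw [lt_div_iff₀ (by positivity)] at hl; linarith
  have hlM := Real.log_nonneg hM
  push_cast
  have h4 : (n:ℝ)^2 ≤ n^4 := pow_le_pow_right₀ hn' (by norm_num)
  have h5 : (2*(128*(n:ℝ))^2) * log M < 1 := by
    have : (2*(128*(n:ℝ))^2) * log M ≤ (2:ℝ)^37 * n^4 * log M := by
      apply mul_le_mul_of_nonneg_right _ hlM
      nlinarith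
    linarith
  calc 2*(d:ℝ)*(128*n)^2 * log M = d * ((2*(128*(n:ℝ))^2) * log M) := by ring
    _ < d * log 3 := by
      apply mul_lt_mul_of_pos_left _ (by linarith)
      linarith

lemma num_hPb (n d p : ℕ) (hn : 1 ≤ n) (hd : 1 ≤ d) (hdn : d ≤ n.factorial) (hp2 : 2 ≤ p)
    (hnp : n ≤ p) (hp : p ≤ (512*n)^3) (M : ℝ) (hM : 1 ≤ M)
    (hl : log M < 1 / (2^37 * (n:ℝ)^4)) :
    (((2*d*(128*n)^2 : ℕ):ℝ)^3)^d * (M^(2*d*(128*n)^2))^p < ((p:ℝ)^(128*n))^d := by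
  have hn' : (1:ℝ) ≤ n := by exact_mod_cast hn
  have hd' : (1:ℝ) ≤ d := by exact_mod_cast hd
  have hp2' : (2:ℝ) ≤ p := by exact_mod_cast hp2
  have hnp' : (n:ℝ) ≤ p := by exact_mod_cast hnp
  have hp' : (p:ℝ) ≤ (512*n)^3 := by exact_mod_cast hp
  have hM0 : 0 < M := by linarith
  have hlM := Real.log_nonneg hM
  have e : (((2*d*(128*n)^2 : ℕ):ℝ)^3)^d * (M^(2*d*(128*n)^2))^p
      = (((2*d*(128*n)^2 : ℕ):ℝ)^3 * M^(2*(128*n)^2*p))^d := by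
    rw [mul_pow (_ ^ 3), ← pow_mul M, ← pow_mul M]; congr 2; ring
  rw [e]
  apply pow_lt_pow_left₀ _ (by positivity) (by omega)
  have hN : (0:ℝ) < ((2*d*(128*n)^2 : ℕ):ℝ) := by push_cast; positivity
  rw [← Real.log_lt_log_iff (by positivity) (by positivity), Real.log_mul (by positivity) (by positivity),
    Real.log_pow, Real.log_pow, Real.log_pow]
  have hlp : log 2 ≤ log p := Real.log_le_log (by norm_num) hp2'
  have hl2 := Real.log_two_gt_d9
  have hln : log n ≤ log p := Real.log_le_log (by linarith) hnp'
  have hld : log d ≤ n * log p := by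
    rw [← Real.log_pow]
    apply Real.log_le_log (by linarith)
    exact_mod_cast hdn.trans ((Nat.factorial_le_pow n).trans (Nat.pow_le_pow_left hnp n))
  have hlN : log ((2*d*(128*n)^2 : ℕ):ℝ) ≤ (n + 17) * log p := by
    have : ((2*d*(128*n)^2 : ℕ):ℝ) = d * (2^15 * n^2) := by push_cast; ring
    rw [this, Real.log_mul (by positivity) (by positivity), Real.log_mul (by positivity) (by positivity),
      Real.log_pow, Real.log_pow]
    push_cast
    linarith
  have h1 : (2:ℝ)^37 * n^4 * log M < 1 := by
    rw [lt_div_iff₀ (by positivity)] at hl; linarith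
  have h2 : ((2*(128*n)^2*p : ℕ):ℝ) * log M ≤ 32 * n := by
    push_cast
    calc 2*(128*(n:ℝ))^2*p * log M ≤ 2*(128*(n:ℝ))^2*(512*n)^3 * log M := by gcongr
      _ = 32 * n * ((2:ℝ)^37 * n^4 * log M) := by ring
      _ ≤ 32 * n * 1 := by gcongr
      _ = _ := by ring
  push_cast at h2 ⊢
  push_cast at hlN
  nlinarith

lemma inj_K {K : Type*} [Field K] [NumberField K] (x : K) (hx0 : x ≠ 0)
    (hx : ∀ m : ℕ, 0 < m → x^m ≠ 1) (g : K ≃ₐ[ℚ] K) (p r : ℕ) (hp : p.Prime) (hr : r.Prime)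
    (hpt : ¬ p ∣ NumberField.Units.torsionOrder K) (h : x^p = (g x)^r) : g x = x ∧ p = r := by
  have hpr : p = r := by
    by_contra hne
    have it : ∀ k : ℕ, x^(p^k) = ((g^k) x)^(r^k) := by
      intro k
      induction k with
      | zero => simp
      | succ k ih =>
        calc x^(p^(k+1)) = (x^(p^k))^p := by rw [← pow_mul, pow_succ]
          _ = (((g^k) x)^(r^k))^p := by rw [ih]
          _ = ((g^k) (x^p))^(r^k) := by rw [map_pow, ← pow_mul, ← pow_mul, mul_comm]
          _ = ((g^k) ((g x)^r))^(r^k) := by rw [h]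
          _ = ((g^(k+1)) x)^(r^(k+1)) := by
            rw [map_pow, ← pow_mul, pow_succ g, AlgEquiv.mul_apply, pow_succ r, mul_comm r]
    have hk : 0 < orderOf g := orderOf_pos g
    have h1 := it (orderOf g)
    rw [pow_orderOf_eq_one, AlgEquiv.one_apply] at h1
    have hne2 : p^(orderOf g) ≠ r^(orderOf g) := by
      intro h; exact hne (Nat.pow_left_injective hk.ne' h)
    rcases lt_or_gt_of_ne hne2 with hlt | hlt
    · apply hx (r^(orderOf g) - p^(orderOf g)) (by omega)
      rw [pow_sub₀ _ hx0 hlt.le, h1, mul_inv_cancel₀ (pow_ne_zero _ hx0)]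
    · apply hx (p^(orderOf g) - r^(orderOf g)) (by omega)
      rw [pow_sub₀ _ hx0 hlt.le, h1, mul_inv_cancel₀ (pow_ne_zero _ hx0)]
  refine ⟨?_, hpr⟩
  subst hpr
  by_contra hne
  apply hpt
  have hgx : g x ≠ 0 := by simpa using hx0
  have := Fact.mk hp
  have : NeZero p := ⟨hp.ne_zero⟩
  apply NumberField.Units.dvd_torsionOrder_of_isPrimitiveRoot (ζ := x / g x)
  rw [IsPrimitiveRoot.iff_orderOf]
  apply orderOf_eq_prime
  · rw [div_pow, h, div_self (pow_ne_zero _ hgx)]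
  · rw [Ne, div_eq_one_iff_eq hgx]; exact fun h => hne h.symm

lemma dob_K {K : Type*} [Field K] [NumberField K] [IsGalois ℚ K] (n : ℕ) (hn : 1 ≤ n)
    (hK : Module.finrank ℚ K ≤ n.factorial) (x : K) (hi : IsIntegral ℤ x) (hx0 : x ≠ 0)
    (hx : ∀ m : ℕ, 0 < m → x^m ≠ 1) : 1 / (2^37 * (n:ℝ)^4) ≤ logHeight₁ x := by
  classical
  by_contra hlt
  push Not at hlt
  set A : Finset ℂ := Finset.univ.image (fun σ : K →+* ℂ => σ x) with hAdef
  have memA : ∀ a, a ∈ A ↔ ∃ σ : K →+* ℂ, σ x = a := by intro a; simp [hAdef]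
  have hmin : minpoly ℚ x = (minpoly ℤ x).map (algebraMap ℤ ℚ) :=
    minpoly.isIntegrallyClosed_eq_field_fractions' ℚ hi
  have hiQ : IsIntegral ℚ x := IsIntegral.of_finite ℚ x
  set f := (minpoly ℚ x).map (algebraMap ℚ ℂ) with hf
  have hfm : (minpoly ℤ x).map (Int.castRingHom ℂ) = f := by
    rw [hf, hmin, Polynomial.map_map]; congr 1
  have hsep : f.Separable := (minpoly.irreducible hiQ).separable.map
  have hmon : f.Monic := (minpoly.monic hiQ).map _
  have hroots : f.roots = A.val := by
    have h1 := NumberField.Embeddings.range_eval_eq_rootSet_minpoly K ℂ x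
    have h2 : f.roots.toFinset = A := by
      ext a
      rw [memA]
      have := Set.ext_iff.mp h1 a
      rw [Polynomial.rootSet_def, Polynomial.aroots_def] at this
      simp only [Set.mem_range, Finset.mem_coe] at this
      exact this.symm
    rw [← h2, Multiset.toFinset_val, Multiset.Nodup.dedup (nodup_roots hsep)]
  have hA : (minpoly ℤ x).map (Int.castRingHom ℂ) = ∏ a ∈ A, (X - C a) := by
    rw [hfm, (IsAlgClosed.splits f).eq_prod_roots_of_monic hmon, hroots]; rfl
  have hAne : A.Nonempty := by
    obtain ⟨σ⟩ : Nonempty (K →+* ℂ) := inferInstance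
    exact ⟨σ x, (memA _).2 ⟨σ, rfl⟩⟩
  have hd1 : 1 ≤ A.card := hAne.card_pos
  have hdn : A.card ≤ n.factorial := by
    refine le_trans ?_ hK
    rw [← NumberField.Embeddings.card K ℂ]
    exact Finset.card_image_le
  have haev : ∀ (σ : K →+* ℂ) (G : ℤ[X]), aeval (σ x) G = σ (aeval x G) := by
    intro σ G
    exact Polynomial.aeval_algHom_apply (σ.toIntAlgHom) x G
  have hconj : ∀ G : ℤ[X], ∀ a ∈ A, ∀ b ∈ A, aeval a G = 0 → aeval b G = 0 := by
    intro G a ha b hb h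
    obtain ⟨σ, rfl⟩ := (memA _).1 ha
    obtain ⟨τ, rfl⟩ := (memA _).1 hb
    rw [haev] at h ⊢
    rw [(map_eq_zero σ).1 h, map_zero]
  set M := ∏ a ∈ A, max 1 ‖a‖ with hMdef
  have hM1 : 1 ≤ M := Finset.prod_induction _ (fun y : ℝ => 1 ≤ y) (fun a b ha hb => one_le_mul_of_one_le_of_one_le ha hb) le_rfl (fun a _ => le_max_left _ _)
  have hlM : log M < 1 / (2^37 * (n:ℝ)^4) := by
    refine lt_of_le_of_lt (le_trans ?_ (ht_ge x)) hlt
    rw [hMdef, Real.log_prod (fun a _ => by positivity)]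
    have hAa : ∀ a : ℂ, log (max 1 ‖a‖) = log⁺ ‖a‖ := by
      intro a; rw [posLog_eq_log_max_one (norm_nonneg _)]
    simp_rw [hAa]
    rw [hAdef]
    exact Finset.sum_image_le_of_nonneg (fun i _ => posLog_nonneg)
  have ht0 : NumberField.Units.torsionOrder K ≠ 0 := NumberField.Units.torsionOrder_ne_zero K
  have hom := omega_aux (NumberField.Units.torsionOrder K) n ht0 ((totient_torsion K).trans hK)
  obtain ⟨P, hP, hPc⟩ := good_primes _ n hn ht0 hom.1
  refine dob_main (minpoly ℤ x) A hAne hA hconj (128*n) (2*A.card*(128*n)^2) (by omega) rfl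
    (num_hM n A.card hn hd1 M hM1 hlM) P (fun p hp => (hP p hp).1) ?_ ?_ hPc
  · intro p hp
    obtain ⟨h1, h2, h3, _⟩ := hP p hp
    exact num_hPb n A.card p hn hd1 hdn h1.two_le h2 h3 M hM1 hlM
  · intro a ha p hp b hb r hr h
    obtain ⟨σ, rfl⟩ := (memA _).1 ha
    obtain ⟨τ, rfl⟩ := (memA _).1 hb
    obtain ⟨g, hg⟩ := NumberField.ComplexEmbedding.exists_comp_symm_eq_of_comp_eq (k := ℚ) σ τ
      (Subsingleton.elim _ _)
    have hτ : τ x = σ (g.symm x) := by rw [← hg]; rfl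
    rw [hτ, ← map_pow, ← map_pow] at h
    have := inj_K x hx0 hx g.symm p r (hP p hp).1 (hP r hr).1 (hP p hp).2.2.2 (σ.injective h)
    rw [hτ, this.1]
    exact ⟨rfl, this.2⟩

lemma eta_K {K : Type*} [Field K] [NumberField K] [IsGalois ℚ K] (n : ℕ) (hn : 1 ≤ n)
    (hK : Module.finrank ℚ K ≤ n.factorial) (x : K) (hx0 : x ≠ 0)
    (h : logHeight₁ x < 1 / (2^37 * (n:ℝ)^4)) : ∃ m : ℕ, 0 < m ∧ x^m = 1 := by
  by_contra hc
  push Not at hc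
  by_cases hi : IsIntegral ℤ x
  · exact absurd (dob_K n hn hK x hi hx0 hc) (not_le.2 h)
  · have h1 := ht_nonint x hi
    have hn' : (1:ℝ) ≤ n := by exact_mod_cast hn
    have h2 : 1 / (2^37 * (n:ℝ)^4) ≤ 1/2 := by
      apply one_div_le_one_div_of_le (by norm_num)
      have := one_le_pow₀ hn' (n := 4)
      linarith
    have hl2 := Real.log_two_gt_d9
    linarith
end DobApp
section MatE
open NumberField Height Real Polynomial

lemma eig_vec {F : Type*} [Field F] {n : ℕ} (A : Matrix (Fin n) (Fin n) F) (μ : F)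
    (h : A.charpoly.eval μ = 0) : ∃ v : Fin n → F, v ≠ 0 ∧ A.mulVec v = μ • v := by
  rw [Matrix.eval_charpoly, ← Matrix.exists_mulVec_eq_zero_iff] at h
  obtain ⟨v, hv, h⟩ := h
  refine ⟨v, hv, ?_⟩
  rw [Matrix.sub_mulVec, sub_eq_zero] at h
  rw [← h]
  ext i
  simp [Matrix.scalar, Matrix.mulVec_diagonal]

lemma eig_root {F : Type*} [Field F] {n : ℕ} (A : Matrix (Fin n) (Fin n) F) (μ : F)
    (v : Fin n → F) (hv : v ≠ 0) (h : A.mulVec v = μ • v) : A.charpoly.eval μ = 0 := by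
  rw [Matrix.eval_charpoly, ← Matrix.exists_mulVec_eq_zero_iff]
  refine ⟨v, hv, ?_⟩
  rw [Matrix.sub_mulVec, sub_eq_zero, h]
  ext i
  simp [Matrix.scalar, Matrix.mulVec_diagonal]

lemma eig_norm {n : ℕ} (A : Matrix (Fin n) (Fin n) ℂ) (μ : ℂ) (v : Fin n → ℂ) (hv : v ≠ 0)
    (h : A.mulVec v = μ • v) (b : ℝ) (hb : ∀ i j, ‖A i j‖ ≤ b) : ‖μ‖ ≤ n * b := by
  obtain ⟨j0, hj0⟩ := Function.ne_iff.1 hv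
  obtain ⟨i, -, hi⟩ := Finset.exists_max_image Finset.univ (fun j => ‖v j‖) ⟨j0, Finset.mem_univ _⟩
  have hpos : 0 < ‖v i‖ := lt_of_lt_of_le (norm_pos_iff.2 hj0) (hi j0 (Finset.mem_univ _))
  have h1 : ∑ j, A i j * v j = μ * v i := congrFun h i
  have h2 : ‖μ‖ * ‖v i‖ ≤ (n * b) * ‖v i‖ := by
    rw [← norm_mul, ← h1]
    refine (norm_sum_le _ _).trans ?_
    calc ∑ j, ‖A i j * v j‖ ≤ ∑ j : Fin n, b * ‖v i‖ := by
          refine Finset.sum_le_sum fun j _ => ?_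
          rw [norm_mul]
          exact mul_le_mul (hb i j) (hi j (Finset.mem_univ _)) (norm_nonneg _)
            ((norm_nonneg _).trans (hb i j))
      _ = _ := by simp; ring
  exact le_of_mul_le_mul_right h2 hpos

lemma mat_den {n h : ℕ} (g : Matrix (Fin n) (Fin n) ℚ) 
    (hg : ∀ i j, max (g i j).num.natAbs (g i j).den ≤ h) :
    ∃ (δ : ℕ) (B : Matrix (Fin n) (Fin n) ℤ), δ ≠ 0 ∧ δ ≤ h^(n^2) ∧
      (∀ i j, (B i j : ℚ) = δ * g i j) ∧ ∀ i j, |(B i j : ℝ)| ≤ δ * h := by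
  set δ := ∏ i, ∏ j, (g i j).den with hδ
  have hdvd : ∀ i j, (g i j).den ∣ δ := fun i j =>
    (Finset.dvd_prod_of_mem (fun j => (g i j).den) (Finset.mem_univ j)).trans
      (Finset.dvd_prod_of_mem (fun i => ∏ j, (g i j).den) (Finset.mem_univ i))
  have hex : ∀ i j, ∃ z : ℤ, (z : ℚ) = δ * g i j := by
    intro i j
    obtain ⟨e, he⟩ := hdvd i j
    refine ⟨e * (g i j).num, ?_⟩
    have h1 := Rat.den_mul_eq_num (g i j)
    rw [he]; push_cast; rw [← h1]; ring
  choose B hB using hex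
  refine ⟨δ, B, ?_, ?_, hB, ?_⟩
  · rw [hδ]; exact Finset.prod_ne_zero_iff.2 fun i _ => Finset.prod_ne_zero_iff.2 fun j _ => (g i j).den_nz
  · calc δ ≤ ∏ i : Fin n, ∏ j : Fin n, h :=
        Finset.prod_le_prod' fun i _ => Finset.prod_le_prod' fun j _ => (le_max_right _ _).trans (hg i j)
      _ = h^(n^2) := by simp [← pow_mul, sq]
  · intro i j
    have h1 : (B i j : ℝ) = δ * ((g i j : ℚ) : ℝ) := by exact_mod_cast congrArg (fun q : ℚ => (q:ℝ)) (hB i j)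
    rw [h1, abs_mul, Nat.abs_cast]
    apply mul_le_mul_of_nonneg_left _ (Nat.cast_nonneg _)
    have h2 : |g i j| ≤ h := by
      have h3 := Rat.den_mul_eq_num (g i j)
      have h4 : (1:ℚ) ≤ (g i j).den := by exact_mod_cast (g i j).den_pos
      have h5 : |((g i j).num : ℚ)| ≤ h := by
        have := (le_max_left _ _).trans (hg i j)
        rw [← Int.cast_abs, Int.abs_eq_natAbs]
        exact_mod_cast this
      rw [← h3, abs_mul, Nat.abs_cast] at h5
      nlinarith [abs_nonneg (g i j)]
    exact_mod_cast (Rat.cast_le (K := ℝ)).2 h2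

lemma eig_height {K : Type*} [Field K] [NumberField K] {n h : ℕ} (hn : 1 ≤ n) (hh : 2 ≤ h)
    (g : Matrix (Fin n) (Fin n) ℚ)
    (hg : ∀ i j, max (g i j).num.natAbs (g i j).den ≤ h) (μ : K)
    (hμ : (g.charpoly.map (algebraMap ℚ K)).eval μ = 0) :
    logHeight₁ μ ≤ Module.finrank ℚ K * (6 * n^2 * log h) := by
  obtain ⟨δ, B, hδ0, hδ, hB, hBb⟩ := mat_den g hg
  rw [← Matrix.charpoly_map] at hμ
  obtain ⟨v, hv, hgv⟩ := eig_vec _ _ hμ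
  have hBv : (B.map (Int.castRingHom K)).mulVec v = ((δ:K) * μ) • v := by
    have : B.map (Int.castRingHom K) = (δ:K) • (g.map (algebraMap ℚ K)) := by
      ext i j
      have := congrArg (algebraMap ℚ K) (hB i j)
      simpa using this
    rw [this, Matrix.smul_mulVec, hgv, smul_smul]
  have hintg : IsIntegral ℤ ((δ:K) * μ) := by
    refine ⟨B.charpoly, Matrix.charpoly_monic B, ?_⟩
    have := eig_root _ _ v hv hBv
    rw [Matrix.charpoly_map, Polynomial.eval_map] at this
    exact this
  have hn' : (1:ℝ) ≤ n := by exact_mod_cast hn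
  have hh' : (2:ℝ) ≤ h := by exact_mod_cast hh
  have hδ' : (δ:ℝ) ≤ h^(n^2) := by exact_mod_cast hδ
  have hb1 : (1:ℝ) ≤ (h:ℝ)^(n^2) := one_le_pow₀ (by linarith)
  have hh1 := ht_upper μ δ hδ0 hintg (n * (h^(n^2) * h)) (one_le_mul_of_one_le_of_one_le hn' (one_le_mul_of_one_le_of_one_le hb1 (by linarith))) (by
    have hb2 := one_le_mul_of_one_le_of_one_le hn' (show (1:ℝ) ≤ h by linarith)
    calc (δ:ℝ) ≤ h^(n^2) * 1 := by linarith
      _ ≤ h^(n^2) * (n * h) := by gcongr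
      _ = _ := by ring) (by
    intro σ
    have hσv : (fun i => σ (v i)) ≠ 0 := by
      intro h0; apply hv; ext i
      have := congrFun h0 i
      simpa using this
    refine eig_norm (B.map (Int.castRingHom ℂ)) _ (fun i => σ (v i)) hσv ?_ _ ?_
    · ext i
      have := congrArg σ (congrFun hBv i)
      simp only [Matrix.mulVec, dotProduct, Matrix.map_apply, map_sum, map_mul, Pi.smul_apply, smul_eq_mul] at this ⊢
      rw [← this]
      simp
    · intro i j
      simp only [Matrix.map_apply, eq_intCast, Complex.norm_intCast]
      exact (hBb i j).trans (by gcongr))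
  refine hh1.trans ?_
  rw [mul_comm (2:ℝ), mul_assoc]
  apply mul_le_mul_of_nonneg_left _ (Nat.cast_nonneg _)
  rw [Real.log_mul (by positivity) (by positivity), Real.log_mul (by positivity) (by positivity), Real.log_pow]
  have hl : 0 < log h := Real.log_pos (by linarith)
  have h1 : log n ≤ n * log h := by
    rw [← Real.log_pow]
    apply Real.log_le_log (by linarith)
    exact_mod_cast (Nat.lt_two_pow_self (n := n)).le.trans (Nat.pow_le_pow_left hh n)
  have h2 : (n:ℝ) ≤ n^2 := by nlinarith
  have h3 : (n:ℝ) * log h ≤ n^2 * log h := by gcongr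
  have h4 : log h ≤ n^2 * log h := by nlinarith
  push_cast
  linarith

lemma split_finrank {F : Type} [Field F] [CharZero F] (p : F[X]) (n : ℕ) (hp : p.natDegree = n) :
    Module.finrank F p.SplittingField ≤ n.factorial := by
  classical
  have : Fact (p.map (algebraMap F p.SplittingField)).Splits := ⟨SplittingField.splits p⟩
  have : IsGalois F p.SplittingField := IsGalois.mk
  rw [← IsGalois.card_aut_eq_finrank]
  have h1 := Nat.card_le_card_of_injective _ (Gal.galActionHom_injective p p.SplittingField)
  refine h1.trans ?_
  rw [Nat.card_eq_fintype_card, Fintype.card_perm]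
  apply Nat.factorial_le
  rw [← hp, ← Nat.card_eq_fintype_card, Nat.card_coe_set_eq, rootSet_def, Set.ncard_coe_finset, aroots_def]
  exact (Multiset.toFinset_card_le _).trans ((card_roots' _).trans natDegree_map_le)

lemma split_ex {F : Type} [Field F] [CharZero F] (p : F[X]) (n : ℕ) (hp : p.natDegree = n) :
    ∃ (K : Type) (_ : Field K) (_ : Algebra F K), FiniteDimensional F K ∧ IsGalois F K ∧
      Module.finrank F K ≤ n.factorial ∧ (p.map (algebraMap F K)).Splits :=
  ⟨p.SplittingField, inferInstance, inferInstance, inferInstance, IsGalois.mk,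
    split_finrank p n hp, SplittingField.splits p⟩

lemma split_exQ (p : ℚ[X]) (n : ℕ) (hp : p.natDegree = n) :
    ∃ (K : Type) (_ : Field K) (_ : NumberField K), IsGalois ℚ K ∧
      Module.finrank ℚ K ≤ n.factorial ∧ (p.map (algebraMap ℚ K)).Splits := by
  obtain ⟨K, hF, hA, h1, h2, h3, h4⟩ := split_ex p n hp
  have hc : CharZero K := charZero_of_injective_algebraMap (algebraMap ℚ K).injective
  have e : hA = DivisionRing.toRatAlgebra := Subsingleton.elim _ _
  subst e
  exact ⟨K, hF, ⟨⟩, h2, h3, h4⟩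

lemma final_num (n h W Q : ℕ) (hn : 1 ≤ n) (hh : 2 ≤ h) (hW : W ≤ n.factorial * (2*n^2+3))
    (hQ : (Q:ℝ) ≤ 2^41 * (n^7 * n.factorial * Real.logb 2 h)) :
    (n:ℝ) * W * ((Q:ℝ)^(n-1) + 1) ≤ (((2^41 : ℕ):ℝ) * n^7 * n.factorial * Real.logb 2 h)^n := by
  have hn' : (1:ℝ) ≤ n := by exact_mod_cast hn
  have hh' : (2:ℝ) ≤ h := by exact_mod_cast hh
  have hlog : 1 ≤ Real.logb 2 h := by
    rw [Real.le_logb_iff_rpow_le (by norm_num) (by linarith)]; simpa using hh'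
  have hf : (1:ℝ) ≤ n.factorial := by exact_mod_cast Nat.factorial_pos n
  have hW' : (W:ℝ) ≤ n.factorial * (2*n^2+3) := by exact_mod_cast hW
  set X : ℝ := n^7 * n.factorial * Real.logb 2 h with hX
  have hX1 : 1 ≤ X := by
    have : (1:ℝ) ≤ n^7 := one_le_pow₀ hn'
    have := one_le_mul_of_one_le_of_one_le (one_le_mul_of_one_le_of_one_le this hf) hlog
    exact this
  have e : ((2^41 : ℕ):ℝ) * n^7 * n.factorial * Real.logb 2 h = 2^41 * X := by
    rw [hX]; push_cast; ring
  rw [e]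
  have hpow : (2^41*X)^n = (2^41*X) * (2^41*X)^(n-1) := by
    rw [← pow_succ']; congr 1; omega
  rw [hpow]
  have h1 : (n:ℝ) * W ≤ 5 * X := by
    calc (n:ℝ) * W ≤ n * (n.factorial * (2*n^2+3)) := by gcongr
      _ ≤ n * (n.factorial * (5 * n^2)) := by gcongr; nlinarith
      _ = 5 * (n^3 * n.factorial * 1) := by ring
      _ ≤ 5 * (n^7 * n.factorial * Real.logb 2 h) := by
        gcongr
        norm_num
  have h2 : (1:ℝ) ≤ (2^41*X)^(n-1) := one_le_pow₀ (by linarith)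
  have h3 : (Q:ℝ)^(n-1) ≤ (2^41*X)^(n-1) := pow_le_pow_left₀ (by positivity) hQ _
  calc (n:ℝ) * W * ((Q:ℝ)^(n-1) + 1) ≤ (5 * X) * ((2^41*X)^(n-1) + (2^41*X)^(n-1)) := by gcongr
    _ = (10 * X) * (2^41*X)^(n-1) := by ring
    _ ≤ (2^41*X) * (2^41*X)^(n-1) := by gcongr; norm_num

lemma gen_K {K : Type*} [Field K] [NumberField K] [IsGalois ℚ K] (n h : ℕ) (hn : 1 ≤ n) (hh : 2 ≤ h)
    (hK : Module.finrank ℚ K ≤ n.factorial) (μ : Fin n → K) (hμ0 : ∀ i, μ i ≠ 0)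
    (hμ : ∀ i, logHeight₁ (μ i) ≤ Module.finrank ℚ K * (6 * n^2 * log h)) (w : Fin n → ℤ)
    (hw : ∏ i, μ i ^ w i = 1) :
    w ∈ AddSubgroup.closure {v : Fin n → ℤ | ∏ i, μ i ^ v i = 1 ∧ ∀ i, |(v i : ℝ)| ≤
      (((2^41 : ℕ):ℝ) * n^7 * n.factorial * Real.logb 2 h)^n} := by
  have hn' : (1:ℝ) ≤ n := by exact_mod_cast hn
  have hh' : (2:ℝ) ≤ h := by exact_mod_cast hh
  have hlog : 1 ≤ Real.logb 2 h := by
    rw [Real.le_logb_iff_rpow_le (by norm_num) (by linarith)]; simpa using hh'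
  have hf : (1:ℝ) ≤ n.factorial := by exact_mod_cast Nat.factorial_pos n
  have hl0 : 0 < log h := Real.log_pos (by linarith)
  have hll : log h ≤ Real.logb 2 h := by
    rw [Real.logb, le_div_iff₀ (Real.log_pos (by norm_num))]
    have := Real.log_two_lt_d9
    nlinarith
  set X : ℝ := n^7 * n.factorial * Real.logb 2 h with hX
  have hX1 : 1 ≤ X := 
    one_le_mul_of_one_le_of_one_le (one_le_mul_of_one_le_of_one_le (one_le_pow₀ hn') hf) hlog
  set ev : (Fin n → ℤ) → K := fun k => ∏ i, μ i ^ k i with hev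
  have ev_add : ∀ x y, ev (x+y) = ev x * ev y := by
    intro x y
    simp only [hev, Pi.add_apply]
    rw [← Finset.prod_mul_distrib]
    exact Finset.prod_congr rfl fun i _ => zpow_add₀ (hμ0 i) _ _
  have ev_smul : ∀ (k:ℤ) x, ev (k • x) = ev x ^ k := by
    intro k x
    simp only [hev, Pi.smul_apply, smul_eq_mul]
    rw [← Finset.prod_zpow]
    exact Finset.prod_congr rfl fun i _ => by rw [mul_comm, zpow_mul]
  have ev_ne : ∀ x, ev x ≠ 0 := fun x => Finset.prod_ne_zero_iff.2 fun i _ => zpow_ne_zero _ (hμ0 i)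
  have ev_single : ∀ i, ev (Pi.single i 1) = μ i := by
    intro i
    simp only [hev]
    rw [Finset.prod_eq_single i]
    · simp
    · intro j _ hj; simp [Pi.single_eq_of_ne hj]
    · simp
  let L : AddSubgroup (Fin n → ℤ) :=
    { carrier := {k | ev k = 1}
      zero_mem' := by simp [hev]
      add_mem' := by
        intro a b ha hb
        simp only [Set.mem_ofPred_eq] at ha hb ⊢
        rw [ev_add, ha, hb, one_mul]
      neg_mem' := by
        intro a ha
        simp only [Set.mem_ofPred_eq] at ha ⊢
        have := ev_smul (-1) a
        rw [neg_one_smul, ha] at this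
        rw [this, one_zpow] }
  set W := NumberField.Units.torsionOrder K with hWd
  have hW0 : W ≠ 0 := NumberField.Units.torsionOrder_ne_zero K
  have hWb := (omega_aux W n hW0 ((totient_torsion K).trans hK)).2
  have hroot : ∀ x, logHeight₁ (ev x) < 1 / (2^37 * (n:ℝ)^4) → ev x ^ W = 1 := by
    intro x hx
    obtain ⟨m, hm, hm1⟩ := eta_K n hn hK (ev x) (ev_ne x) hx
    exact pow_torsion K (ev x) m hm hm1
  have hη0 : 0 < 1 / (2^37 * (n:ℝ)^4) := by positivity
  have main := genlem (fun k => logHeight₁ (ev k)) (fun x y => by rw [ev_add]; exact logHeight₁_mul_le _ _)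
    (fun k x => by
      simp only [ev_smul]
      rw [logHeight₁_zpow]
      simp)
    (1 / (2^37 * (n:ℝ)^4)) (6 * n^3 * n.factorial * log h)
    (fun x hx => by
      have h1 := congrArg logHeight₁ (hroot x hx)
      rw [logHeight₁_pow, logHeight₁_one] at h1
      rcases mul_eq_zero.1 h1 with h2 | h2
      · exact absurd (by exact_mod_cast h2) hW0
      · exact h2)
    (by
      simp only [ev_single]
      calc ∑ i, logHeight₁ (μ i) ≤ ∑ i : Fin n, (n.factorial:ℝ) * (6 * n^2 * log h) := by
            refine Finset.sum_le_sum fun i _ => (hμ i).trans ?_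
            have : (Module.finrank ℚ K : ℝ) ≤ n.factorial := by exact_mod_cast hK
            gcongr
        _ = _ := by simp; ring)
    ⌈2^40 * X⌉₊ (Nat.one_le_iff_ne_zero.2 (Nat.ceil_pos.2 (by positivity)).ne')
    (by
      have h1 : 2^40 * X ≤ (⌈2^40 * X⌉₊ : ℝ) := Nat.le_ceil _
      calc 6 * (n:ℝ)^3 * n.factorial * log h < 8 * (n:ℝ)^3 * n.factorial * Real.logb 2 h := by
            have hp : (0:ℝ) < (n:ℝ)^3 * n.factorial := by positivity
            have h5 := mul_le_mul_of_nonneg_left hll hp.le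
            have h6 := mul_pos hp hl0
            linarith
        _ = (1 / (2^37 * (n:ℝ)^4)) * (2^40 * X) := by
            rw [hX]; field_simp; ring
        _ ≤ _ := by gcongr)
    L (fun x hx => by
      have : ev x = 1 := hx
      simp only [this, logHeight₁_one])
    W (Nat.one_le_iff_ne_zero.2 hW0)
    (fun x hx => by
      change ev _ = 1
      rw [ev_smul, zpow_natCast]
      apply hroot
      rw [hx]; exact hη0) w hw
  refine AddSubgroup.closure_mono ?_ main
  rintro v ⟨hv1, hv2⟩
  refine ⟨hv1, fun i => ?_⟩
  refine le_trans ?_ (final_num n h W ⌈2^40 * X⌉₊ hn hh hWb ?_)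
  · exact_mod_cast (Int.cast_le (R := ℝ)).2 (hv2 i)
  · have := (Nat.ceil_lt_add_one (show 0 ≤ 2^40 * X by positivity)).le
    rw [← hX]
    linarith
end MatE
/-- **Multiplicative relations between eigenvalues** (corollary of Masser's theorem):
there is an absolute constant `c` such that for all `n ≥ 1` and all `g ∈ GL_n(ℚ)` with
entries of height at most `h ≥ 2` and eigenvalues `λ₁,…,λ_n ∈ ℚ̄`, the group
`L = {k ∈ ℤⁿ : λ₁^{k₁}⋯λ_n^{k_n} = 1}` is generated, as an additive subgroup of `ℤⁿ`, by
vectors whose entries have absolute value at most `(c·n⁷·n!·log₂ h)^n`. -/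
theorem stmt14 :
    ∃ c : ℕ, ∀ n : ℕ, 1 ≤ n → ∀ h : ℕ, 2 ≤ h → ∀ g : GL (Fin n) ℚ,
      (∀ i j, ratHeight ((g : Matrix (Fin n) (Fin n) ℚ) i j) ≤ h) →
      ∀ lam : Fin n → Qbar,
      (Matrix.charpoly (g : Matrix (Fin n) (Fin n) ℚ)).map (algebraMap ℚ Qbar) =
        ∏ i : Fin n, (Polynomial.X - Polynomial.C (lam i)) →
      ∃ T : Set (Fin n → ℤ),
        (∀ v ∈ T, ∀ i, |(v i : ℝ)| ≤
          ((c : ℝ) * n ^ 7 * n.factorial * Real.logb 2 h) ^ n) ∧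
        (∀ v ∈ T, ∏ i, lam i ^ v i = 1) ∧
        (∀ w : Fin n → ℤ, ∏ i, lam i ^ w i = 1 → w ∈ AddSubgroup.closure T) := by
  classical
  refine ⟨2^41, fun n hn h hh g hg lam hlam => ?_⟩
  set p := Matrix.charpoly (g : Matrix (Fin n) (Fin n) ℚ) with hp
  have hpm : p.Monic := Matrix.charpoly_monic _
  have hpd : p.natDegree = n := by
    rw [hp, Matrix.charpoly_natDegree_eq_dim]; simp
  obtain ⟨K, hF, hNF, hGal, hfin, hsplit⟩ := split_exQ p n hpd
  let ι : K →ₐ[ℚ] Qbar := IsAlgClosed.lift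
  have hι : Function.Injective ι := ι.toRingHom.injective
  have hex : ∀ i, ∃ m : K, ι m = lam i := by
    intro i
    have h1 : lam i ∈ (ι : K →+* Qbar).range := by
      apply hsplit.mem_range_of_isRoot (hpm.map _).ne_zero
      have hc : (ι : K →+* Qbar).comp (algebraMap ℚ K) = algebraMap ℚ Qbar := Subsingleton.elim _ _
      rw [Polynomial.map_map, hc, hlam, Polynomial.IsRoot, Polynomial.eval_prod]
      exact Finset.prod_eq_zero (Finset.mem_univ i) (by simp)
    exact h1
  choose μ hμ using hex
  have hroot : ∀ i, (p.map (algebraMap ℚ K)).eval (μ i) = 0 := by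
    intro i
    apply hι
    have h2 : (p.map (algebraMap ℚ Qbar)).eval (lam i) = 0 := by
      rw [hlam, Polynomial.eval_prod]
      exact Finset.prod_eq_zero (Finset.mem_univ i) (by simp)
    rw [Polynomial.eval_map_algebraMap] at h2 ⊢
    rw [map_zero, ← Polynomial.aeval_algHom_apply, hμ, h2]
  have hμ0 : ∀ i, μ i ≠ 0 := by
    intro i h0
    have h1 := hroot i
    rw [h0, hp, ← Matrix.charpoly_map, Matrix.eval_charpoly, map_zero, zero_sub, Matrix.det_neg,
      ← RingHom.mapMatrix_apply, ← RingHom.map_det] at h1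
    have h3 : ((g : Matrix (Fin n) (Fin n) ℚ)).det ≠ 0 := by
      have := (Matrix.isUnit_iff_isUnit_det _).1 g.isUnit
      exact this.ne_zero
    have h4 : (algebraMap ℚ K) ((g : Matrix (Fin n) (Fin n) ℚ)).det ≠ 0 := by
      simpa using h3
    exact (mul_ne_zero (pow_ne_zero _ (by simp)) h4) h1
  have hht : ∀ i, Height.logHeight₁ (μ i) ≤
      Module.finrank ℚ K * (6 * (n:ℝ)^2 * Real.log h) := fun i =>
    eig_height hn hh (g : Matrix (Fin n) (Fin n) ℚ) hg (μ i) (hroot i)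
  have hev : ∀ v : Fin n → ℤ, ∏ i, lam i ^ v i = ι (∏ i, μ i ^ v i) := by
    intro v
    rw [map_prod]
    exact Finset.prod_congr rfl fun i _ => by rw [map_zpow₀, hμ]
  have hiff : ∀ v : Fin n → ℤ, ∏ i, lam i ^ v i = 1 ↔ ∏ i, μ i ^ v i = 1 := by
    intro v
    rw [hev, ← map_one ι]
    exact hι.eq_iff
  refine ⟨_, fun v hv => hv.2, fun v hv => (hiff v).2 hv.1, fun w hw =>
    gen_K n h hn hh hfin μ hμ0 hht w ((hiff w).1 hw)⟩
end
end
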